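/- arXiv:1209.4985 — 3 statements merged into one kernel-verified Lean document; each statement's English description precedes it below -/
import Mathlib

section
/- For every integer k ≥ 2, every nonempty finite sequence (τ_n)_{n=0}^{m−1} of positive integers and every real 0 < δ ≤ 1 there exists an integer N with the following property: if (p_n)_{n=0}^{m−1} is a finite sequence of variable words over k such that the length of p_n is τ_n for every 0 ≤ n ≤ m−1, L is a finite subset of ℕ of cardinality at least N, and A ⊆ [k]^{<ℕ} satisfies dens_{[k]^ℓ}(A) ≥ δ for every ℓ ∈ L, then there exist a word c over k and a finite sequence (w_n)_{n=0}^{m−1} of variable words over k of pattern (p_n)_{n=0}^{m−1} such that the set {c} ∪ {c⌢w_0(a_0)⌢···⌢w_n(a_n) : 0 ≤ n ≤ m−1 and a_0,…,a_n ∈ [k]} is contained in A. -/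
/-- A word over `k`: a finite sequence with values in `[k]`. -/
abbrev Word (k : ℕ) := List (Fin k)

/-- A "possibly variable" letter sequence: `none` plays the role of the variable `v`. -/
abbrev VWord (k : ℕ) := List (Option (Fin k))

/-- Substitution of the letter `a` for every occurrence of the variable. -/
def subst {k : ℕ} (w : VWord k) (a : Fin k) : Word k := w.map (fun o => o.getD a)

/-- `w` is a variable word: the variable `v` occurs in it. -/
def IsVar {k : ℕ} (w : VWord k) : Prop := none ∈ w

/-- The word `c ⌢ w₀(a₀) ⌢ ⋯ ⌢ wₙ(aₙ)`. -/
def csWord {k : ℕ} (c : Word k) (ws : ℕ → VWord k) (n : ℕ) (a : ℕ → Fin k) : Word k :=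
  c ++ ((List.range (n + 1)).map fun i => subst (ws i) (a i)).flatten

/-- The set `{c} ∪ {c ⌢ w₀(a₀) ⌢ ⋯ ⌢ wₙ(aₙ) : 0 ≤ n ≤ m-1, a₀,…,aₙ ∈ [k]}`. -/
def csSet {k : ℕ} (c : Word k) (m : ℕ) (ws : ℕ → VWord k) : Set (Word k) :=
  insert c {x | ∃ n < m, ∃ a : ℕ → Fin k, x = csWord c ws n a}

/-- The density `dens_{[k]^n}(A) = |A ∩ [k]^n| / k^n`. -/
noncomputable def dens (k n : ℕ) (A : Set (Word k)) : ℝ :=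
  (Set.ncard {x ∈ A | x.length = n} : ℝ) / (k : ℝ) ^ n

/-!
Cutting words into blocks of a length `T` that no pattern exceeds reduces the theorem to the density
Carlson–Simpson theorem for trees over the alphabet `[k]^T`: the variable then only ranges over the
blocks that complete a pattern.

The latter theorem is proved for random sets of words, by induction on the alphabet. Trees of height
one suffice, because whole lines can be made the nodes of a new tree. Let a random set of words over
`α ∪ {none}` have density just below the infimum `d` of the densities that force a subtree of height
one. By the theorem for `α` and a colouring argument with idempotent ultrafilters, we may assume
that all lines over `α` are contained in the set with probability bounded below. If there is no
subtree, the node `none⌢t` is avoided whenever the line `j⌢t(j)`, `j ∈ α`, and its root are present.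
Hence `none⌢t` is denser than `d` on some other event fixing the letters `j` for which `j⌢t(j)` is
present. This event is an intersection of events `G j t`, each insensitive to exchanging `none`
and `j` in `t`, so by the theorem for `α` they all occur on a subtree, where the density then
exceeds `d`.
-/

namespace CarlsonSimpson

open scoped NNReal

section Words

variable {α β : Type*}

/-- The word `u(a)` obtained from a word `u` over `α ∪ {v}` by substituting the letter `a` for the
variable `v`, which is encoded by `none`. -/
def fillVar (u : List (Option α)) (a : α) : List α := u.map (·.getD a)

@[simp] theorem fillVar_nil (a : α) : fillVar [] a = [] := rfl

@[simp] theorem fillVar_cons_none (u : List (Option α)) (a : α) :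
    fillVar (none :: u) a = a :: fillVar u a := rfl

@[simp] theorem fillVar_cons_some (u : List (Option α)) (a b : α) :
    fillVar (some b :: u) a = b :: fillVar u a := rfl

@[simp] theorem fillVar_append (u w : List (Option α)) (a : α) :
    fillVar (u ++ w) a = fillVar u a ++ fillVar w a := List.map_append

@[simp] theorem length_fillVar (u : List (Option α)) (a : α) :
    (fillVar u a).length = u.length := List.length_map _

@[simp] theorem fillVar_map_some (x : List α) (a : α) : fillVar (x.map some) a = x := by
  simp [fillVar, Function.comp_def]

theorem map_fillVar (f : α → β) (u : List (Option α)) (a : α) :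
    (fillVar u a).map f = fillVar (u.map (Option.map f)) (f a) := by
  simp only [fillVar, List.map_map]
  exact List.map_congr_left fun o _ => by cases o <;> rfl

theorem eq_map_some_append_none_cons {w : List (Option α)} (h : none ∈ w) :
    ∃ (p : List α) (r : List (Option α)), w = p.map some ++ none :: r := by
  induction w with
  | nil => simp at h
  | cons o w ih =>
    cases o with
    | none => exact ⟨[], w, rfl⟩
    | some b =>
      obtain ⟨p, r, rfl⟩ := ih (by simpa using h)
      exact ⟨b :: p, r, rfl⟩

theorem eq_map_some_of_none_notMem {w : List (Option α)} (h : none ∉ w) :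
    ∃ p : List α, w = p.map some :=
  ⟨w.reduceOption, by
    induction w with
    | nil => rfl
    | cons o w ih =>
      cases o with
      | none => simp at h
      | some b => simpa using ih (by simpa using h)⟩

end Words

section Templates

variable {α β : Type*}

/-- The word `a₀⌢u₀(a₀)⌢⋯⌢aᵢ⌢uᵢ(aᵢ)` for a list `u₀, u₁, …` of levels and a word `a₀⋯aᵢ`. The
variable words `v⌢uᵢ` are stored without their leading variable. Letters in excess of the levels
are appended unchanged. -/
def evalLevels : List (List (Option α)) → List α → List α
  | [], y => y
  | _ :: _, [] => []
  | u :: us, a :: y => a :: (fillVar u a ++ evalLevels us y)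

@[simp] theorem evalLevels_nil_left (y : List α) : evalLevels [] y = y := by simp [evalLevels]

@[simp] theorem evalLevels_nil_right (us : List (List (Option α))) : evalLevels us [] = [] := by
  cases us <;> rfl

@[simp] theorem evalLevels_cons_cons (u : List (Option α)) (us : List (List (Option α))) (a : α)
    (y : List α) : evalLevels (u :: us) (a :: y) = a :: (fillVar u a ++ evalLevels us y) := rfl

theorem length_evalLevels_congr (us : List (List (Option α))) {x y : List α}
    (h : x.length = y.length) : (evalLevels us x).length = (evalLevels us y).length := by
  induction us generalizing x y with
  | nil => simpa using h
  | cons u us ih =>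
    match x, y, h with
    | [], [], _ => rfl
    | a :: x, b :: y, h => simp [ih (Nat.succ.inj h)]

theorem length_evalLevels_le (us : List (List (Option α))) {y : List α}
    (h : y.length ≤ us.length) :
    (evalLevels us y).length ≤ (us.map fun u => u.length + 1).sum := by
  induction us generalizing y with
  | nil => simpa using h
  | cons u us ih =>
    cases y with
    | nil => simp
    | cons a y =>
      have := ih (y := y) (by simpa using h)
      simp only [evalLevels_cons_cons, List.length_cons, List.length_append, length_fillVar,
        List.map_cons, List.sum_cons]
      omega

theorem evalLevels_append_singleton (us : List (List (Option α))) {x : List α} (a : α)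
    (h : x.length = us.length) : evalLevels us (x ++ [a]) = evalLevels us x ++ [a] := by
  induction us generalizing x with
  | nil => simp
  | cons u us ih =>
    match x, h with
    | b :: x, h => simp [ih (Nat.succ.inj h)]

/-- A Carlson–Simpson sequence: a word together with a finite sequence of left variable words,
encoded as in `evalLevels`. -/
structure Template (α : Type*) where
  /-- The constant word in front. -/
  root : List α
  /-- The left variable words without their leading variable. -/
  levels : List (List (Option α))

namespace Template

/-- The node `c⌢a₀⌢u₀(a₀)⌢⋯⌢aᵢ⌢uᵢ(aᵢ)` of the Carlson–Simpson tree of a template. -/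
def eval (T : Template α) (y : List α) : List α := T.root ++ evalLevels T.levels y

/-- The number of variable words of a template. -/
def height (T : Template α) : ℕ := T.levels.length

/-- The length of the longest node of the Carlson–Simpson tree of a template. -/
def size (T : Template α) : ℕ := T.root.length + (T.levels.map fun u => u.length + 1).sum

/-- The image of a template under a map of alphabets. -/
def map (f : α → β) (T : Template α) : Template β :=
  ⟨T.root.map f, T.levels.map fun u => u.map (Option.map f)⟩

theorem length_eval_le_size (T : Template α) {y : List α} (h : y.length ≤ T.height) :
    (T.eval y).length ≤ T.size := by
  simpa [eval, size] using length_evalLevels_le T.levels h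

theorem eval_append_singleton (T : Template α) {x : List α} (a : α) (h : x.length = T.height) :
    T.eval (x ++ [a]) = T.eval x ++ [a] := by
  simp [eval, evalLevels_append_singleton T.levels a h]

@[simp] theorem height_map (f : α → β) (T : Template α) : (T.map f).height = T.height := by
  simp [height, map]

@[simp] theorem size_map (f : α → β) (T : Template α) : (T.map f).size = T.size := by
  simp [size, map, Function.comp_def]

theorem eval_map (f : α → β) (T : Template α) (y : List α) :
    (T.map f).eval (y.map f) = (T.eval y).map f := by
  suffices ∀ us : List (List (Option α)),
      evalLevels (us.map fun u => u.map (Option.map f)) (y.map f) = (evalLevels us y).map f by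
    simp [eval, map, this]
  intro us
  induction us generalizing y with
  | nil => simp
  | cons u us ih => cases y <;> simp [ih, map_fillVar]

theorem map_eval_map {f : α → β} {g : β → α} (hgf : Function.LeftInverse g f) (T : Template α)
    (z : List β) : ((T.map f).eval z).map g = T.eval (z.map g) := by
  have hcomp : Option.map g ∘ Option.map f = (id : Option α → Option α) := by
    rw [Option.map_comp_map, hgf.comp_eq_id, Option.map_id]
  suffices ∀ us : List (List (Option α)),
      (evalLevels (us.map fun u => u.map (Option.map f)) z).map g = evalLevels us (z.map g) by
    simp [eval, map, this, hgf.comp_eq_id]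
  intro us
  induction us generalizing z with
  | nil => simp
  | cons u us ih => cases z <;> simp [ih, map_fillVar, hcomp]

end Template

end Templates

section Maps

variable {α β : Type*}

/-- `φ` embeds the tree of words over `α` level by level and sends every line `x⌢v⌢u` to a line
`φ x⌢v⌢u'`, where `u'` depends only on `u` and the length of `x`. On words of bounded length such
maps are exactly the evaluations of templates, but this description makes composition
transparent. -/
structure IsCSMap (φ : List α → List α) : Prop where
  length_congr : ∀ x y, x.length = y.length → (φ x).length = (φ y).length
  line : ∀ (n : ℕ) (u : List (Option α)), ∃ u' : List (Option α), ∀ x, x.length = n →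
    ∀ a, φ (x ++ a :: fillVar u a) = φ x ++ a :: fillVar u' a

namespace IsCSMap

protected theorem id : IsCSMap (fun x : List α => x) :=
  ⟨fun _ _ h => h, fun _ u => ⟨u, fun _ _ _ => rfl⟩⟩

theorem comp {φ ψ : List α → List α} (hφ : IsCSMap φ) (hψ : IsCSMap ψ) :
    IsCSMap fun x => φ (ψ x) := by
  refine ⟨fun x y e => hφ.length_congr _ _ (hψ.length_congr _ _ e), fun n u => ?_⟩
  obtain ⟨u', hu'⟩ := hψ.line n u
  by_cases hn : ∃ x₀ : List α, x₀.length = n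
  · obtain ⟨x₀, rfl⟩ := hn
    obtain ⟨u'', hu''⟩ := hφ.line (ψ x₀).length u'
    refine ⟨u'', fun x hx a => ?_⟩
    simp only [hu' x hx a, hu'' (ψ x) (hψ.length_congr _ _ hx) a]
  · exact ⟨[], fun x hx => (hn ⟨x, hx⟩).elim⟩

theorem const_append (c : List α) : IsCSMap (c ++ ·) :=
  ⟨fun x y e => by simp [e], fun n u => ⟨u, fun x _ a => by simp⟩⟩

theorem exists_fillVar {φ : List α → List α} (h : IsCSMap φ) (w : List (Option α)) :
    ∃ w' : List (Option α), ∀ a, φ (fillVar w a) = fillVar w' a := by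
  by_cases hw : none ∈ w
  · obtain ⟨p, r, rfl⟩ := eq_map_some_append_none_cons hw
    obtain ⟨u', hu⟩ := h.line p.length r
    exact ⟨(φ p).map some ++ none :: u', fun a => by simpa using hu p rfl a⟩
  · obtain ⟨p, rfl⟩ := eq_map_some_of_none_notMem hw
    exact ⟨(φ p).map some, fun a => by simp⟩

theorem evalLevels (us : List (List (Option α))) : IsCSMap (evalLevels us) := by
  induction us with
  | nil =>
    rw [show CarlsonSimpson.evalLevels [] = fun y : List α => y from funext evalLevels_nil_left]
    exact IsCSMap.id
  | cons u us ih =>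
    refine ⟨fun _ _ => length_evalLevels_congr _, fun n w => ?_⟩
    cases n with
    | zero =>
      obtain ⟨w', hw'⟩ := ih.exists_fillVar w
      refine ⟨u ++ w', fun x hx a => ?_⟩
      obtain rfl := List.length_eq_zero_iff.mp hx
      simp [hw']
    | succ n =>
      obtain ⟨w', hw'⟩ := ih.line n w
      refine ⟨w', fun x hx a => ?_⟩
      match x, hx with
      | b :: x, hx =>
        simp only [List.cons_append, evalLevels_cons_cons, hw' x (Nat.succ.inj hx) a,
          List.append_assoc]

theorem eval (T : Template α) : IsCSMap T.eval :=
  (const_append T.root).comp (evalLevels T.levels)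

theorem map_eq_map {φ : List α → List α} (h : IsCSMap φ) (π : α → β) {y y' : List α}
    (e : y.map π = y'.map π) : (φ y).map π = (φ y').map π := by
  suffices ∀ x : List α, (φ (x ++ y)).map π = (φ (x ++ y')).map π by simpa using this []
  induction y generalizing y' with
  | nil =>
    obtain rfl : y' = [] := by simpa using e.symm
    exact fun x => rfl
  | cons a r ih =>
    obtain ⟨a', r', rfl, ha, hr⟩ := List.map_eq_cons_iff.mp e.symm
    intro x
    obtain ⟨u', hu⟩ := h.line x.length (r.map some)
    -- Change the first letter along the line `x⌢v⌢r`, then the remaining ones by induction.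
    calc (φ (x ++ a :: r)).map π = (φ (x ++ a' :: r)).map π := by
          have (b : α) : φ (x ++ b :: r) = φ x ++ b :: fillVar u' b := by simpa using hu x rfl b
          simp only [this, List.map_append, List.map_cons, map_fillVar, ha]
      _ = (φ (x ++ a' :: r')).map π := by simpa using ih hr.symm (x ++ [a'])

theorem exists_template {φ : List α → List α} (h : IsCSMap φ) (M : ℕ) :
    ∃ T : Template α, T.height = M ∧ ∀ y : List α, y.length ≤ M → φ y = T.eval y := by
  choose u hu using fun n => h.line n []
  simp only [fillVar_nil] at hu
  have key (M : ℕ) : ∀ (n : ℕ) (x y : List α), x.length = n → y.length ≤ M →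
      φ (x ++ y) = φ x ++ CarlsonSimpson.evalLevels ((List.range' n M).map u) y := by
    induction M with
    | zero =>
      intro n x y _ hy
      obtain rfl := List.length_eq_zero_iff.mp (Nat.le_zero.mp hy)
      simp
    | succ M ih =>
      intro n x y hx hy
      cases y with
      | nil => simp
      | cons a y =>
        have := ih (n + 1) (x ++ [a]) y (by simp [hx]) (by simpa using hy)
        simp_all [List.range'_succ]
  exact ⟨⟨φ [], (List.range' 0 M).map u⟩, by simp [Template.height],
    fun y hy => by simpa [Template.eval] using key M 0 [] y rfl hy⟩

theorem exists_root_line {φ : List α → List α} (h : IsCSMap φ) {N : ℕ}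
    (hN : ∀ y, y.length ≤ 1 → (φ y).length ≤ N) :
    ∃ u : List (Option α), (∀ a, φ [a] = φ [] ++ a :: fillVar u a) ∧
      (φ []).length + 1 + u.length ≤ N + 1 := by
  obtain ⟨u, hu⟩ := h.line 0 []
  have hu' (a : α) : φ [a] = φ [] ++ a :: fillVar u a := by simpa using hu [] rfl a
  rcases isEmpty_or_nonempty α with hα | ⟨⟨a⟩⟩
  · exact ⟨[], fun a => isEmptyElim a, by simpa using hN [] (by simp)⟩
  · have := hN [a] (by simp)
    simp only [hu', List.length_append, List.length_cons, length_fillVar] at this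
    exact ⟨u, hu', by omega⟩

end IsCSMap

end Maps

section Weights

variable {Ω S : Type*} [Fintype Ω] {μ : Ω → ℝ≥0}

/-- Integration against the finite measure on the finite set `Ω` whose atoms have masses `μ`. -/
noncomputable def weightedSum (μ : Ω → ℝ≥0) : (Ω → ℝ) →ₗ[ℝ] ℝ :=
  ∑ ω, (μ ω : ℝ) • LinearMap.proj ω

/-- The measure of the event `X`; measures are not normalised, so `mass μ .univ` is arbitrary. -/
noncomputable def mass (μ : Ω → ℝ≥0) (X : Set Ω) : ℝ := weightedSum μ (X.indicator 1)

theorem weightedSum_apply (μ : Ω → ℝ≥0) (f : Ω → ℝ) : weightedSum μ f = ∑ ω, μ ω * f ω := by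
  simp [weightedSum]

theorem weightedSum_mono {f g : Ω → ℝ} (h : ∀ ω, 0 < μ ω → f ω ≤ g ω) :
    weightedSum μ f ≤ weightedSum μ g := by
  simp only [weightedSum_apply]
  refine Finset.sum_le_sum fun ω _ => ?_
  rcases eq_or_ne (μ ω) 0 with h0 | h0
  · simp [h0]
  · exact mul_le_mul_of_nonneg_left (h ω (pos_iff_ne_zero.mpr h0)) (μ ω).coe_nonneg

theorem weightedSum_const (μ : Ω → ℝ≥0) (c : ℝ) :
    weightedSum μ (fun _ => c) = c * mass μ .univ := by
  simp [mass, weightedSum_apply, Finset.mul_sum, mul_comm]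

theorem weightedSum_le_of_le {f : Ω → ℝ} {c : ℝ} (h : ∀ ω, f ω ≤ c) :
    weightedSum μ f ≤ c * mass μ .univ :=
  (weightedSum_mono fun ω _ => h ω).trans_eq (weightedSum_const μ c)

theorem weightedSum_indicator (X : Set Ω) (f : Ω → ℝ) :
    weightedSum (X.indicator μ) f = weightedSum μ (X.indicator f) := by
  classical
  simp [weightedSum_apply, Set.indicator_apply, apply_ite NNReal.toReal]

theorem mass_indicator (X Y : Set Ω) : mass (X.indicator μ) Y = mass μ (X ∩ Y) := by
  rw [mass, weightedSum_indicator, Set.indicator_indicator, mass]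

theorem mass_nonneg (μ : Ω → ℝ≥0) (X : Set Ω) : 0 ≤ mass μ X := by
  rw [← map_zero (weightedSum μ)]
  exact weightedSum_mono fun ω _ => Set.indicator_nonneg (fun _ _ => zero_le_one) ω

theorem mass_empty (μ : Ω → ℝ≥0) : mass μ ∅ = 0 := by
  rw [mass, Set.indicator_empty]
  exact map_zero (weightedSum μ)

theorem mass_mono {X Y : Set Ω} (h : X ⊆ Y) : mass μ X ≤ mass μ Y :=
  weightedSum_mono fun ω _ => Set.indicator_le_indicator_of_subset h (fun _ => zero_le_one) ω

theorem mass_le_univ (μ : Ω → ℝ≥0) (X : Set Ω) : mass μ X ≤ mass μ .univ :=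
  mass_mono X.subset_univ

theorem mass_indicator_le (μ : Ω → ℝ≥0) (X Y : Set Ω) : mass (X.indicator μ) Y ≤ mass μ Y := by
  rw [mass_indicator]
  exact mass_mono Set.inter_subset_right

theorem mass_union_le (μ : Ω → ℝ≥0) (X Y : Set Ω) : mass μ (X ∪ Y) ≤ mass μ X + mass μ Y := by
  rw [mass, mass, mass, ← map_add]
  refine weightedSum_mono fun ω _ => ?_
  classical
  by_cases hX : ω ∈ X <;> by_cases hY : ω ∈ Y <;> simp [hX, hY]

theorem mass_iUnion_le {ι : Type*} [Fintype ι] (μ : Ω → ℝ≥0) (X : ι → Set Ω) :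
    mass μ (⋃ i, X i) ≤ ∑ i, mass μ (X i) := by
  simp only [mass, ← map_sum]
  refine weightedSum_mono fun ω _ => ?_
  rw [Finset.sum_apply]
  have hnonneg (i : ι) : 0 ≤ (X i).indicator (1 : Ω → ℝ) ω :=
    Set.indicator_nonneg (fun _ _ => zero_le_one) ω
  by_cases hω : ω ∈ ⋃ i, X i
  · obtain ⟨i, hi⟩ := Set.mem_iUnion.mp hω
    rw [Set.indicator_of_mem hω, ← Set.indicator_of_mem hi (1 : Ω → ℝ)]
    exact Finset.single_le_sum (f := fun i => (X i).indicator (1 : Ω → ℝ) ω)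
      (fun i _ => hnonneg i) (Finset.mem_univ i)
  · rw [Set.indicator_of_notMem hω]
    exact Finset.sum_nonneg fun i _ => hnonneg i

theorem mass_iUnion_le_card_mul {ι : Type*} [Fintype ι] {X : ι → Set Ω} {c : ℝ}
    (h : ∀ i, mass μ (X i) ≤ c) : mass μ (⋃ i, X i) ≤ Fintype.card ι * c :=
  (mass_iUnion_le μ X).trans <| by
    simpa using Finset.sum_le_sum fun i (_ : i ∈ Finset.univ) => h i

theorem mass_le_mass_indicator_compl_add (μ : Ω → ℝ≥0) (X Y : Set Ω) :
    mass μ Y ≤ mass (Xᶜ.indicator μ) Y + mass μ X := by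
  rw [mass_indicator]
  refine (mass_mono fun ω hω => ?_).trans (mass_union_le μ _ _)
  by_cases h : ω ∈ X <;> simp [h, hω]

theorem exists_mem_pos_of_mass_pos {X : Set Ω} (h : 0 < mass μ X) : ∃ ω ∈ X, 0 < μ ω := by
  by_contra! hX
  refine h.not_ge (le_of_eq ?_)
  rw [mass, weightedSum_apply]
  refine Finset.sum_eq_zero fun ω _ => ?_
  by_cases hω : ω ∈ X
  · simp [le_zero_iff.mp (hX ω hω)]
  · simp [hω]

theorem mass_comp_fst [Fintype S] (μ : Ω → ℝ≥0) :
    mass (μ ∘ (Prod.fst : Ω × S → Ω)) .univ = Fintype.card S * mass μ .univ := by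
  simp [mass, weightedSum_apply, Fintype.sum_prod_type, Finset.mul_sum]

theorem sq_weightedSum_mul_le (μ : Ω → ℝ≥0) (f g : Ω → ℝ) :
    weightedSum μ (f * g) ^ 2 ≤ weightedSum μ (f ^ 2) * weightedSum μ (g ^ 2) := by
  simp only [weightedSum_apply, Pi.mul_apply, Pi.pow_apply]
  exact Finset.sum_sq_le_sum_mul_sum_of_sq_le_mul _
    (fun ω _ => by positivity) (fun ω _ => by positivity) fun ω _ => le_of_eq (by ring)

/-- A form of Bessel's inequality. -/
theorem card_mul_sq_le_of_orthogonal {ι : Type*} {C : Finset ι} {v : ι → Ω → ℝ} {H : Ω → ℝ}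
    {K ε : ℝ} (hε : 0 < ε) (hH : ∀ ω, |H ω| ≤ 1) (hv : ∀ p ∈ C, ∀ ω, |v p ω| ≤ K)
    (horth : ∀ p ∈ C, ∀ q ∈ C, p ≠ q → weightedSum μ (v p * v q) = 0)
    (hcorr : ∀ p ∈ C, ε * mass μ .univ < weightedSum μ (H * v p)) :
    C.card * ε ^ 2 ≤ K ^ 2 := by
  rcases C.eq_empty_or_nonempty with rfl | ⟨p₀, hp₀⟩
  · simp [sq_nonneg]
  set T := mass μ .univ with hT
  have hT0 : 0 < T := by
    have hle : weightedSum μ (H * v p₀) ≤ K * T := weightedSum_le_of_le fun ω =>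
      calc H ω * v p₀ ω ≤ |H ω| * |v p₀ ω| := (le_abs_self _).trans_eq (abs_mul _ _)
        _ ≤ 1 * K := mul_le_mul (hH ω) (hv p₀ hp₀ ω) (abs_nonneg _) zero_le_one
        _ = K := one_mul K
    refine (mass_nonneg μ _).lt_of_ne fun h0 => ?_
    have := (hcorr p₀ hp₀).trans_le hle
    rw [← hT] at h0
    simp [← h0] at this
  set V := ∑ p ∈ C, v p
  have hlower : C.card * (ε * T) ≤ weightedSum μ (H * V) := by
    rw [Finset.mul_sum, map_sum, ← nsmul_eq_mul]
    exact Finset.card_nsmul_le_sum _ _ _ fun p hp => (hcorr p hp).le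
  have hHsq : weightedSum μ (H ^ 2) ≤ T :=
    (weightedSum_le_of_le (f := H ^ 2) (c := 1)
      fun ω => (sq_le_one_iff_abs_le_one _).mpr (hH ω)).trans_eq (one_mul T)
  have hVsq : weightedSum μ (V ^ 2) ≤ C.card * (K ^ 2 * T) := by
    rw [sq, Finset.sum_mul_sum, map_sum, ← nsmul_eq_mul]
    refine Finset.sum_le_card_nsmul _ _ _ fun p hp => ?_
    rw [map_sum, Finset.sum_eq_single_of_mem p hp fun q hq hqp => horth p hp q hq hqp.symm]
    exact weightedSum_le_of_le fun ω => by
      simpa only [Pi.mul_apply, ← sq] using sq_le_sq.mpr ((hv p hp ω).trans (le_abs_self K))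
  have hC : (0 : ℝ) < C.card := by exact_mod_cast Finset.card_pos.mpr ⟨p₀, hp₀⟩
  have hmain : (C.card * (ε * T)) ^ 2 ≤ T * (C.card * (K ^ 2 * T)) :=
    calc (C.card * (ε * T)) ^ 2 ≤ weightedSum μ (H * V) ^ 2 := by gcongr
      _ ≤ weightedSum μ (H ^ 2) * weightedSum μ (V ^ 2) := sq_weightedSum_mul_le μ H V
      _ ≤ T * (C.card * (K ^ 2 * T)) := by
        refine mul_le_mul hHsq hVsq ?_ hT0.le
        rw [weightedSum_apply]
        exact Finset.sum_nonneg fun ω _ => by simp only [Pi.pow_apply]; positivity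
  refine le_of_mul_le_mul_right ?_ (show 0 < C.card * T ^ 2 by positivity)
  linarith

end Weights

section OneCoordinate

variable {α β Ω : Type*} {n : ℕ}

/-- The product of the measure `μ` with the counting measure on the words of length `n`. -/
abbrev withWord (α : Type*) (n : ℕ) (μ : Ω → ℝ≥0) : Ω × (Fin n → α) → ℝ≥0 := μ ∘ Prod.fst

/-- Replaces the letter of `z.2` at position `p` by `a`. -/
def setCoord (p : Fin n) (a : α) (z : Ω × (Fin n → α)) : Ω × (Fin n → α) :=
  (z.1, Function.update z.2 p a)

/-- A test function for position `p`: it is bounded by `1` and reads the letters before `p`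
exactly, but all other letters only through `π`. -/
structure IsTest (π : α → β) (p : Fin n) (u : Ω × (Fin n → α) → ℝ) : Prop where
  abs_le_one : ∀ z, |u z| ≤ 1
  congr : ∀ ω s s', (∀ i < p, s i = s' i) → (∀ i, π (s i) = π (s' i)) → u (ω, s) = u (ω, s')

/-- The indicator of the event that the letter at position `p` is `a`. -/
noncomputable def letterInd (p : Fin n) (a : α) : Ω × (Fin n → α) → ℝ :=
  {z | z.2 p = a}.indicator 1

theorem IsTest.neg {π : α → β} {p : Fin n} {u : Ω × (Fin n → α) → ℝ} (hu : IsTest π p u) :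
    IsTest π p (-u) :=
  ⟨fun z => by simpa using hu.abs_le_one z, fun ω s s' h h' => by simp [hu.congr ω s s' h h']⟩

section

variable [Fintype α]

/-- The sum of `u` over all letters at position `p`. -/
def sumCoord (p : Fin n) (u : Ω × (Fin n → α) → ℝ) (z : Ω × (Fin n → α)) : ℝ :=
  ∑ b, u (setCoord p b z)

/-- The adjoint of the difference operator `H ↦ H ∘ setCoord p a - H ∘ setCoord p a'`. -/
noncomputable def adjointDiff (a a' : α) (p : Fin n) (u : Ω × (Fin n → α) → ℝ) :
    Ω × (Fin n → α) → ℝ :=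
  (letterInd p a - letterInd p a') * sumCoord p u

theorem IsTest.abs_sumCoord_le {π : α → β} {p : Fin n} {u : Ω × (Fin n → α) → ℝ}
    (hu : IsTest π p u) (z : Ω × (Fin n → α)) : |sumCoord p u z| ≤ Fintype.card α :=
  calc |sumCoord p u z| ≤ ∑ b : α, |u (setCoord p b z)| := Finset.abs_sum_le_sum_abs _ _
    _ ≤ ∑ _b : α, 1 := Finset.sum_le_sum fun b _ => hu.abs_le_one _
    _ = Fintype.card α := by simp

theorem IsTest.abs_adjointDiff_le {π : α → β} {p : Fin n} {u : Ω × (Fin n → α) → ℝ}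
    (hu : IsTest π p u) (a a' : α) (z : Ω × (Fin n → α)) :
    |adjointDiff a a' p u z| ≤ Fintype.card α := by
  have hdiff : |letterInd p a z - letterInd p a' z| ≤ 1 := by
    classical
    simp only [letterInd, Set.indicator_apply, Pi.one_apply]
    split_ifs <;> simp
  calc |adjointDiff a a' p u z|
      = |letterInd p a z - letterInd p a' z| * |sumCoord p u z| := abs_mul _ _
    _ ≤ 1 * Fintype.card α := mul_le_mul hdiff (hu.abs_sumCoord_le z) (abs_nonneg _) zero_le_one
    _ = Fintype.card α := one_mul _

variable [Fintype Ω]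

theorem weightedSum_comp_setCoord_mul (μ : Ω → ℝ≥0) (p : Fin n) (a : α)
    (G u : Ω × (Fin n → α) → ℝ) :
    weightedSum (withWord α n μ) (G ∘ setCoord p a * u) =
      weightedSum (withWord α n μ) (G * (letterInd p a * sumCoord p u)) := by
  classical
  -- The involution exchanging the letter at position `p` with an auxiliary letter.
  let swap : Equiv.Perm ((Ω × (Fin n → α)) × α) :=
    Function.Involutive.toPerm (fun q => (setCoord p q.2 q.1, q.1.2 p)) fun q => by
      simp [setCoord]
  have hleft : weightedSum (withWord α n μ) (G ∘ setCoord p a * u) =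
      ∑ q : (Ω × (Fin n → α)) × α,
        μ q.1.1 * (G (setCoord p q.2 q.1) * u q.1) * if q.2 = a then 1 else 0 := by
    rw [weightedSum_apply]
    exact ((Fintype.sum_prod_type _).trans (Finset.sum_congr rfl fun z _ => by simp)).symm
  have hright : weightedSum (withWord α n μ) (G * (letterInd p a * sumCoord p u)) =
      ∑ q : (Ω × (Fin n → α)) × α,
        μ q.1.1 * (G q.1 * u (setCoord p q.2 q.1)) * if q.1.2 p = a then 1 else 0 := by
    rw [weightedSum_apply]
    refine ((Fintype.sum_prod_type _).trans (Finset.sum_congr rfl fun z _ => ?_)).symm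
    by_cases hz : z.2 p = a <;>
      simp [hz, letterInd, sumCoord, Finset.mul_sum]
  rw [hleft, hright]
  exact Fintype.sum_equiv swap _ _ fun q => by simp [swap, setCoord]

theorem weightedSum_sub_comp_setCoord_mul (μ : Ω → ℝ≥0) (p : Fin n) (a a' : α)
    (H u : Ω × (Fin n → α) → ℝ) :
    weightedSum (withWord α n μ) ((H ∘ setCoord p a - H ∘ setCoord p a') * u) =
      weightedSum (withWord α n μ) (H * adjointDiff a a' p u) := by
  rw [sub_mul, map_sub, weightedSum_comp_setCoord_mul, weightedSum_comp_setCoord_mul, ← map_sub,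
    ← mul_sub, ← sub_mul, adjointDiff]

/-- Exchanging the letters `a` and `a'` at position `q` changes the sign of the second factor
only. -/
theorem weightedSum_adjointDiff_mul_adjointDiff (μ : Ω → ℝ≥0) {π : α → β} {a a' : α}
    (haa' : π a = π a') {p q : Fin n} (hpq : p < q) {u v : Ω × (Fin n → α) → ℝ}
    (hu : IsTest π p u) :
    weightedSum (withWord α n μ) (adjointDiff a a' p u * adjointDiff a a' q v) = 0 := by
  classical
  let flip : Equiv.Perm (Ω × (Fin n → α)) :=
    Function.Involutive.toPerm (fun z => setCoord q (Equiv.swap a a' (z.2 q)) z) fun z => by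
      simp [setCoord]
  have hπ (b : α) : π (Equiv.swap a a' b) = π b := by
    rw [Equiv.swap_apply_def]
    split_ifs <;> simp [*]
  have hfirst (z) : adjointDiff a a' p u (flip z) = adjointDiff a a' p u z := by
    have hsum : sumCoord p u (flip z) = sumCoord p u z := by
      refine Finset.sum_congr rfl fun b _ => hu.congr _ _ _ (fun i hi => ?_) fun i => ?_
      · simp [flip, setCoord, Function.update_apply, (hi.trans hpq).ne]
      · simp only [flip, setCoord, Function.Involutive.coe_toPerm, Function.update_apply]
        split_ifs <;> simp [*]
    rw [adjointDiff, Pi.mul_apply, Pi.mul_apply, hsum]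
    simp [letterInd, flip, setCoord, hpq.ne, Set.indicator_apply]
  have hsecond (z) : adjointDiff a a' q v (flip z) = -adjointDiff a a' q v z := by
    have hsum : sumCoord q v (flip z) = sumCoord q v z := by simp [sumCoord, flip, setCoord]
    rw [adjointDiff, Pi.mul_apply, Pi.mul_apply, hsum]
    simp only [Pi.sub_apply, Pi.one_apply, letterInd, Set.indicator_apply, Set.mem_ofPred_eq,
      flip, setCoord, Function.Involutive.coe_toPerm, Function.update_self,
      Equiv.swap_apply_eq_iff, Equiv.swap_apply_left, Equiv.swap_apply_right]
    ring
  refine self_eq_neg.mp ?_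
  rw [← map_neg, weightedSum_apply, weightedSum_apply]
  refine Fintype.sum_equiv flip _ _ fun z => ?_
  simp only [Pi.neg_apply, Pi.mul_apply, hfirst, hsecond, mul_neg, neg_neg]
  rfl

theorem card_mul_sq_le_of_correlated (μ : Ω → ℝ≥0) {π : α → β} {a a' : α} (haa' : π a = π a')
    {H : Ω × (Fin n → α) → ℝ} (hH : ∀ z, |H z| ≤ 1) {C : Finset (Fin n)} {ε : ℝ} (hε : 0 < ε)
    (hC : ∀ p ∈ C, ∃ u, IsTest π p u ∧ ε * mass (withWord α n μ) .univ <
      |weightedSum (withWord α n μ) ((H ∘ setCoord p a - H ∘ setCoord p a') * u)|) :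
    C.card * ε ^ 2 ≤ (Fintype.card α : ℝ) ^ 2 := by
  have hsigned : ∀ p ∈ C, ∃ u, IsTest π p u ∧
      ε * mass (withWord α n μ) .univ <
        weightedSum (withWord α n μ) (H * adjointDiff a a' p u) := by
    intro p hp
    obtain ⟨u, hu, hlt⟩ := hC p hp
    simp only [← weightedSum_sub_comp_setCoord_mul]
    rcases lt_abs.mp hlt with h | h
    · exact ⟨u, hu, h⟩
    · exact ⟨-u, hu.neg, by rwa [mul_neg, map_neg]⟩
  choose! u hu hcorr using hsigned
  refine card_mul_sq_le_of_orthogonal (v := fun p => adjointDiff a a' p (u p)) hε hH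
    (fun p hp => (hu p hp).abs_adjointDiff_le a a') (fun p hp q hq hpq => ?_) hcorr
  rcases hpq.lt_or_gt with h | h
  · exact weightedSum_adjointDiff_mul_adjointDiff μ haa' h (hu p hp)
  · rw [mul_comm]
    exact weightedSum_adjointDiff_mul_adjointDiff μ haa' h (hu q hq)

theorem exists_mem_insensitive_coord (μ : Ω → ℝ≥0) (π : α → β) {ι : Type*} [Fintype ι]
    {H : ι → Ω × (Fin n → α) → ℝ} (hH : ∀ j z, |H j z| ≤ 1) {C : Finset (Fin n)} {ε : ℝ}
    (hε : 0 < ε)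
    (hC : Fintype.card (ι × α × α) * ((Fintype.card α : ℝ) ^ 2 / ε ^ 2) < C.card) :
    ∃ p ∈ C, ∀ j a a', π a = π a' → ∀ u, IsTest π p u →
      |weightedSum (withWord α n μ) ((H j ∘ setCoord p a - H j ∘ setCoord p a') * u)| ≤
        ε * mass (withWord α n μ) .univ := by
  classical
  by_contra! hbad
  let bad (t : ι × α × α) : Finset (Fin n) := C.filter fun p => π t.2.1 = π t.2.2 ∧
    ∃ u, IsTest π p u ∧ ε * mass (withWord α n μ) .univ <
      |weightedSum (withWord α n μ) ((H t.1 ∘ setCoord p t.2.1 - H t.1 ∘ setCoord p t.2.2) * u)|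
  have hcover : C ⊆ Finset.univ.biUnion bad := fun p hp => by
    obtain ⟨j, a, a', haa', u, hu, hlt⟩ := hbad p hp
    simpa [bad, hp] using ⟨j, a, a', haa', u, hu, hlt⟩
  have hcard (t : ι × α × α) : ((bad t).card : ℝ) ≤ (Fintype.card α : ℝ) ^ 2 / ε ^ 2 := by
    rw [le_div_iff₀ (by positivity)]
    rcases (bad t).eq_empty_or_nonempty with h | ⟨p, hp⟩
    · simp [h]
    · exact card_mul_sq_le_of_correlated μ (Finset.mem_filter.mp hp).2.1 (hH t.1) hε
        fun q hq => (Finset.mem_filter.mp hq).2.2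
  refine hC.not_ge ?_
  calc (C.card : ℝ) ≤ ∑ t, ((bad t).card : ℝ) := by
        exact_mod_cast (Finset.card_le_card hcover).trans Finset.card_biUnion_le
    _ ≤ Fintype.card (ι × α × α) * ((Fintype.card α : ℝ) ^ 2 / ε ^ 2) := by
        simpa using Finset.sum_le_sum fun t (_ : t ∈ Finset.univ) => hcard t

end

end OneCoordinate

section Overwrite

variable {α β : Type*} {n : ℕ}

/-- The word `s` of length `n` with the letters of `y` written over it at the successive positions
listed in `P`. If `y` is shorter than `P`, the word is cut off before the first position that is
not written over; if it is longer, the remaining letters of `y` are appended. -/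
def overwrite : List (Fin n) → (Fin n → α) → List α → List α
  | [], s, y => List.ofFn s ++ y
  | p :: _, s, [] => (List.ofFn s).take p
  | p :: P, s, a :: y => overwrite P (Function.update s p a) y

@[simp] theorem overwrite_nil_left (s : Fin n → α) (y : List α) :
    overwrite [] s y = List.ofFn s ++ y := by simp [overwrite]

@[simp] theorem overwrite_cons_nil (p : Fin n) (P : List (Fin n)) (s : Fin n → α) :
    overwrite (p :: P) s [] = (List.ofFn s).take p := rfl

@[simp] theorem overwrite_cons_cons (p : Fin n) (P : List (Fin n)) (s : Fin n → α) (a : α)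
    (y : List α) :
    overwrite (p :: P) s (a :: y) = overwrite P (Function.update s p a) y := rfl

theorem length_overwrite_le (P : List (Fin n)) (s : Fin n → α) {y : List α}
    (h : y.length < P.length) : (overwrite P s y).length ≤ n := by
  induction P generalizing s y with
  | nil => simp at h
  | cons p P ih =>
    cases y with
    | nil => simp
    | cons a y => exact ih _ (by simpa using h)

theorem map_overwrite (f : α → β) (P : List (Fin n)) (s : Fin n → α) (y : List α) :
    (overwrite P s y).map f = overwrite P (f ∘ s) (y.map f) := by
  induction P generalizing s y with
  | nil => simp [List.map_ofFn]
  | cons p P ih =>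
    cases y with
    | nil => simp [List.map_take, List.map_ofFn]
    | cons a y => simp [ih, Function.comp_update]

theorem ofFn_update (s : Fin n → α) (p : Fin n) (a : α) :
    List.ofFn (Function.update s p a) = (List.ofFn s).set p a := by
  refine List.ext_getElem (by simp) fun i hi _ => ?_
  simp [List.getElem_set, Function.update_apply, Fin.ext_iff, eq_comm]

theorem drop_ofFn_congr {s s' : Fin n → α} {k : ℕ} (h : ∀ i : Fin n, k ≤ i → s i = s' i) :
    (List.ofFn s).drop k = (List.ofFn s').drop k := by
  refine List.ext_getElem (by simp) fun i hi _ => ?_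
  simpa using h _ (Nat.le_add_right k i)

/-- The first position in `P`, and `n` if there is none. -/
def firstPos : List (Fin n) → ℕ
  | [] => n
  | p :: _ => p

theorem take_ofFn_update {p : Fin n} {q : ℕ} (hpq : p < q) (s : Fin n → α) (a : α) :
    (List.ofFn (Function.update s p a)).take q =
      (List.ofFn s).take p ++ a :: ((List.ofFn s).drop (p + 1)).take (q - (p + 1)) := by
  rw [ofFn_update, List.take_set, List.set_eq_take_append_cons_drop, if_pos (by simp; omega),
    List.take_take, min_eq_left hpq.le, List.drop_take]

theorem exists_overwrite_eq_evalLevels {P : List (Fin n)} (hP : P.Pairwise (· < ·))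
    (s : Fin n → α) :
    ∃ us, ∀ s' : Fin n → α, (∀ i : Fin n, firstPos P ≤ i → s i = s' i) → ∀ y,
      overwrite P s' y = (List.ofFn s').take (firstPos P) ++ evalLevels us y := by
  induction P with
  | nil => exact ⟨[], fun s' _ y => by simp [firstPos]⟩
  | cons p P ih =>
    obtain ⟨hp, hP⟩ := List.pairwise_cons.mp hP
    obtain ⟨us, hus⟩ := ih hP
    have hlt : p < firstPos P := by
      cases P with
      | nil => exact p.2
      | cons q P => exact hp q List.mem_cons_self
    refine ⟨(((List.ofFn s).drop (p + 1)).take (firstPos P - (p + 1))).map some :: us,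
      fun s' hs' y => ?_⟩
    cases y with
    | nil => simp [firstPos]
    | cons a y =>
      have hupdate (i : Fin n) (hi : firstPos P ≤ i) : s i = Function.update s' p a i := by
        rw [Function.update_of_ne (by rintro rfl; omega)]
        exact hs' i (hlt.le.trans hi)
      rw [overwrite_cons_cons, hus _ hupdate, take_ofFn_update hlt,
        drop_ofFn_congr (k := p + 1) fun i hi => hs' i (Nat.le_of_succ_le hi)]
      simp only [evalLevels_cons_cons, fillVar_map_some, List.append_assoc, List.cons_append]
      rfl

theorem isCSMap_overwrite {P : List (Fin n)} (hP : P.Pairwise (· < ·)) (s : Fin n → α) :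
    IsCSMap (overwrite P s) := by
  obtain ⟨us, h⟩ := exists_overwrite_eq_evalLevels hP s
  rw [funext (h s fun _ _ => rfl)]
  exact IsCSMap.eval ⟨_, us⟩

theorem exists_split_lt {γ : Type*} [LinearOrder γ] {C : Finset γ} {k l : ℕ}
    (h : k + l ≤ C.card) :
    ∃ A ⊆ C, ∃ B ⊆ C, k ≤ A.card ∧ l ≤ B.card ∧ ∀ p ∈ A, ∀ q ∈ B, p < q := by
  induction k generalizing C with
  | zero => exact ⟨∅, by simp, C, subset_rfl, by simp, by omega, by simp⟩
  | succ k ih =>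
    have hC : C.Nonempty := Finset.card_pos.mp (by omega)
    obtain ⟨A, hAC, B, hBC, hA, hB, hlt⟩ := ih (C := C.erase (C.min' hC))
      (by rw [Finset.card_erase_of_mem (C.min'_mem hC)]; omega)
    have hmin : C.min' hC ∉ A := fun h => Finset.notMem_erase _ C (hAC h)
    refine ⟨insert (C.min' hC) A, Finset.insert_subset (C.min'_mem hC)
      (hAC.trans (Finset.erase_subset _ C)), B, hBC.trans (Finset.erase_subset _ C),
      by rwa [Finset.card_insert_of_notMem hmin, Nat.add_le_add_iff_right], hB, ?_⟩
    rintro p hp q hq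
    rcases Finset.mem_insert.mp hp with rfl | hp
    · exact C.min'_lt_of_mem_erase_min' hC (hBC hq)
    · exact hlt p hp q hq

end Overwrite

section Insensitivity

variable {α β Ω : Type*} {n : ℕ}

/-- The function `F` of a word and of a point of `Ω`, evaluated at a random word of length `n` whose
letters at the positions `P` are written over by `y`. -/
def noisy (F : List α → Ω → ℝ) (P : List (Fin n)) (y : List α) (z : Ω × (Fin n → α)) : ℝ :=
  F (overwrite P z.2 y) z.1

theorem noisy_cons_cons (F : List α → Ω → ℝ) (p : Fin n) (P : List (Fin n)) (a : α) (y : List α) :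
    noisy F (p :: P) (a :: y) = noisy F P y ∘ setCoord p a := rfl

variable [Fintype α] [Fintype Ω] {μ : Ω → ℝ≥0}

theorem IsTest.letterInd_mul_sumCoord {Ω : Type*} [Nonempty α] {π : α → β} {p q : Fin n}
    (hpq : p < q)
    {u : Ω × (Fin n → α) → ℝ} (hu : IsTest π p u) (a : α) :
    IsTest π q ((Fintype.card α : ℝ)⁻¹ • (letterInd p a * sumCoord p u)) := by
  classical
  have hcard : (0 : ℝ) < Fintype.card α := by exact_mod_cast Fintype.card_pos
  refine ⟨fun z => ?_, fun ω s s' h h' => ?_⟩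
  · rw [Pi.smul_apply, smul_eq_mul, abs_mul, abs_inv, abs_of_pos hcard,
      inv_mul_le_one₀ hcard, Pi.mul_apply, abs_mul]
    have hind : |letterInd p a z| ≤ 1 := by
      simp only [letterInd, Set.indicator_apply, Pi.one_apply]
      split_ifs <;> simp
    exact (mul_le_of_le_one_left (abs_nonneg _) hind).trans (hu.abs_sumCoord_le z)
  · have hsum : sumCoord p u (ω, s) = sumCoord p u (ω, s') := by
      refine Finset.sum_congr rfl fun b _ => hu.congr _ _ _ (fun i hi => ?_) fun i => ?_
      · by_cases hip : i = p <;> simp [hip, h i (hi.trans hpq)]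
      · simp only [Function.update_apply]
        split_ifs <;> simp [h']
    simp [hsum, letterInd, Set.indicator_apply, h p hpq]

theorem abs_weightedSum_noisy_cons_le [Nonempty α] {π : α → β} {F : List α → Ω → ℝ} {p q : Fin n}
    (hpq : p < q) {P : List (Fin n)} {a a' : α} {r r' : List α} {u : Ω × (Fin n → α) → ℝ}
    (hu : IsTest π p u) {ε ε' : ℝ}
    (hhead : |weightedSum (withWord α n μ) ((noisy F (q :: P) r ∘ setCoord p a -
      noisy F (q :: P) r ∘ setCoord p a') * u)| ≤ ε)
    (htail : ∀ v, IsTest π q v →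
      |weightedSum (withWord α n μ) ((noisy F (q :: P) r - noisy F (q :: P) r') * v)| ≤ ε') :
    |weightedSum (withWord α n μ)
      ((noisy F (p :: q :: P) (a :: r) - noisy F (p :: q :: P) (a' :: r')) * u)| ≤
        ε + Fintype.card α * ε' := by
  have hcard : (0 : ℝ) < Fintype.card α := by exact_mod_cast Fintype.card_pos
  have hsplit : (noisy F (p :: q :: P) (a :: r) - noisy F (p :: q :: P) (a' :: r')) * u =
      (noisy F (q :: P) r ∘ setCoord p a - noisy F (q :: P) r ∘ setCoord p a') * u +
        (noisy F (q :: P) r - noisy F (q :: P) r') ∘ setCoord p a' * u := by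
    simp only [noisy_cons_cons, Pi.sub_comp]
    ring
  have hscale : letterInd p a' * sumCoord p u =
      (Fintype.card α : ℝ) • ((Fintype.card α : ℝ)⁻¹ • (letterInd p a' * sumCoord p u)) := by
    rw [smul_smul, mul_inv_cancel₀ hcard.ne', one_smul]
  rw [hsplit, map_add, weightedSum_comp_setCoord_mul, hscale, mul_smul_comm, map_smul, smul_eq_mul]
  refine (abs_add_le _ _).trans (add_le_add hhead ?_)
  rw [abs_mul, abs_of_pos hcard]
  exact mul_le_mul_of_nonneg_left (htail _ (hu.letterInd_mul_sumCoord hpq a')) hcard.le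

theorem abs_weightedSum_noisy_nil_le (π : α → β) (F : List α → Ω → ℝ) (P : List (Fin n))
    {y : List α} (h : [] = y.map π) (u : Ω × (Fin n → α) → ℝ) {ε : ℝ} (hε : 0 ≤ ε) :
    |weightedSum (withWord α n μ) ((noisy F P [] - noisy F P y) * u)| ≤
      ε * mass (withWord α n μ) .univ := by
  obtain rfl : y = [] := List.map_eq_nil_iff.mp h.symm
  simpa using mul_nonneg hε (mass_nonneg _ _)

theorem exists_insensitive_positions [Nonempty α] (π : α → β) (ρ : ℕ) {ε : ℝ} (hε : 0 < ε) :
    ∃ m : ℕ, ∀ {Ω : Type*} [Fintype Ω] (μ : Ω → ℝ≥0) {n : ℕ} (C : Finset (Fin n)), m ≤ C.card →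
      ∀ F : List α → Ω → ℝ, (∀ t ω, |F t ω| ≤ 1) →
      ∃ p P, (p :: P).Pairwise (· < ·) ∧ P.length = ρ ∧ (∀ q ∈ p :: P, q ∈ C) ∧
        ∀ y y', y.length ≤ ρ → y.map π = y'.map π → ∀ u, IsTest π p u →
          |weightedSum (withWord α n μ) ((noisy F (p :: P) y - noisy F (p :: P) y') * u)| ≤
            ε * mass (withWord α n μ) .univ := by
  induction ρ generalizing ε with
  | zero =>
    refine ⟨1, fun {Ω} _ μ n C hC F _ => ?_⟩
    obtain ⟨p, hp⟩ := Finset.card_pos.mp hC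
    refine ⟨p, [], List.pairwise_singleton _ p, rfl, by simpa using hp, fun y y' hy e u _ => ?_⟩
    obtain rfl := List.length_eq_zero_iff.mp (Nat.le_zero.mp hy)
    exact abs_weightedSum_noisy_nil_le π F _ e u hε.le
  | succ ρ ih =>
    obtain ⟨m₂, hm₂⟩ := ih (ε := ε / (2 * Fintype.card α)) (by positivity)
    let ι := {y : List α // y.length ≤ ρ}
    have : Fintype ι := (List.finite_length_le α ρ).fintype
    obtain ⟨m₁, hm₁⟩ := exists_nat_gt
      (Fintype.card (ι × α × α) * ((Fintype.card α : ℝ) ^ 2 / (ε / 2) ^ 2))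
    refine ⟨m₁ + m₂, fun {Ω} _ μ n C hC F hF => ?_⟩
    obtain ⟨A, hAC, B, hBC, hA, hB, hlt⟩ := exists_split_lt hC
    obtain ⟨q, P, hsorted, hlen, hmem, htail⟩ := hm₂ μ B hB F hF
    obtain ⟨p, hp, hhead⟩ := exists_mem_insensitive_coord μ π
      (H := fun (y : ι) => noisy F (q :: P) y.1) (fun _ _ => hF _ _) (half_pos hε)
      (hm₁.trans_le (Nat.cast_le.mpr hA))
    refine ⟨p, q :: P, List.pairwise_cons.mpr ⟨fun r hr => hlt p hp r (hmem r hr), hsorted⟩,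
      by simp [hlen], ?_, fun y y' hy e u hu => ?_⟩
    · rintro r (_ | ⟨_, hr⟩)
      exacts [hAC hp, hBC (hmem r hr)]
    rcases y with _ | ⟨a, r⟩
    · exact abs_weightedSum_noisy_nil_le π F _ e u hε.le
    rcases y' with _ | ⟨a', r'⟩
    · simp at e
    obtain ⟨ha, he⟩ : π a = π a' ∧ r.map π = r'.map π := by simpa using e
    have hr : r.length ≤ ρ := by simpa using hy
    refine (abs_weightedSum_noisy_cons_le (hlt p hp q (hmem q List.mem_cons_self)) hu
      (hhead ⟨r, hr⟩ a a' ha u hu) (htail r r' hr he)).trans_eq ?_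
    field_simp
    ring

theorem exists_weightedSum_le_comp_setCoord [Nonempty α] (G : Ω × (Fin n → α) → ℝ) (p : Fin n) :
    ∃ a, weightedSum (withWord α n μ) G ≤ weightedSum (withWord α n μ) (G ∘ setCoord p a) := by
  classical
  have hletters : ∑ a : α, letterInd (Ω := Ω) p a * sumCoord p 1 = Fintype.card α • 1 := by
    ext z
    simp [letterInd, sumCoord, Set.indicator_apply]
  have hsum : ∑ a : α, weightedSum (withWord α n μ) (G ∘ setCoord p a) =
      ∑ _a : α, weightedSum (withWord α n μ) G := by
    calc ∑ a : α, weightedSum (withWord α n μ) (G ∘ setCoord p a)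
        = ∑ a : α, weightedSum (withWord α n μ) (G * (letterInd p a * sumCoord p 1)) :=
          Finset.sum_congr rfl fun a _ => by rw [← weightedSum_comp_setCoord_mul, mul_one]
      _ = ∑ _a : α, weightedSum (withWord α n μ) G := by
          rw [← map_sum, ← Finset.mul_sum, hletters, mul_smul_comm, mul_one, map_nsmul,
            Finset.sum_const, Finset.card_univ]
  obtain ⟨a, -, ha⟩ := Finset.exists_le_of_sum_le Finset.univ_nonempty hsum.ge
  exact ⟨a, ha⟩

theorem exists_prefix_le_noisy [Nonempty α] (F : List α → Ω → ℝ) (P : List (Fin n)) {i : ℕ}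
    (hi : i < P.length) :
    ∃ y : List α, y.length = i ∧
      weightedSum (withWord α n μ) (fun z => F ((List.ofFn z.2).take P[i]) z.1) ≤
        weightedSum (withWord α n μ) (noisy F P y) := by
  induction P generalizing i with
  | nil => simp at hi
  | cons p P ih =>
    cases i with
    | zero => exact ⟨[], rfl, le_rfl⟩
    | succ i =>
      obtain ⟨y, hy, hle⟩ := ih (Nat.lt_of_succ_lt_succ hi)
      obtain ⟨a, ha⟩ := exists_weightedSum_le_comp_setCoord (μ := μ) (noisy F P y) p
      exact ⟨a :: y, by simp [hy], hle.trans ha⟩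

theorem exists_positions_le_noisy [Nonempty α] (ρ : ℕ) {ε : ℝ} (hε : 0 < ε) :
    ∃ m : ℕ, ∀ {Ω : Type*} [Fintype Ω] (μ : Ω → ℝ≥0) {n : ℕ} (C : Finset (Fin n)), m ≤ C.card →
      ∀ F : List α → Ω → ℝ, (∀ t ω, |F t ω| ≤ 1) → ∀ b : ℝ,
      (∀ l ∈ C, b * mass (withWord α n μ) .univ ≤
        weightedSum (withWord α n μ) fun z => F ((List.ofFn z.2).take l) z.1) →
      ∃ P : List (Fin n), P.Pairwise (· < ·) ∧ P.length = ρ + 1 ∧ ∀ y, y.length ≤ ρ →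
        (b - ε) * mass (withWord α n μ) .univ ≤
          weightedSum (withWord α n μ) (noisy F P y) := by
  obtain ⟨m, hm⟩ := exists_insensitive_positions (fun _ : α => ()) ρ hε
  refine ⟨m, fun {Ω} _ μ n C hC F hF b hb => ?_⟩
  obtain ⟨p, P, hsorted, hlen, hmem, hins⟩ := hm μ C hC F hF
  refine ⟨p :: P, hsorted, by simp [hlen], fun y hy => ?_⟩
  have hyl : y.length < (p :: P).length := by simpa [hlen, Nat.lt_succ_iff] using hy
  obtain ⟨y', hy', hle⟩ := exists_prefix_le_noisy (μ := μ) F (p :: P) hyl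
  have hclose := hins y y' hy (by simp [List.map_const', hy']) 1 ⟨by simp, by simp⟩
  rw [mul_one, map_sub] at hclose
  have hlevel := hb _ (hmem _ (List.getElem_mem hyl))
  linarith [(abs_le.mp hclose).1]

end Insensitivity

section DensityStatement

variable {α : Type} {Ω : Type*}

/-- The event that the image under `φ` of every word of length at most `m` is in the random set of
words `{t | ω ∈ X t}`. -/
def subtreeEvent (X : List α → Set Ω) (φ : List α → List α) (m : ℕ) : Set Ω :=
  {ω | ∀ y, y.length ≤ m → ω ∈ X (φ y)}

/-- The probabilistic density Carlson–Simpson property for subtrees of height `m` and density `δ`: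
if `N` is large, then a random set of words that contains every word of length at most `N` with
probability at least `δ` contains a Carlson–Simpson subtree of height `m`. -/
def DensityCS (α : Type) (m : ℕ) (δ : ℝ) : Prop :=
  ∃ N : ℕ, ∀ (Ω : Type) [Fintype Ω] (μ : Ω → ℝ≥0) (X : List α → Set Ω), 0 < mass μ .univ →
    (∀ t, t.length ≤ N → δ * mass μ .univ ≤ mass μ (X t)) →
    ∃ φ, IsCSMap φ ∧ ∃ ω ∈ subtreeEvent X φ m, 0 < μ ω

variable {m : ℕ} {δ : ℝ}

theorem DensityCS.mono {δ' : ℝ} (h : DensityCS α m δ) (hδ : δ ≤ δ') : DensityCS α m δ' := by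
  obtain ⟨N, hN⟩ := h
  exact ⟨N, fun Ω _ μ X hμ hX => hN Ω μ X hμ fun t ht =>
    (mul_le_mul_of_nonneg_right hδ hμ.le).trans (hX t ht)⟩

theorem DensityCS.exists_length_le (h : DensityCS α m δ) :
    ∃ N : ℕ, ∀ (Ω : Type) [Fintype Ω] (μ : Ω → ℝ≥0) (X : List α → Set Ω), 0 < mass μ .univ →
      (∀ t, t.length ≤ N → δ * mass μ .univ ≤ mass μ (X t)) →
      ∃ φ, IsCSMap φ ∧ (∀ y, y.length ≤ m → (φ y).length ≤ N) ∧
        ∃ ω ∈ subtreeEvent X φ m, 0 < μ ω := by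
  obtain ⟨N, hN⟩ := h
  refine ⟨N, fun Ω _ μ X hμ hX => ?_⟩
  obtain ⟨φ, hφ, ω, hω, hpos⟩ := hN Ω μ (fun t => {ω ∈ X t | t.length ≤ N}) hμ
    fun t ht => by simpa [ht] using hX t ht
  exact ⟨φ, hφ, fun y hy => (hω y hy).2, ω, fun y hy => (hω y hy).1, hpos⟩

/-- There are finitely many candidates for the subtree, so one of them occurs with positive
probability: otherwise remove all these rare events and apply the property at density `δ / 2`. -/
theorem DensityCS.exists_mass_subtreeEvent_ge [Finite α] (hδ : 0 < δ) (h : DensityCS α m (δ / 2)) :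
    ∃ (N : ℕ) (p : ℝ), 0 < p ∧ p ≤ 1 ∧
      ∀ (Ω : Type) [Fintype Ω] (μ : Ω → ℝ≥0) (X : List α → Set Ω), 0 < mass μ .univ →
        (∀ t, t.length ≤ N → δ * mass μ .univ ≤ mass μ (X t)) →
        ∃ φ, IsCSMap φ ∧ (∀ y, y.length ≤ m → (φ y).length ≤ N) ∧
          p * mass μ .univ ≤ mass μ (subtreeEvent X φ m) := by
  obtain ⟨N, hN⟩ := h.exists_length_le
  have : Finite {y : List α // y.length ≤ m} := List.finite_length_le α m
  have : Finite {t : List α // t.length ≤ N} := List.finite_length_le α N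
  let R := {y : List α // y.length ≤ m} → {t : List α // t.length ≤ N}
  have : Fintype R := Fintype.ofFinite R
  set p : ℝ := min (δ / (2 * (Fintype.card R + 1))) 1
  refine ⟨N, p, by positivity, min_le_right _ _, fun Ω _ μ X hμ hX => ?_⟩
  by_contra! hrare
  let bad (r : R) : Set Ω := {ω | ∃ φ, IsCSMap φ ∧ (∀ y, φ y.1 = (r y).1) ∧ ω ∈ subtreeEvent X φ m}
  have hbad (r : R) : mass μ (bad r) ≤ p * mass μ .univ := by
    rcases (bad r).eq_empty_or_nonempty with h0 | ⟨ω₀, φ, hφ, hφr, -⟩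
    · rw [h0, mass_empty]
      positivity
    · refine (mass_mono ?_).trans
        (hrare φ hφ fun y hy => (hφr ⟨y, hy⟩).symm ▸ (r ⟨y, hy⟩).2).le
      rintro ω ⟨ψ, -, hψr, hω⟩ y hy
      rw [hφr ⟨y, hy⟩, ← hψr ⟨y, hy⟩]
      exact hω y hy
  have hBad : mass μ (⋃ r, bad r) ≤ δ / 2 * mass μ .univ :=
    calc mass μ (⋃ r, bad r) ≤ Fintype.card R * (p * mass μ .univ) :=
          mass_iUnion_le_card_mul hbad
      _ ≤ (Fintype.card R + 1) * (δ / (2 * (Fintype.card R + 1)) * mass μ .univ) := by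
        gcongr
        exacts [by linarith, min_le_left _ _]
      _ = δ / 2 * mass μ .univ := by field_simp
  have hlarge (t : List α) (ht : t.length ≤ N) :
      δ / 2 * mass μ .univ ≤ mass ((⋃ r, bad r)ᶜ.indicator μ) (X t) := by
    linarith [hX t ht, mass_le_mass_indicator_compl_add μ (⋃ r, bad r) (X t)]
  obtain ⟨φ, hφ, hφN, ω, hω, hpos⟩ := hN Ω ((⋃ r, bad r)ᶜ.indicator μ) X
    ((mul_pos (half_pos hδ) hμ).trans_le ((hlarge [] (Nat.zero_le N)).trans (mass_le_univ _ _)))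
    fun t ht => (mul_le_mul_of_nonneg_left (mass_indicator_le μ _ _) (half_pos hδ).le).trans
      (hlarge t ht)
  refine Set.mem_of_indicator_ne_zero hpos.ne' (Set.mem_iUnion.mpr ?_)
  exact ⟨fun y => ⟨φ y.1, hφN y.1 y.2⟩, φ, hφ, fun _ => rfl, hω⟩

theorem DensityCS.exists_of_dense_levels [Fintype α] [Nonempty α] {d γ : ℝ} (h : DensityCS α m d)
    (hγ : 0 < γ) :
    ∃ m₀ : ℕ, ∀ (Ω : Type) [Fintype Ω] (μ : Ω → ℝ≥0) (X : List α → Set Ω) (n : ℕ)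
      (C : Finset (Fin n)), 0 < mass μ .univ → m₀ ≤ C.card →
      (∀ l ∈ C, (d + γ) * mass (withWord α n μ) .univ ≤
        mass (withWord α n μ) {z | z.1 ∈ X ((List.ofFn z.2).take l)}) →
      ∃ φ, IsCSMap φ ∧ ∃ ω ∈ subtreeEvent X φ m, 0 < μ ω := by
  obtain ⟨N, hN⟩ := h
  obtain ⟨m₀, hm₀⟩ := exists_positions_le_noisy (α := α) N hγ
  refine ⟨m₀, fun Ω _ μ X n C hμ hC hX => ?_⟩
  obtain ⟨P, hsorted, -, hP⟩ := hm₀ μ C hC (fun t => (X t).indicator 1)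
    (fun t ω => by by_cases hω : ω ∈ X t <;> simp [hω]) (d + γ) hX
  obtain ⟨φ, hφ, z, hz, hpos⟩ := hN (Ω × (Fin n → α)) (withWord α n μ)
    (fun y => {z | z.1 ∈ X (overwrite P z.2 y)})
    (by rw [mass_comp_fst]; positivity) fun y hy =>
      (congrArg (· * _) (add_sub_cancel_right d γ)).ge.trans (hP y hy)
  exact ⟨_, (isCSMap_overwrite hsorted z.2).comp hφ, z.1, hz, hpos⟩

end DensityStatement

section FiberAverage

variable {Z γ : Type*} [Fintype Z]

open Classical in
/-- The conditional expectation of `f` given `c`, for the uniform distribution on `Z`. -/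
noncomputable def fiberAvg (c : Z → γ) (f : Z → ℝ) (z : Z) : ℝ :=
  Finset.expect {z' | c z' = c z} f

theorem factorsThrough_fiberAvg (c : Z → γ) (f : Z → ℝ) : (fiberAvg c f).FactorsThrough c :=
  fun z z' h => by rw [fiberAvg, fiberAvg, h]

theorem fiberAvg_le {c : Z → γ} {f : Z → ℝ} {b : ℝ} (hf : ∀ z, f z ≤ b) (z : Z) :
    fiberAvg c f z ≤ b :=
  Finset.expect_le ⟨z, by simp⟩ fun z' _ => hf z'

theorem weightedSum_fiberAvg {μ : Z → ℝ≥0} {c : Z → γ} (hμ : μ.FactorsThrough c)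
    (f : Z → ℝ) : weightedSum μ (fiberAvg c f) = weightedSum μ f := by
  classical
  rw [weightedSum_apply, weightedSum_apply,
    ← Finset.sum_fiberwise_of_maps_to fun z _ => Finset.mem_image_of_mem c (Finset.mem_univ z),
    ← Finset.sum_fiberwise_of_maps_to fun z _ => Finset.mem_image_of_mem c (Finset.mem_univ z)]
  refine Finset.sum_congr rfl fun b hb => ?_
  obtain ⟨z₀, -, rfl⟩ := Finset.mem_image.mp hb
  have hfiber (g : Z → ℝ) : ∑ z with c z = c z₀, μ z * g z = μ z₀ * ∑ z with c z = c z₀, g z := by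
    rw [Finset.mul_sum]
    exact Finset.sum_congr rfl fun z hz => by rw [hμ (Finset.mem_filter.mp hz).2]
  have hconst : ∑ z with c z = c z₀, fiberAvg c f z = ∑ z with c z = c z₀, fiberAvg c f z₀ :=
    Finset.sum_congr rfl fun z hz => factorsThrough_fiberAvg c f (Finset.mem_filter.mp hz).2
  rw [hfiber, hfiber, hconst, Finset.sum_const, fiberAvg, Finset.card_smul_expect]

theorem weightedSum_indicator_eq_mul (μ : Z → ℝ≥0) (X : Set Z) (f : Z → ℝ) :
    weightedSum (X.indicator μ) f = weightedSum μ (f * X.indicator 1) := by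
  classical
  rw [weightedSum_indicator]
  congr 1 with z
  simp [Set.indicator_apply]

theorem weightedSum_le_mass_add {μ : Z → ℝ≥0} {f : Z → ℝ} {b : ℝ} (hf : ∀ z, f z ≤ 1) (hb : 0 ≤ b) :
    weightedSum μ f ≤ mass μ {z | b ≤ f z} + b * mass μ .univ := by
  rw [mass, ← weightedSum_const, ← map_add]
  refine weightedSum_mono fun z _ => ?_
  by_cases hz : b ≤ f z
  · simpa [hz] using (hf z).trans (le_add_of_nonneg_right hb)
  · simpa [hz] using (not_le.mp hz).le

end FiberAverage

section RandomSubtrees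

/-- A random map of Carlson–Simpson type for words over `α`, defined over a refinement `base` of the
probability space with measure `μ`. -/
structure RandomSubtree (α : Type) {Ω : Type} (μ : Ω → ℝ≥0) where
  Idx : Type
  [fintype : Fintype Idx]
  weight : Idx → ℝ≥0
  base : Idx → Ω
  map : Idx → List α → List α
  mass_pos : 0 < mass weight .univ
  base_pos : ∀ i, 0 < weight i → 0 < μ (base i)
  isCSMap_map : ∀ i, IsCSMap (map i)

namespace RandomSubtree

attribute [instance] RandomSubtree.fintype

variable {α Ω : Type} {μ : Ω → ℝ≥0}

/-- The family `f` of random variables, seen along the random subtree. -/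
def pullback (R : RandomSubtree α μ) (f : List α → Ω → ℝ) (t : List α) (i : R.Idx) : ℝ :=
  f (R.map i t) (R.base i)

/-- The whole tree. -/
def refl (α : Type) [Fintype Ω] (hμ : 0 < mass μ .univ) : RandomSubtree α μ where
  Idx := Ω
  weight := μ
  base := id
  map _ := id
  mass_pos := hμ
  base_pos _ := id
  isCSMap_map _ := IsCSMap.id

/-- A random subtree of a random subtree. -/
def trans (R : RandomSubtree α μ) (S : RandomSubtree α R.weight) : RandomSubtree α μ where
  Idx := S.Idx
  weight := S.weight
  base i := R.base (S.base i)
  map i t := R.map (S.base i) (S.map i t)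
  mass_pos := S.mass_pos
  base_pos i hi := R.base_pos _ (S.base_pos i hi)
  isCSMap_map i := (R.isCSMap_map _).comp (S.isCSMap_map i)

end RandomSubtree

end RandomSubtrees

section Retraction

variable {α β Ω : Type*} {n : ℕ}

/-- Reads the word `z.2` only through `π`. -/
def collapse (π : α → β) (z : Ω × (Fin n → α)) : Ω × (Fin n → β) := (z.1, π ∘ z.2)

/-- The event that `t` is in the random set `G` and that the conditional expectation of `f t`
given all letters up to `π` is at least `b`, where `t` is `y` written over a random word. -/
noncomputable def retractEvent [Fintype α] [Fintype Ω] (π : α → β) (f : List α → Ω → ℝ)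
    (G : List α → Set Ω) (P : List (Fin n)) (b : ℝ) (y : List α) : Set (Ω × (Fin n → α)) :=
  {z | z.1 ∈ G (overwrite P z.2 y) ∧ b ≤ fiberAvg (collapse π) (noisy f P y) z}

theorem factorsThrough_mem_overwrite {π : α → β} {G : List α → Set Ω}
    (hG : G.FactorsThrough (List.map π)) (P : List (Fin n)) (y : List α) :
    Function.FactorsThrough (fun z : Ω × (Fin n → α) => z.1 ∈ G (overwrite P z.2 y))
      (collapse π) := fun z z' h => by
  obtain ⟨hbase, hword⟩ := Prod.mk.inj h
  have hmap : (overwrite P z.2 y).map π = (overwrite P z'.2 y).map π := by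
    rw [map_overwrite, map_overwrite, hword]
  change (z.1 ∈ G _) = (z'.1 ∈ G _)
  rw [hbase, hG hmap]

theorem factorsThrough_indicator_withWord {π : α → β} (μ : Ω → ℝ≥0) {E : Set (Ω × (Fin n → α))}
    (hE : Function.FactorsThrough (· ∈ E) (collapse π)) :
    (E.indicator (withWord α n μ)).FactorsThrough (collapse π) := fun z z' h => by
  have hbase : z.1 = z'.1 := (Prod.mk.inj h).1
  classical
  simp only [Set.indicator_apply, Function.comp_apply, hbase, iff_of_eq (hE h)]

theorem isTest_indicator_one {π : α → β} (p : Fin n) {U : Set (Ω × (Fin n → α))}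
    (hU : Function.FactorsThrough (· ∈ U) (collapse π)) : IsTest π p (U.indicator 1) := by
  classical
  refine ⟨fun z => ?_, fun ω s s' _ hs => ?_⟩
  · by_cases hz : z ∈ U <;> simp [hz]
  · have hcollapse : collapse π (ω, s) = collapse π (ω, s') := Prod.ext rfl (funext hs)
    simp only [Set.indicator_apply, iff_of_eq (hU hcollapse), Pi.one_apply]

variable [Fintype α] [Fintype Ω]

theorem factorsThrough_mem_retractEvent {π : α → β} {G : List α → Set Ω}
    (hG : G.FactorsThrough (List.map π)) (f : List α → Ω → ℝ) (P : List (Fin n)) (b : ℝ)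
    (y : List α) : Function.FactorsThrough (· ∈ retractEvent π f G P b y) (collapse π) :=
  fun _ _ h => congrArg₂ And (factorsThrough_mem_overwrite hG P y h)
    (congrArg (b ≤ ·) (factorsThrough_fiberAvg _ _ h))

theorem le_weightedSum_noisy {μ : Ω → ℝ≥0} {f : List α → Ω → ℝ} {b : ℝ} {P : List (Fin n)}
    {y : List α} (hf : ∀ t, t.length ≤ n → b * mass μ .univ ≤ weightedSum μ (f t))
    (hy : y.length < P.length) :
    b * mass (withWord α n μ) .univ ≤ weightedSum (withWord α n μ) (noisy f P y) := by
  calc b * mass (withWord α n μ) .univ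
      = ∑ _s : Fin n → α, b * mass μ .univ := by
        rw [mass_comp_fst, Finset.sum_const, Finset.card_univ, nsmul_eq_mul]
        ring
    _ ≤ ∑ s : Fin n → α, weightedSum μ (f (overwrite P s y)) :=
        Finset.sum_le_sum fun s _ => hf _ (length_overwrite_le P s hy)
    _ = weightedSum (withWord α n μ) (noisy f P y) := by
        simp only [weightedSum_apply, Fintype.sum_prod_type_right]
        rfl

theorem le_mass_retractEvent {π : α → β} {μ : Ω → ℝ≥0} {f : List α → Ω → ℝ}
    {G : List α → Set Ω} (hG : G.FactorsThrough (List.map π)) {b : ℝ} (hb : 0 ≤ b)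
    {P : List (Fin n)} {y : List α} (hf : ∀ t ω, |f t ω| ≤ 1)
    (hfG : ∀ t, t.length ≤ n → 2 * b * mass μ .univ ≤ weightedSum μ ((G t).indicator (f t)))
    (hy : y.length < P.length) :
    b * mass (withWord α n μ) .univ ≤ mass (withWord α n μ) (retractEvent π f G P b y) := by
  set E : Set (Ω × (Fin n → α)) := {z | z.1 ∈ G (overwrite P z.2 y)}
  set ν := E.indicator (withWord α n μ)
  set F := noisy f P y
  have hnoisy : noisy (fun t => (G t).indicator (f t)) P y = E.indicator F := by
    classical
    ext z
    simp only [noisy, Set.indicator_apply, E, F, Set.mem_ofPred_eq]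
  have hlower : 2 * b * mass (withWord α n μ) .univ ≤ weightedSum ν F := by
    rw [weightedSum_indicator, ← hnoisy]
    exact le_weightedSum_noisy hfG hy
  have hν : ν.FactorsThrough (collapse π) :=
    factorsThrough_indicator_withWord μ (E := E) (factorsThrough_mem_overwrite hG P y)
  have hupper : weightedSum ν F ≤ mass (withWord α n μ) (retractEvent π f G P b y) +
      b * mass ν .univ := by
    rw [← weightedSum_fiberAvg hν]
    refine (weightedSum_le_mass_add
      (fiberAvg_le (f := F) fun z => (abs_le.mp (hf (overwrite P z.2 y) z.1)).2) hb).trans_eq ?_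
    rw [mass_indicator]
    rfl
  linarith [mul_le_mul_of_nonneg_left (mass_indicator_le (withWord α n μ) E .univ) hb]

theorem le_weightedSum_noisy_of_subset_retractEvent {π : α → β} {μ : Ω → ℝ≥0}
    {f : List α → Ω → ℝ} {G : List α → Set Ω} {b ε : ℝ} {P : List (Fin n)} {y y' : List α}
    {U : Set (Ω × (Fin n → α))} (hUy : U ⊆ retractEvent π f G P b y)
    (hU : Function.FactorsThrough (· ∈ U) (collapse π))
    (hclose : |weightedSum (withWord α n μ) ((noisy f P y - noisy f P y') * U.indicator 1)| ≤ ε) :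
    b * mass (U.indicator (withWord α n μ)) .univ - ε ≤
      weightedSum (U.indicator (withWord α n μ)) (noisy f P y') := by
  have havg : b * mass (U.indicator (withWord α n μ)) .univ ≤
      weightedSum (U.indicator (withWord α n μ)) (noisy f P y) := by
    rw [← weightedSum_fiberAvg (factorsThrough_indicator_withWord μ hU), ← weightedSum_const]
    exact weightedSum_mono fun z hz => (hUy (Set.mem_of_indicator_ne_zero hz.ne')).2
  rw [← weightedSum_indicator_eq_mul, map_sub] at hclose
  linarith [(abs_le.mp hclose).2]

end Retraction

/-- An event that depends on words only through a retraction onto a smaller alphabet contains a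
subtree with positive probability, by the theorem for the smaller alphabet. -/
theorem exists_randomSubtree_of_insensitive {α β : Type} [Finite α] [Nonempty α] {π : α → β}
    {σ : β → α} (hπσ : Function.LeftInverse π σ) (h : ∀ m δ, 0 < δ → DensityCS β m δ) (M : ℕ)
    {b : ℝ} (hb : 0 < b) :
    ∃ N : ℕ, ∀ (Ω : Type) [Fintype Ω] (μ : Ω → ℝ≥0) (f : List α → Ω → ℝ) (G : List α → Set Ω),
      0 < mass μ .univ → (∀ t ω, |f t ω| ≤ 1) → G.FactorsThrough (List.map π) →
      (∀ t, t.length ≤ N → 4 * b * mass μ .univ ≤ weightedSum μ ((G t).indicator (f t))) →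
      ∃ R : RandomSubtree α μ, ∀ t, t.length ≤ M →
        b * mass R.weight .univ ≤ weightedSum R.weight (R.pullback f t) := by
  have := Fintype.ofFinite α
  have : Finite β := Finite.of_injective σ hπσ.injective
  obtain ⟨ρ, q, hq0, -, hq⟩ :=
    DensityCS.exists_mass_subtreeEvent_ge (m := M) (mul_pos two_pos hb) (h M _ (by positivity))
  obtain ⟨n, hn⟩ := exists_insensitive_positions π ρ (mul_pos hb hq0)
  refine ⟨n, fun Ω _ μ f G hμ hf hG hfG => ?_⟩
  obtain ⟨p, P, hsorted, hlen, -, hP⟩ := hn μ (n := n) Finset.univ (by simp) f hf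
  set E := fun y : List β => retractEvent π f G (p :: P) (2 * b) (y.map σ)
  have hμ' : 0 < mass (withWord α n μ) .univ := by
    rw [mass_comp_fst]
    positivity
  obtain ⟨V, hV, hVlen, hVmass⟩ := hq _ (withWord α n μ) E hμ' fun y hy =>
    le_mass_retractEvent hG (by positivity) hf
      (fun t ht => (by ring : _ = _).trans_le (hfG t ht))
      (by simpa [hlen, Nat.lt_succ_iff] using hy)
  obtain ⟨T, -, hT⟩ := hV.exists_template M
  set U := subtreeEvent E V M
  have hU : Function.FactorsThrough (· ∈ U) (collapse π) := fun z z' hz =>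
    propext <| forall₂_congr fun y _ =>
      iff_of_eq (factorsThrough_mem_retractEvent hG f (p :: P) (2 * b) ((V y).map σ) hz)
  have hUmass : mass (U.indicator (withWord α n μ)) .univ = mass (withWord α n μ) U := by
    rw [mass_indicator, Set.inter_univ]
  refine ⟨{
    Idx := Ω × (Fin n → α)
    weight := U.indicator (withWord α n μ)
    base := Prod.fst
    map z y := overwrite (p :: P) z.2 ((T.map σ).eval y)
    mass_pos := by rw [hUmass]; exact (mul_pos hq0 hμ').trans_le hVmass
    base_pos z hz := hz.trans_le (Set.indicator_le_self' (fun _ _ => zero_le) z)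
    isCSMap_map z := (isCSMap_overwrite hsorted z.2).comp (IsCSMap.eval _) }, fun y hy => ?_⟩
  have hy' : (y.map π).length ≤ M := by simpa using hy
  have hmap : ((V (y.map π)).map σ).map π = ((T.map σ).eval y).map π := by
    rw [T.map_eval_map hπσ, List.map_map, hπσ.comp_eq_id, List.map_id, hT _ hy']
  have key := le_weightedSum_noisy_of_subset_retractEvent (fun z (hz : z ∈ U) => hz _ hy') hU
    (hP _ _ (by simpa using hVlen _ hy') hmap _ (isTest_indicator_one p hU))
  change b * mass (U.indicator (withWord α n μ)) .univ ≤
    weightedSum (U.indicator (withWord α n μ)) (noisy f (p :: P) ((T.map σ).eval y))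
  linarith [mul_le_mul_of_nonneg_left (hVmass.trans_eq hUmass.symm) hb.le]

theorem exists_randomSubtree_of_iInter_insensitive {α : Type} [Finite α]
    (h : ∀ m δ, 0 < δ → DensityCS α m δ) (J : Finset α) (M : ℕ) {b : ℝ} (hb : 0 < b) :
    ∃ N : ℕ, ∀ (Ω : Type) [Fintype Ω] (μ : Ω → ℝ≥0) (f : List (Option α) → Ω → ℝ)
      (G : α → List (Option α) → Set Ω), 0 < mass μ .univ → (∀ t ω, |f t ω| ≤ 1) →
      (∀ j, (G j).FactorsThrough (List.map fun o => o.getD j)) →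
      (∀ t, t.length ≤ N → b * mass μ .univ ≤ weightedSum μ ((⋂ j ∈ J, G j t).indicator (f t))) →
      ∃ R : RandomSubtree (Option α) μ, ∀ t, t.length ≤ M →
        0 ≤ weightedSum R.weight (R.pullback f t) := by
  classical
  induction J using Finset.induction_on generalizing M b with
  | empty =>
    refine ⟨M, fun Ω _ μ f G hμ _ _ hfG => ⟨.refl _ hμ, fun t ht => ?_⟩⟩
    have hpos := (mul_pos hb hμ).le.trans (hfG t ht)
    simp only [Finset.notMem_empty, Set.iInter_of_empty, Set.iInter_univ,
      Set.indicator_univ] at hpos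
    exact hpos
  | insert j J _ ih =>
    obtain ⟨N₂, hN₂⟩ := ih M (b := b / 4) (by positivity)
    obtain ⟨N₁, hN₁⟩ := exists_randomSubtree_of_insensitive
      (π := fun o => o.getD j) (σ := some) (fun _ => rfl) h N₂ (b := b / 4) (by positivity)
    refine ⟨N₁, fun Ω _ μ f G hμ hf hG hfG => ?_⟩
    set fJ : List (Option α) → Ω → ℝ := fun t => (⋂ i ∈ J, G i t).indicator (f t)
    have hfJ (t ω) : |fJ t ω| ≤ 1 := by
      by_cases hω : ω ∈ ⋂ i ∈ J, G i t
      · simpa only [fJ, Set.indicator_of_mem hω] using hf t ω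
      · simp [fJ, Set.indicator_of_notMem hω]
    have hfJG (t) (ht : t.length ≤ N₁) :
        4 * (b / 4) * mass μ .univ ≤ weightedSum μ ((G j t).indicator (fJ t)) := by
      rw [Set.indicator_indicator, ← Finset.set_biInter_insert j J (G · t),
        mul_div_cancel₀ _ four_ne_zero]
      exact hfG t ht
    obtain ⟨R, hR⟩ := hN₁ Ω μ fJ (G j) hμ hfJ (hG j) hfJG
    obtain ⟨S, hS⟩ := hN₂ R.Idx R.weight (R.pullback f)
      (fun i t => {x | R.base x ∈ G i (R.map x t)}) R.mass_pos (fun _ _ => hf _ _)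
      (fun i t t' e => Set.ext fun x => iff_of_eq <|
        congrArg (R.base x ∈ ·) (hG i ((R.isCSMap_map x).map_eq_map _ e)))
      fun t ht => (hR t ht).trans_eq <| congrArg _ <| funext fun x => by
        simp only [RandomSubtree.pullback, fJ, Set.indicator_apply, Set.mem_iInter,
          Set.mem_ofPred_eq]
    exact ⟨R.trans S, hS⟩

section CompactSemigroups

variable {M : Type*} [Semigroup M] [TopologicalSpace M] [CompactSpace M] [T2Space M]

theorem exists_minimal_isIdempotentElem [Nonempty M] (hc : ∀ r : M, Continuous (· * r)) :
    ∃ e : M, IsIdempotentElem e ∧ ∀ p, IsIdempotentElem p → e * p = p → p * e = p → p = e := by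
  let IsLeftIdeal (N : Set M) : Prop := IsClosed N ∧ N.Nonempty ∧ ∀ m, ∀ n ∈ N, m * n ∈ N
  obtain ⟨N, hN⟩ : ∃ N, Minimal IsLeftIdeal N := by
    refine zorn_superset {N | IsLeftIdeal N} fun c hc hchain =>
      ⟨⋂₀ c, ⟨isClosed_sInter fun t ht => (hc ht).1, ?_, fun m n hn t ht =>
        (hc ht).2.2 m n (hn t ht)⟩, fun s hs => Set.sInter_subset_of_mem hs⟩
    obtain rfl | hne := c.eq_empty_or_nonempty
    · rw [Set.sInter_empty]
      exact Set.univ_nonempty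
    · have := hne.to_subtype
      rw [Set.sInter_eq_iInter]
      exact IsCompact.nonempty_iInter_of_directed_nonempty_isCompact_isClosed _
        (DirectedOn.directed_val (IsChain.directedOn hchain.symm)) (fun t => (hc t.2).2.1)
        (fun t => (hc t.2).1.isCompact) (fun t => (hc t.2).1)
  obtain ⟨hclosed, hne, hmul⟩ := hN.prop
  obtain ⟨e, heN, he⟩ := exists_idempotent_in_compact_subsemigroup hc N hne hclosed.isCompact
    fun x _ y hy => hmul x y hy
  refine ⟨e, he, fun p hp hep hpe => ?_⟩
  have hpN : p ∈ N := hpe ▸ hmul p e heN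
  have hrange : Set.range (· * p) = N := by
    refine hN.eq_of_subset ⟨(isCompact_range (hc p)).isClosed, ⟨_, p, rfl⟩, ?_⟩ ?_
    · rintro m _ ⟨n, rfl⟩
      exact ⟨m * n, mul_assoc _ _ _⟩
    · rintro _ ⟨n, rfl⟩
      exact hmul _ _ hpN
  obtain ⟨q, rfl⟩ : e ∈ Set.range (· * p) := hrange ▸ heN
  calc p = q * p * p := hep.symm
    _ = q * p := by rw [mul_assoc, hp.eq]

theorem exists_isIdempotentElem_mem_ideal (hc : ∀ r : M, Continuous (· * r)) {A : Set M}
    (hclosed : IsClosed A) (hne : A.Nonempty) (hleft : ∀ x, ∀ y ∈ A, x * y ∈ A)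
    (hright : ∀ x ∈ A, ∀ y, x * y ∈ A) {e : M} (he : IsIdempotentElem e) :
    ∃ f ∈ A, IsIdempotentElem f ∧ f * e = f ∧ e * f = f := by
  obtain ⟨_, ⟨x, hx, rfl⟩, hg⟩ := exists_idempotent_in_compact_subsemigroup hc ((· * e) '' A)
    (hne.image _) (hclosed.isCompact.image (hc e)) (by
      rintro _ ⟨x, -, rfl⟩ _ ⟨y, hy, rfl⟩
      exact ⟨x * e * y, hleft _ _ hy, by simp only [mul_assoc]⟩)
  have hge : x * e * e = x * e := by rw [mul_assoc, he.eq]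
  refine ⟨e * (x * e), hleft _ _ (hright _ hx _), ?_, by rw [mul_assoc, hge], ?_⟩
  · calc e * (x * e) * (e * (x * e)) = e * (x * e * e * (x * e)) := by simp only [mul_assoc]
      _ = e * (x * e) := by rw [hge, hg]
  · rw [← mul_assoc, he.eq]

end CompactSemigroups

section Ultrafilters

open Filter

attribute [local instance] Ultrafilter.mul Ultrafilter.semigroup

theorem map_ultrafilter_mul {M N : Type*} [Semigroup M] [Semigroup N] (φ : M →ₙ* N)
    (U V : Ultrafilter M) : (U * V).map φ = U.map φ * V.map φ := by
  refine Ultrafilter.coe_inj.mp (Filter.ext' fun p => ?_)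
  simp only [Ultrafilter.eventually_mul, Ultrafilter.coe_map, eventually_map, map_mul]

/-- A pair consisting of an ultrafilter `e` on the words over `α` and an ultrafilter `f` on the
variable words over `α`, such that in the semigroups of ultrafilters `e` is idempotent, `f` is an
idempotent below the image of `e`, and every substitution of a letter for the variable maps `f`
to `e`. -/
structure VariableUltrafilters (α : Type*) where
  e : Ultrafilter (List α)
  f : Ultrafilter (List (Option α))
  eventually_e_append {P : List α → Prop} :
    (∀ᶠ x in e, P x) → ∀ᶠ x in e, ∀ᶠ y in e, P (x ++ y)
  eventually_f_append {P : List (Option α) → Prop} :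
    (∀ᶠ w in f, P w) → ∀ᶠ w in f, ∀ᶠ w' in f, P (w ++ w')
  eventually_append_map_some {P : List (Option α) → Prop} :
    (∀ᶠ w in f, P w) → ∀ᶠ w in f, ∀ᶠ x in e, P (w ++ List.map some x)
  eventually_map_some_append {P : List (Option α) → Prop} :
    (∀ᶠ w in f, P w) → ∀ᶠ x in e, ∀ᶠ w in f, P (List.map some x ++ w)
  eventually_none_mem : ∀ᶠ w in (f : Filter (List (Option α))), none ∈ w
  eventually_fillVar {P : List α → Prop} (a : α) : (∀ᶠ x in e, P x) → ∀ᶠ w in f, P (fillVar w a)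

theorem exists_isIdempotentElem_none_mem {α : Type*}
    {e : Ultrafilter (FreeMonoid (Option α))} (he : IsIdempotentElem e) :
    ∃ f : Ultrafilter (FreeMonoid (Option α)),
      (∀ᶠ w in (f : Filter (FreeMonoid (Option α))), none ∈ FreeMonoid.toList w) ∧
      IsIdempotentElem f ∧ f * e = f ∧ e * f = f := by
  let A : Set (Ultrafilter (FreeMonoid (Option α))) :=
    {U | {w : FreeMonoid (Option α) | none ∈ FreeMonoid.toList w} ∈ U}
  have hne : A.Nonempty :=
    ⟨pure (FreeMonoid.of none), Ultrafilter.mem_pure.mpr (List.mem_singleton.mpr rfl)⟩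
  have hleft (U V) (hV : V ∈ A) : U * V ∈ A :=
    (Ultrafilter.eventually_mul U V _).mpr <| .of_forall fun _ =>
      mem_of_superset hV fun _ => List.mem_append_right _
  have hright (U) (hU : U ∈ A) (V) : U * V ∈ A :=
    (Ultrafilter.eventually_mul U V _).mpr <|
      mem_of_superset hU fun _ hw => .of_forall fun _ => List.mem_append_left _ hw
  exact exists_isIdempotentElem_mem_ideal Ultrafilter.continuous_mul_left
    (ultrafilter_isClosed_basic _) hne hleft hright he

theorem nonempty_variableUltrafilters (α : Type*) : Nonempty (VariableUltrafilters α) := by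
  have : Nonempty (Ultrafilter (FreeMonoid α)) := ⟨pure 1⟩
  obtain ⟨e, he, hmin⟩ := exists_minimal_isIdempotentElem
    (M := Ultrafilter (FreeMonoid α)) Ultrafilter.continuous_mul_left
  let ι : FreeMonoid α →ₙ* FreeMonoid (Option α) := ⟨List.map some, fun _ _ => List.map_append⟩
  let σ (a : α) : FreeMonoid (Option α) →ₙ* FreeMonoid α :=
    ⟨fun w => fillVar w a, fun _ _ => fillVar_append _ _ a⟩
  obtain ⟨f, hnone, hff, hfe, hef⟩ := exists_isIdempotentElem_none_mem
    (show IsIdempotentElem (e.map ι) by rw [IsIdempotentElem, ← map_ultrafilter_mul, he.eq])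
  -- Substituting a letter in `f` gives an idempotent below the minimal idempotent `e`.
  have hσ (a : α) : f.map (σ a) = e := by
    have hσι : (e.map ι).map (σ a) = e := by
      rw [Ultrafilter.map_map, show σ a ∘ ι = id from funext fun x => fillVar_map_some x a,
        Ultrafilter.map_id]
    refine hmin _ ?_ ?_ ?_
    · rw [IsIdempotentElem, ← map_ultrafilter_mul, hff.eq]
    · calc e * f.map (σ a) = (e.map ι * f).map (σ a) := by rw [map_ultrafilter_mul, hσι]
        _ = f.map (σ a) := by rw [hef]
    · calc f.map (σ a) * e = (f * e.map ι).map (σ a) := by rw [map_ultrafilter_mul, hσι]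
        _ = f.map (σ a) := by rw [hfe]
  have eventually_append {β : Type _} {U V W : Ultrafilter (FreeMonoid β)} (h : U * V = W)
      {P : FreeMonoid β → Prop} (hP : ∀ᶠ x in W, P x) : ∀ᶠ x in U, ∀ᶠ y in V, P (x * y) :=
    (Ultrafilter.eventually_mul U V P).mp (h ▸ hP)
  exact ⟨{
    e := e
    f := f
    eventually_e_append := eventually_append he.eq
    eventually_f_append := eventually_append hff.eq
    eventually_append_map_some := eventually_append hfe
    eventually_map_some_append := eventually_append hef
    eventually_none_mem := hnone
    eventually_fillVar := fun a hP => by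
      rw [← hσ a] at hP
      exact hP }⟩

end Ultrafilters

section Fusion

variable {α : Type*}

/-- The letters preceding the first variable. -/
def constPrefix : List (Option α) → List α
  | [] => []
  | none :: _ => []
  | some a :: w => a :: constPrefix w

@[simp] theorem constPrefix_map_some_append_none_cons (p : List α) (r : List (Option α)) :
    constPrefix (p.map some ++ none :: r) = p := by
  induction p with
  | nil => rfl
  | cons a p ih => simp [constPrefix, ih]

theorem constPrefix_append {w : List (Option α)} (h : none ∈ w) (w' : List (Option α)) :
    constPrefix (w ++ w') = constPrefix w := by
  obtain ⟨p, r, rfl⟩ := eq_map_some_append_none_cons h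
  simp

/-- The template whose first level is the variable word `p⌢v⌢r` and which continues with `T`. -/
def Template.graft (p : List α) (r : List (Option α)) (T : Template α) : Template α :=
  ⟨p, (r ++ T.root.map some) :: T.levels⟩

@[simp] theorem Template.eval_graft_nil (p : List α) (r : List (Option α)) (T : Template α) :
    (T.graft p r).eval [] = p := by
  simp [graft, eval]

@[simp] theorem Template.eval_graft_cons (p : List α) (r : List (Option α)) (T : Template α)
    (a : α) (y : List α) :
    (T.graft p r).eval (a :: y) = fillVar (p.map some ++ none :: r) a ++ T.eval y := by
  simp [graft, eval]

/-- A set `C` of lines, a line being given by the word it branches from and its point in every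
direction `a`, contains all lines inside the first `n` levels of the tree of `T`. -/
structure IsHomogeneous (C : List α → (α → List α) → Prop) (n : ℕ) (T : Template α) : Prop where
  height_eq : T.height = n
  line : ∀ (y : List α) (z : List (Option α)), y.length + 1 + z.length ≤ n →
    C (T.eval y) fun a => T.eval (y ++ a :: fillVar z a)

/-- The state of the fusion construction of a homogeneous tree: `T` extends every word in `R` to
a homogeneous tree, and it extends every pair `(r, s)` in `Q`, which stands for the unfinished
line branching from `r` with points `s(a)`, to lines in `C` only. -/
structure IsFused (C : List α → (α → List α) → Prop) (n : ℕ) (R : Set (List α))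
    (Q : Set (List α × List (Option α))) (T : Template α) : Prop where
  height_eq : T.height = n
  line : ∀ q ∈ Q, ∀ z : List (Option α), z.length ≤ n →
    C q.1 fun a => fillVar q.2 a ++ T.eval (fillVar z a)
  root : ∀ x ∈ R, ∀ (y : List α) (z : List (Option α)), y.length + 1 + z.length ≤ n →
    C (x ++ T.eval y) fun a => x ++ T.eval (y ++ a :: fillVar z a)

theorem isFused_zero {C : List α → (α → List α) → Prop} {R : Set (List α)}
    {Q : Set (List α × List (Option α))} {p : List α}
    (h : ∀ q ∈ Q, C q.1 fun a => fillVar q.2 a ++ p) : IsFused C 0 R Q ⟨p, []⟩ where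
  height_eq := rfl
  line q hq z hz := by
    obtain rfl := List.length_eq_zero_iff.mp (Nat.le_zero.mp hz)
    simpa [Template.eval] using h q hq
  root := by lia

theorem IsFused.graft {C : List α → (α → List α) → Prop} {n : ℕ} {R : Set (List α)}
    {Q : Set (List α × List (Option α))} {T : Template α} {p : List α} {r w : List (Option α)}
    (hw : w = p.map some ++ none :: r)
    (h : IsFused C n (Set.image2 (fun x a => x ++ fillVar w a) R .univ)
      (((fun q => (q.1, q.2 ++ w)) '' Q ∪
        Set.image2 (fun q a => (q.1, q.2 ++ (fillVar w a).map some)) Q .univ) ∪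
        (fun x => (x ++ p, x.map some ++ w)) '' R) T)
    (hC : ∀ q ∈ Q, C q.1 fun a => fillVar q.2 a ++ p) :
    IsFused C (n + 1) R Q (T.graft p r) where
  height_eq := by simpa [Template.height, Template.graft] using h.height_eq
  line q hq z hz := by
    match z with
    | [] => simpa using hC q hq
    | none :: z =>
      have := h.line _ (.inl (.inl ⟨q, hq, rfl⟩)) z (by simpa using hz)
      simpa [hw] using this
    | some a :: z =>
      have := h.line _ (.inl (.inr ⟨q, hq, a, trivial, rfl⟩)) z (by simpa using hz)
      simpa only [fillVar_append, fillVar_map_some, fillVar_cons_some, List.append_assoc,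
        Template.eval_graft_cons, ← hw] using this
  root x hx y z hyz := by
    match y with
    | [] =>
      have := h.line _ (.inr ⟨x, hx, rfl⟩) z (by simp at hyz; lia)
      simpa [hw] using this
    | a :: y =>
      have := h.root _ ⟨x, hx, a, trivial, rfl⟩ y z (by simp at hyz; lia)
      simpa [hw] using this

namespace VariableUltrafilters

variable (V : VariableUltrafilters α) (C : List α → (α → List α) → Prop)

/-- The line branching from `r` with points `s(a)` lies in `C` after being prolonged by the letters
preceding the first variable of a generic variable word. -/
def LineMem (r : List α) (s : List (Option α)) : Prop :=
  ∀ᶠ w in V.f, C r fun a => fillVar s a ++ constPrefix w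

/-- `LineMem` holds for the line itself and for its generic prolongations. -/
structure GoodLine (r : List α) (s : List (Option α)) : Prop where
  mem : V.LineMem C r s
  append_f : ∀ᶠ w in V.f, V.LineMem C r (s ++ w)
  append_e : ∀ᶠ x in V.e, V.LineMem C r (s ++ List.map some x)

/-- A generic line above `x` lies in `C`. -/
def RootMem (x : List α) : Prop :=
  ∀ᶠ w in V.f, V.LineMem C (x ++ constPrefix w) (x.map some ++ w)

/-- `RootMem` holds for the word itself and for its generic extensions. -/
structure GoodRoot (x : List α) : Prop where
  mem : V.RootMem C x
  append_e : ∀ᶠ y in V.e, V.RootMem C (x ++ y)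

variable {V C} {r x : List α} {s : List (Option α)}

theorem RootMem.eventually_goodLine (h : V.RootMem C x) :
    ∀ᶠ w in V.f, V.GoodLine C (x ++ constPrefix w) (x.map some ++ w) := by
  filter_upwards [h, V.eventually_f_append h, V.eventually_append_map_some h,
    V.eventually_none_mem] with w hw hwf hwe hnone
  simp only [constPrefix_append hnone, ← List.append_assoc] at hwf hwe
  exact ⟨hw, hwf, hwe⟩

theorem GoodLine.eventually_append_f (h : V.GoodLine C r s) :
    ∀ᶠ w in V.f, V.GoodLine C r (s ++ w) := by
  filter_upwards [h.append_f, V.eventually_f_append h.append_f,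
    V.eventually_append_map_some h.append_f] with w hw hwf hwe
  simp only [← List.append_assoc] at hwf hwe
  exact ⟨hw, hwf, hwe⟩

theorem GoodLine.eventually_append_e (h : V.GoodLine C r s) :
    ∀ᶠ x in V.e, V.GoodLine C r (s ++ List.map some x) := by
  filter_upwards [h.append_e, V.eventually_map_some_append h.append_f,
    V.eventually_e_append h.append_e] with x hx hxf hxe
  simp only [List.map_append, ← List.append_assoc] at hxf hxe
  exact ⟨hx, hxf, hxe⟩

theorem GoodRoot.eventually_append_e (h : V.GoodRoot C x) :
    ∀ᶠ y in V.e, V.GoodRoot C (x ++ y) := by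
  filter_upwards [h.append_e, V.eventually_e_append h.append_e] with y hy hye
  simp only [← List.append_assoc] at hye
  exact ⟨hy, hye⟩

theorem exists_isFused [Finite α] (n : ℕ) {R : Set (List α)} {Q : Set (List α × List (Option α))}
    (hR : R.Finite) (hQ : Q.Finite) (hRgood : ∀ x ∈ R, V.GoodRoot C x)
    (hQgood : ∀ q ∈ Q, V.GoodLine C q.1 q.2) : ∃ T, IsFused C n R Q T := by
  induction n generalizing R Q with
  | zero =>
    obtain ⟨w, hw⟩ := ((Filter.eventually_all_finite hQ).mpr fun q hq => (hQgood q hq).mem).exists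
    exact ⟨_, isFused_zero hw⟩
  | succ n ih =>
    have hC : ∀ᶠ w in V.f, ∀ q ∈ Q, C q.1 fun a => fillVar q.2 a ++ constPrefix w :=
      (Filter.eventually_all_finite hQ).mpr fun q hq => (hQgood q hq).mem
    have hQf : ∀ᶠ w in V.f, ∀ q ∈ Q, V.GoodLine C q.1 (q.2 ++ w) :=
      (Filter.eventually_all_finite hQ).mpr fun q hq => (hQgood q hq).eventually_append_f
    have hQe : ∀ᶠ w in V.f, ∀ q ∈ Q, ∀ a, V.GoodLine C q.1 (q.2 ++ (fillVar w a).map some) :=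
      (Filter.eventually_all_finite hQ).mpr fun q hq => Filter.eventually_all.mpr fun a =>
        V.eventually_fillVar a (hQgood q hq).eventually_append_e
    have hRline : ∀ᶠ w in V.f, ∀ x ∈ R, V.GoodLine C (x ++ constPrefix w) (x.map some ++ w) :=
      (Filter.eventually_all_finite hR).mpr fun x hx => (hRgood x hx).mem.eventually_goodLine
    have hRroot : ∀ᶠ w in V.f, ∀ x ∈ R, ∀ a, V.GoodRoot C (x ++ fillVar w a) :=
      (Filter.eventually_all_finite hR).mpr fun x hx => Filter.eventually_all.mpr fun a =>
        V.eventually_fillVar a (hRgood x hx).eventually_append_e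
    obtain ⟨w, hC, hQf, hQe, hRline, hRroot, hnone⟩ :=
      (hC.and (hQf.and (hQe.and (hRline.and (hRroot.and V.eventually_none_mem))))).exists
    obtain ⟨p, r, hw⟩ := eq_map_some_append_none_cons hnone
    have hp : constPrefix w = p := by simp [hw]
    rw [hp] at hC hRline
    obtain ⟨T, hT⟩ := ih (Q := ((fun q => (q.1, q.2 ++ w)) '' Q ∪
        Set.image2 (fun q a => (q.1, q.2 ++ (fillVar w a).map some)) Q .univ) ∪
        (fun x => (x ++ p, x.map some ++ w)) '' R) (hR.image2 _ Set.finite_univ)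
      (((hQ.image _).union (hQ.image2 _ Set.finite_univ)).union (hR.image _))
      (Set.forall_mem_image2.mpr fun x hx a _ => hRroot x hx a) (by
        rintro _ ((⟨q, hq, rfl⟩ | ⟨q, hq, a, -, rfl⟩) | ⟨x, hx, rfl⟩)
        exacts [hQf q hq, hQe q hq a, hRline x hx])
    exact ⟨_, hT.graft hw hC⟩

theorem exists_isHomogeneous [Finite α] (h : ∀ᶠ x in V.e, V.RootMem C x) (n : ℕ) :
    ∃ T, IsHomogeneous C n T := by
  obtain ⟨x, hx, hxe⟩ := (h.and (V.eventually_e_append h)).exists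
  obtain ⟨T, hT⟩ := exists_isFused n (Set.finite_singleton x) Set.finite_empty
    (by rintro _ rfl; exact ⟨hx, hxe⟩) (by simp)
  exact ⟨⟨x ++ T.root, T.levels⟩, hT.height_eq, fun y z hyz => by
    simpa [Template.eval] using hT.root x rfl y z hyz⟩

end VariableUltrafilters

end Fusion

section Coloring

variable {α : Type*}

/-- The infinitary Carlson–Simpson theorem for colourings of lines. -/
theorem forall_exists_isHomogeneous_or_not [Finite α] (C : List α → (α → List α) → Prop) :
    (∀ n, ∃ T, IsHomogeneous C n T) ∨ ∀ n, ∃ T, IsHomogeneous (fun r h => ¬ C r h) n T := by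
  obtain ⟨V⟩ := nonempty_variableUltrafilters α
  refine (em (∀ᶠ x in V.e, V.RootMem C x)).imp V.exists_isHomogeneous fun h =>
    V.exists_isHomogeneous ?_
  simpa only [VariableUltrafilters.RootMem, VariableUltrafilters.LineMem,
    Ultrafilter.eventually_not] using h

theorem IsHomogeneous.eventually [Finite α] {ι : Type*} {l : Filter ι}
    {D : ι → List α → (α → List α) → Prop} {n : ℕ} {T : Template α}
    (h : IsHomogeneous (fun r h => ∀ᶠ i in l, D i r h) n T) :
    ∀ᶠ i in l, IsHomogeneous (D i) n T := by
  have hfin : {q : List α × List (Option α) | q.1.length + 1 + q.2.length ≤ n}.Finite :=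
    ((List.finite_length_le α n).prod (List.finite_length_le (Option α) n)).subset fun q hq => by
      simp only [Set.mem_ofPred_eq, Set.mem_prod] at hq ⊢
      lia
  filter_upwards [(Filter.eventually_all_finite hfin).mpr fun q hq => h.line q.1 q.2 hq] with i hi
  exact ⟨h.height_eq, fun y z hyz => hi (y, z) hyz⟩

theorem exists_isHomogeneous_or_not_size_le (α : Type*) [Finite α] (m n : ℕ) :
    ∃ N : ℕ, ∀ C : List α → (α → List α) → Prop, (∃ T, IsHomogeneous C m T ∧ T.size ≤ N) ∨
      ∃ T, IsHomogeneous (fun r h => ¬ C r h) n T ∧ T.size ≤ N := by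
  by_contra! hcon
  choose D hD hD' using hcon
  -- A limit of counterexamples along a nonprincipal ultrafilter violates the infinitary form.
  let l := Filter.hyperfilter ℕ
  have hl (k : ℕ) : ∀ᶠ N in (l : Filter ℕ), k ≤ N :=
    (Nat.cofinite_eq_atTop ▸ Filter.hyperfilter_le_cofinite) (Filter.eventually_ge_atTop k)
  rcases forall_exists_isHomogeneous_or_not fun r h => ∀ᶠ N in (l : Filter ℕ), D N r h with h | h
  · obtain ⟨T, hT⟩ := h m
    obtain ⟨N, hTN, hN⟩ := (hT.eventually.and (hl T.size)).exists
    exact (hD N T hTN).not_ge hN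
  · obtain ⟨T, hT⟩ := h n
    simp only [← Ultrafilter.eventually_not] at hT
    obtain ⟨N, hTN, hN⟩ := (hT.eventually.and (hl T.size)).exists
    exact (hD' N T hTN).not_ge hN

end Coloring

section Correlation

variable {Z κ : Type*} [Fintype Z] [Fintype κ] {ν : Z → ℝ≥0}

theorem mass_inter_add_mass_compl_inter (ν : Z → ℝ≥0) (X Y : Set Z) :
    mass ν (X ∩ Y) + mass ν (Xᶜ ∩ Y) = mass ν Y := by
  classical
  rw [mass, mass, mass, ← map_add]
  congr 1
  ext z
  by_cases hz : z ∈ X <;> simp [Set.indicator_apply, hz]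

theorem weightedSum_indicator_one_sub_const (ν : Z → ℝ≥0) (X : Set Z) (θ : ℝ) :
    weightedSum ν (X.indicator 1 - fun _ => θ) = mass ν X - θ * mass ν .univ := by
  rw [map_sub, weightedSum_const]
  rfl

theorem sum_weightedSum_indicator_fiber (ν : Z → ℝ≥0) (c : Z → κ) (f : Z → ℝ) :
    ∑ k, weightedSum ν ((c ⁻¹' {k}).indicator f) = weightedSum ν f := by
  classical
  rw [← map_sum]
  congr 1
  ext z
  simp [Set.indicator_apply]

/-- If `X₁` has density at least `δ - γ`, at most `δ + 2 * γ` outside `X₀`, and is disjoint from a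
large cell `k₀` of `X₀`, then the other cells of `X₀` must compensate for the loss in `k₀`. -/
theorem exists_fiber_correlation {c : Z → κ} {k₀ : κ} {X₀ X₁ : Set Z} {δ β γ : ℝ}
    (hγ : 0 < γ) (hβ : 0 ≤ β) (hγδ : 8 * γ ≤ δ * β) (hν : 0 < mass ν .univ)
    (hX₁ : (δ - γ) * mass ν .univ ≤ mass ν X₁)
    (hout : mass ν (X₀ᶜ ∩ X₁) ≤ (δ + 2 * γ) * mass ν X₀ᶜ)
    (hcell : β * mass ν .univ ≤ mass ν (X₀ ∩ c ⁻¹' {k₀}))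
    (hdisj : ∀ z, 0 < ν z → z ∈ X₀ → c z = k₀ → z ∉ X₁) :
    ∃ k, 4 * γ / Fintype.card κ * mass ν .univ ≤ weightedSum (X₀.indicator ν)
      ((c ⁻¹' {k}).indicator (X₁.indicator 1 - fun _ => δ + γ)) := by
  classical
  by_contra! hlt
  have hδγ : 0 < δ + γ := by nlinarith
  set W := mass ν .univ
  have hk₀ : weightedSum (X₀.indicator ν)
      ((c ⁻¹' {k₀}).indicator (X₁.indicator 1 - fun _ => δ + γ)) ≤ -(8 * γ * W) :=
    calc weightedSum (X₀.indicator ν) ((c ⁻¹' {k₀}).indicator (X₁.indicator 1 - fun _ => δ + γ))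
        ≤ weightedSum ν (-(δ + γ) • (X₀ ∩ c ⁻¹' {k₀}).indicator 1) := by
          rw [weightedSum_indicator, Set.indicator_indicator]
          refine weightedSum_mono fun z hz => ?_
          by_cases hmem : z ∈ X₀ ∩ c ⁻¹' {k₀}
          · simp [hmem, hdisj z hz hmem.1 hmem.2]
          · simp [hmem]
      _ = -((δ + γ) * mass ν (X₀ ∩ c ⁻¹' {k₀})) := by
          rw [map_smul, smul_eq_mul, neg_mul, mass]
      _ ≤ -(8 * γ * W) := by
          have := mul_le_mul_of_nonneg_left hcell hδγ.le
          nlinarith [mul_nonneg (mul_nonneg hγ.le hβ) hν.le, mul_le_mul_of_nonneg_right hγδ hν.le]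
  have hupper : ∑ k, weightedSum (X₀.indicator ν)
      ((c ⁻¹' {k}).indicator (X₁.indicator 1 - fun _ => δ + γ)) ≤ 4 * γ * W - 8 * γ * W := by
    have : (0 : ℝ) < Fintype.card κ := by exact_mod_cast Fintype.card_pos_iff.mpr ⟨k₀⟩
    have hterm (k : κ) : weightedSum (X₀.indicator ν)
        ((c ⁻¹' {k}).indicator (X₁.indicator 1 - fun _ => δ + γ)) ≤
          4 * γ / Fintype.card κ * W - if k = k₀ then 8 * γ * W else 0 := by
      have : 0 ≤ 4 * γ / Fintype.card κ * W := by positivity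
      split_ifs with hk
      · subst hk
        linarith
      · linarith [hlt k]
    refine (Finset.sum_le_sum fun k _ => hterm k).trans_eq ?_
    rw [Finset.sum_sub_distrib, Finset.sum_ite_eq' Finset.univ k₀, if_pos (Finset.mem_univ k₀)]
    simp only [Finset.sum_const, Finset.card_univ, nsmul_eq_mul]
    field_simp
  rw [sum_weightedSum_indicator_fiber, weightedSum_indicator_one_sub_const, mass_indicator,
    mass_indicator, Set.inter_univ] at hupper
  have hsplit := mass_inter_add_mass_compl_inter ν X₀ X₁
  have hsplit' := mass_inter_add_mass_compl_inter ν X₀ .univ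
  rw [Set.inter_univ, Set.inter_univ] at hsplit'
  nlinarith [mul_le_mul_of_nonneg_left (mass_le_univ ν X₀ᶜ) hγ.le, mul_pos hγ hν]

end Correlation

section CorrelatedLevels

variable {α : Type} [Fintype α]

theorem exists_randomSubtree_of_correlated_levels (hα : ∀ m δ, 0 < δ → DensityCS α m δ) (M : ℕ)
    {b : ℝ} (hb : 0 < b) :
    ∃ m₀ : ℕ, ∀ (Ω : Type) [Fintype Ω] (μ : Ω → ℝ≥0) (f : List (Option α) → Ω → ℝ)
      (G : α → List (Option α) → Set Ω) (n : ℕ) (C : Finset (Fin n)), 0 < mass μ .univ →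
      m₀ ≤ C.card → (∀ t ω, |f t ω| ≤ 1) →
      (∀ j, (G j).FactorsThrough (List.map fun o => o.getD j)) →
      (∀ l ∈ C, b * mass (withWord (Option α) n μ) .univ ≤ weightedSum (withWord (Option α) n μ)
        fun z => (⋂ j, G j ((List.ofFn z.2).take l)).indicator (f ((List.ofFn z.2).take l)) z.1) →
      ∃ R : RandomSubtree (Option α) μ, ∀ t, t.length ≤ M →
        0 ≤ weightedSum R.weight (R.pullback f t) := by
  classical
  obtain ⟨ρ, hρ⟩ := exists_randomSubtree_of_iInter_insensitive hα Finset.univ M (half_pos hb)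
  obtain ⟨m₀, hm₀⟩ := exists_positions_le_noisy (α := Option α) ρ (half_pos hb)
  refine ⟨m₀, fun Ω _ μ f G n C hμ hC hf hG hcorr => ?_⟩
  obtain ⟨P, hsorted, -, hP⟩ := hm₀ μ C hC (fun t => (⋂ j, G j t).indicator (f t))
    (fun t ω => by by_cases hω : ω ∈ ⋂ j, G j t <;> simp [hω, hf]) b hcorr
  obtain ⟨R, hR⟩ := hρ (Ω × (Fin n → Option α)) (withWord (Option α) n μ)
    (fun y z => f (overwrite P z.2 y) z.1) (fun j y => {z | z.1 ∈ G j (overwrite P z.2 y)})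
    (by rw [mass_comp_fst]; positivity) (fun y z => hf _ _)
    (fun j y y' hyy => Set.ext fun z => iff_of_eq <| congrArg (z.1 ∈ ·) <|
      hG j ((isCSMap_overwrite hsorted z.2).map_eq_map _ hyy))
    fun y hy => by
      rw [← sub_half b]
      refine (hP y hy).trans_eq (congrArg _ (funext fun z => ?_))
      simp only [noisy, Set.indicator_apply, Set.mem_iInter, Finset.mem_univ, true_imp_iff,
        Set.mem_ofPred_eq]
  exact ⟨{ Idx := R.Idx
           weight := R.weight
           base := fun i => (R.base i).1
           map := fun i t => overwrite P (R.base i).2 (R.map i t)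
           mass_pos := R.mass_pos
           base_pos := R.base_pos
           isCSMap_map := fun i => (isCSMap_overwrite hsorted _).comp (R.isCSMap_map i) }, hR⟩

theorem DensityCS.exists_of_correlated_levels {m : ℕ} {θ b : ℝ} (h : DensityCS (Option α) m θ)
    (hα : ∀ m δ, 0 < δ → DensityCS α m δ) (hb : 0 < b) :
    ∃ m₀ : ℕ, ∀ (Ω : Type) [Fintype Ω] (μ : Ω → ℝ≥0) (Y : List (Option α) → Set Ω)
      (G : α → List (Option α) → Set Ω) (n : ℕ) (C : Finset (Fin n)), 0 < mass μ .univ →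
      m₀ ≤ C.card → (∀ j, (G j).FactorsThrough (List.map fun o => o.getD j)) →
      (∀ l ∈ C, b * mass (withWord (Option α) n μ) .univ ≤ weightedSum (withWord (Option α) n μ)
        fun z => (⋂ j, G j ((List.ofFn z.2).take l)).indicator
          ((Y ((List.ofFn z.2).take l)).indicator 1 - fun _ => θ) z.1) →
      ∃ φ, IsCSMap φ ∧ ∃ ω ∈ subtreeEvent Y φ m, 0 < μ ω := by
  obtain ⟨N, hN⟩ := h
  set s : ℝ := (1 + |θ|)⁻¹
  have hs : 0 < s := by positivity
  obtain ⟨m₀, hm₀⟩ := exists_randomSubtree_of_correlated_levels hα N (mul_pos hs hb)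
  refine ⟨m₀, fun Ω _ μ Y G n C hμ hC hG hcorr => ?_⟩
  have hbound (t : List (Option α)) (ω : Ω) :
      |(s • ((Y t).indicator 1 - fun _ => θ) : Ω → ℝ) ω| ≤ 1 :=
    calc |(s • ((Y t).indicator 1 - fun _ => θ) : Ω → ℝ) ω|
        = s * |(Y t).indicator 1 ω - θ| := by simp [abs_mul, abs_of_pos hs]
      _ ≤ s * (1 + |θ|) := by
          have hY : |(Y t).indicator (1 : Ω → ℝ) ω| ≤ 1 := by by_cases hω : ω ∈ Y t <;> simp [hω]
          gcongr
          exact (abs_sub _ _).trans (by gcongr)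
      _ = 1 := inv_mul_cancel₀ (by positivity)
  obtain ⟨R, hR⟩ := hm₀ Ω μ (fun t => s • ((Y t).indicator 1 - fun _ => θ)) G n C hμ hC hbound hG
    fun l hl => by
      rw [mul_assoc]
      refine (mul_le_mul_of_nonneg_left (hcorr l hl) hs.le).trans_eq ?_
      rw [← smul_eq_mul, ← map_smul]
      exact congrArg _ (funext fun z => (Set.indicator_const_smul_apply _ s _ z.1).symm)
  obtain ⟨ψ, hψ, i, hi, hpos⟩ := hN R.Idx R.weight (fun t => {i | R.base i ∈ Y (R.map i t)})
    R.mass_pos fun t ht => by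
      have hnonneg : 0 ≤ weightedSum R.weight
        (s • (Set.indicator {i | R.base i ∈ Y (R.map i t)} 1 - fun _ => θ)) := hR t ht
      rw [map_smul, weightedSum_indicator_one_sub_const] at hnonneg
      exact sub_nonneg.mp (nonneg_of_mul_nonneg_right hnonneg hs)
  exact ⟨_, (R.isCSMap_map i).comp hψ, R.base i, hi, R.base_pos i hpos⟩

end CorrelatedLevels

section Lines

variable {α Ω : Type} {X : List (Option α) → Set Ω} {μ : Ω → ℝ≥0}

/-- The set of letters `j` of the old alphabet such that `ω` lies in the event attached to the
point `j` of the line `none :: t`. -/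
def linePattern (X : List (Option α) → Set Ω) (t : List (Option α)) (ω : Ω) : Set α :=
  {j | ω ∈ X (some j :: (fillVar t j).map some)}

theorem exists_isCSMap_of_linePattern_eq_univ {t : List (Option α)} {ω : Ω} (hroot : ω ∈ X [])
    (hnone : ω ∈ X (none :: t)) (hsome : linePattern X t ω = .univ) :
    ∃ φ, IsCSMap φ ∧ ω ∈ subtreeEvent X φ 1 := by
  refine ⟨_, IsCSMap.evalLevels [t.map (Option.map some)], fun y hy => ?_⟩
  match y, hy with
  | [], _ => simpa only [evalLevels_nil_right] using hroot
  | [none], _ =>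
    have ht : fillVar (t.map (Option.map some)) none = t := by
      rw [fillVar, List.map_map]
      exact (List.map_congr_left fun o _ => by cases o <;> rfl).trans t.map_id
    simpa [ht] using hnone
  | [some j], _ =>
    have ht : fillVar (t.map (Option.map some)) (some j) = (fillVar t j).map some := by
      simp only [fillVar, List.map_map]
      exact List.map_congr_left fun o _ => by cases o <;> rfl
    have hj : ω ∈ X (some j :: (fillVar t j).map some) := Set.eq_univ_iff_forall.mp hsome j
    simpa [ht] using hj
  | _ :: _ :: _, hy => simp at hy

end Lines

section Levels

variable {α Ω : Type} [Fintype α] [Fintype Ω] {μ : Ω → ℝ≥0} {n : ℕ}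

theorem mul_mass_withWord_le {X : List α → Set Ω} {c : ℝ}
    (h : ∀ t, t.length ≤ n → c * mass μ .univ ≤ mass μ (X t)) (l : Fin n) :
    c * mass (withWord α n μ) .univ ≤
      mass (withWord α n μ) {z | z.1 ∈ X ((List.ofFn z.2).take l)} := by
  calc c * mass (withWord α n μ) .univ = ∑ _s : Fin n → α, c * mass μ .univ := by
        rw [mass_comp_fst]
        simp [mul_left_comm]
    _ ≤ ∑ s : Fin n → α, mass μ (X ((List.ofFn s).take l)) :=
        Finset.sum_le_sum fun s _ => h _ (by simp)
    _ = mass (withWord α n μ) {z | z.1 ∈ X ((List.ofFn z.2).take l)} := by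
        simp only [mass, weightedSum_apply, Fintype.sum_prod_type_right]
        rfl

theorem DensityCS.exists_sparse_levels [Nonempty α] {m : ℕ} {d γ : ℝ} (h : DensityCS α m d)
    (hγ : 0 < γ) :
    ∃ m₀ : ℕ, ∀ (Ω : Type) [Fintype Ω] (μ : Ω → ℝ≥0) (X : List α → Set Ω) (n : ℕ),
      (∀ φ, IsCSMap φ → ∀ ω ∈ subtreeEvent X φ m, μ ω = 0) →
      ∃ C : Finset (Fin n), n ≤ C.card + m₀ ∧ ∀ l ∈ C,
        mass (withWord α n μ) {z | z.1 ∈ X ((List.ofFn z.2).take l)} ≤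
          (d + γ) * mass (withWord α n μ) .univ := by
  classical
  obtain ⟨m₀, hm₀⟩ := h.exists_of_dense_levels hγ
  refine ⟨m₀, fun Ω _ μ X n hX => ?_⟩
  rcases (mass_nonneg μ .univ).eq_or_lt with hzero | hpos
  · refine ⟨.univ, by simp, fun l _ => (mass_le_univ _ _).trans_eq ?_⟩
    rw [mass_comp_fst, ← hzero, mul_zero, mul_zero]
  · let C : Finset (Fin n) := {l | mass (withWord α n μ) {z | z.1 ∈ X ((List.ofFn z.2).take l)} ≤
      (d + γ) * mass (withWord α n μ) .univ}
    refine ⟨C, ?_, fun l hl => (Finset.mem_filter.mp hl).2⟩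
    by_contra! hcard
    have hcompl : m₀ ≤ Cᶜ.card := by
      rw [Finset.card_compl, Fintype.card_fin]
      omega
    obtain ⟨φ, hφ, ω, hω, hμω⟩ := hm₀ Ω μ X n Cᶜ hpos hcompl fun l hl => by
      simpa [C] using (not_le.mp fun hle => Finset.mem_compl.mp hl (by simpa [C] using hle)).le
    exact hμω.ne' (hX φ hφ ω hω)

end Levels

section LinePatternCorrelation

variable {α : Type} [Fintype α]

theorem exists_linePattern_correlation {Ω : Type} [Fintype Ω] {μ : Ω → ℝ≥0}
    {X : List (Option α) → Set Ω} {δ β γ : ℝ} {n : ℕ} {l : Fin n} (hγ : 0 < γ) (hβ : 0 ≤ β)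
    (hγδ : 8 * γ ≤ δ * β) (hμ : 0 < mass μ .univ)
    (hX : ¬ ∃ φ, IsCSMap φ ∧ ∃ ω ∈ subtreeEvent X φ 1, 0 < μ ω)
    (hnone : ∀ t, t.length ≤ n → (δ - γ) * mass μ .univ ≤ mass μ (X (none :: t)))
    (hline : ∀ t, t.length ≤ n →
      β * mass μ .univ ≤ mass μ {ω ∈ X [] | linePattern X t ω = .univ})
    (hout : mass (withWord (Option α) n ((X [])ᶜ.indicator μ))
      {z | z.1 ∈ X (none :: (List.ofFn z.2).take l)} ≤
        (δ + 2 * γ) * mass (withWord (Option α) n ((X [])ᶜ.indicator μ)) .univ) :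
    ∃ B, 4 * γ / Fintype.card (Set α) *
        mass (withWord (Option α) n ((X []).indicator μ)) .univ ≤
      weightedSum (withWord (Option α) n ((X []).indicator μ)) fun z =>
        {ω | linePattern X ((List.ofFn z.2).take l) ω = B}.indicator
          ((X (none :: (List.ofFn z.2).take l)).indicator 1 - fun _ => δ + γ) z.1 := by
  have hcond (Y : Set Ω) : withWord (Option α) n (Y.indicator μ) =
      Set.indicator {z | z.1 ∈ Y} (withWord (Option α) n μ) := rfl
  rw [hcond, mass_indicator, mass_indicator, Set.inter_univ] at hout
  obtain ⟨B, hB⟩ := exists_fiber_correlation (ν := withWord (Option α) n μ)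
    (c := fun z => linePattern X ((List.ofFn z.2).take l) z.1) (k₀ := .univ)
    (X₀ := {z | z.1 ∈ X []}) hγ hβ hγδ (by rw [mass_comp_fst]; positivity)
    (mul_mass_withWord_le (X := fun t => X (none :: t)) hnone l) hout
    (mul_mass_withWord_le (X := fun t => {ω ∈ X [] | linePattern X t ω = .univ}) hline l)
    fun z hz hroot hsome hnone' => hX <|
      let ⟨φ, hφ, hω⟩ := exists_isCSMap_of_linePattern_eq_univ hroot hnone' hsome
      ⟨φ, hφ, z.1, hω, hz⟩
  refine ⟨B, le_trans ?_ hB⟩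
  rw [hcond]
  gcongr
  exact mass_indicator_le _ _ _

end LinePatternCorrelation

/-- If the lines `some j :: …` are probable, then on them `none :: t` is avoided. Its density is
therefore larger on the event of another line pattern, which is an intersection of insensitive
events. -/
theorem DensityCS.exists_of_probable_lines {α : Type} [Finite α] {δ β γ : ℝ}
    (h : DensityCS (Option α) 1 (δ + γ))
    (hα : ∀ m δ, 0 < δ → DensityCS α m δ) (hγ : 0 < γ) (hβ : 0 < β) (hγδ : 8 * γ ≤ δ * β) :
    ∃ n : ℕ, ∀ (Ω : Type) [Fintype Ω] (μ : Ω → ℝ≥0) (X : List (Option α) → Set Ω),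
      0 < mass μ .univ →
      (∀ t, t.length ≤ n → (δ - γ) * mass μ .univ ≤ mass μ (X (none :: t))) →
      (∀ t, t.length ≤ n → β * mass μ .univ ≤ mass μ {ω ∈ X [] | linePattern X t ω = .univ}) →
      ∃ φ, IsCSMap φ ∧ ∃ ω ∈ subtreeEvent X φ 1, 0 < μ ω := by
  classical
  have := Fintype.ofFinite α
  obtain ⟨m₁, hm₁⟩ := h.exists_sparse_levels hγ
  obtain ⟨m₂, hm₂⟩ := h.exists_of_correlated_levels hα (b := 4 * γ / Fintype.card (Set α))
    (by positivity)
  refine ⟨m₁ + Fintype.card (Set α) * (m₂ + 1), fun Ω _ μ X hμ hnone hline => ?_⟩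
  set n := m₁ + Fintype.card (Set α) * (m₂ + 1)
  by_contra hX
  have hXnone (S : Set Ω) (φ) (hφ : IsCSMap φ) (ω)
      (hω : ω ∈ subtreeEvent (fun t => X (none :: t)) φ 1) : S.indicator μ ω = 0 := by
    by_contra hne
    have hμω : μ ω ≠ 0 := fun h0 => hne (by simp [Set.indicator_apply, h0])
    exact hX ⟨_, (IsCSMap.const_append [none]).comp hφ, ω, hω, pos_iff_ne_zero.mpr hμω⟩
  have hroot : 0 < mass ((X []).indicator μ) .univ := by
    rw [mass_indicator, Set.inter_univ]
    exact (mul_pos hβ hμ).trans_le ((hline [] (Nat.zero_le n)).trans (mass_mono fun ω hω => hω.1))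
  obtain ⟨C, hCcard, hC⟩ := hm₁ Ω ((X [])ᶜ.indicator μ) (fun t => X (none :: t)) n (hXnone _)
  rw [add_assoc, ← two_mul] at hC
  choose! B hB using fun l hl =>
    exists_linePattern_correlation hγ hβ.le hγδ hμ hX hnone hline (hC l hl)
  -- Along many levels the same line pattern correlates with `X`.
  obtain ⟨B₀, -, hB₀⟩ : ∃ B₀ ∈ Finset.univ, m₂ < (C.filter (B · = B₀)).card := by
    refine Finset.exists_lt_card_fiber_of_mul_lt_card_of_maps_to
      (fun _ _ => Finset.mem_univ _) ?_
    rw [Finset.card_univ]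
    have : 0 < Fintype.card (Set α) := Fintype.card_pos
    grind
  obtain ⟨φ, hφ, ω, hω, hμω⟩ := hm₂ Ω ((X []).indicator μ) (fun t => X (none :: t))
    (fun j t => {ω | j ∈ linePattern X t ω ↔ j ∈ B₀}) n (C.filter (B · = B₀))
    hroot hB₀.le
    (fun j t t' htt => Set.ext fun ω => by
      have hfill : fillVar t j = fillVar t' j := htt
      simp only [linePattern, Set.mem_ofPred_eq, hfill])
    fun l hl => by
      obtain ⟨hlC, hlB⟩ := Finset.mem_filter.mp hl
      simpa only [← Set.ofPred_forall, ← Set.ext_iff, ← hlB] using hB l hlC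
  exact hμω.ne' (hXnone _ φ hφ ω hω)

section Heights

variable {α : Type}

theorem DensityCS.exists_template_probable_lines [Finite α] {δ : ℝ} (hδ : 0 < δ)
    (h : DensityCS α 1 (δ / 2)) :
    ∃ p : ℝ, 0 < p ∧ p ≤ 1 ∧ ∀ n, ∃ N : ℕ, ∀ (Ω : Type) [Fintype Ω] (μ : Ω → ℝ≥0)
      (X : List α → Set Ω), 0 < mass μ .univ →
      (∀ t, t.length ≤ N → δ * mass μ .univ ≤ mass μ (X t)) →
      ∃ T : Template α, T.size ≤ N ∧
        IsHomogeneous (fun r l => p * mass μ .univ ≤ mass μ {ω ∈ X r | ∀ a, ω ∈ X (l a)}) n T := by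
  obtain ⟨N₁, p, hp, hp1, hN₁⟩ := h.exists_mass_subtreeEvent_ge hδ
  refine ⟨p, hp, hp1, fun n => ?_⟩
  obtain ⟨N, hN⟩ := exists_isHomogeneous_or_not_size_le α n (N₁ + 1)
  refine ⟨N, fun Ω _ μ X hμ hX => ?_⟩
  rcases hN fun r l => p * mass μ .univ ≤ mass μ {ω ∈ X r | ∀ a, ω ∈ X (l a)} with
    ⟨T, hT, hsize⟩ | ⟨T, hT, hsize⟩
  · exact ⟨T, hsize, hT⟩
  · obtain ⟨φ, hφ, hφN₁, hmass⟩ := hN₁ Ω μ (fun y => X (T.eval y)) hμ fun t ht =>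
      hX _ ((T.length_eval_le_size (by rw [hT.height_eq]; omega)).trans hsize)
    obtain ⟨u, hu, hlen⟩ := hφ.exists_root_line hφN₁
    refine (hT.line (φ []) u hlen (hmass.trans (mass_mono fun ω hω => ?_))).elim
    refine ⟨hω [] (Nat.zero_le 1), fun a => ?_⟩
    simpa only [hu a] using hω [a] le_rfl

theorem DensityCS.of_forall_eq_nil {m : ℕ} {δ : ℝ} (hm : ∀ y : List α, y.length ≤ m → y = [])
    (hδ : 0 < δ) : DensityCS α m δ := by
  refine ⟨0, fun Ω _ μ X hμ hX => ?_⟩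
  obtain ⟨ω, hω, hμω⟩ := exists_mem_pos_of_mass_pos ((mul_pos hδ hμ).trans_le (hX [] le_rfl))
  exact ⟨_, IsCSMap.id, ω, fun y hy => hm y hy ▸ hω, hμω⟩

theorem DensityCS.of_height_one [Finite α] (h : ∀ δ, 0 < δ → DensityCS α 1 δ) (m : ℕ) {δ : ℝ}
    (hδ : 0 < δ) : DensityCS α m δ := by
  induction m generalizing δ with
  | zero => exact .of_forall_eq_nil (fun y hy => List.length_eq_zero_iff.mp (Nat.le_zero.mp hy)) hδ
  | succ m ih =>
    obtain ⟨p, hp, -, hlines⟩ := (h _ (half_pos hδ)).exists_template_probable_lines hδ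
    obtain ⟨n, hn⟩ := ih hp
    obtain ⟨N, hN⟩ := hlines (n + 1)
    refine ⟨N, fun Ω _ μ X hμ hX => ?_⟩
    obtain ⟨T, -, hT⟩ := hN Ω μ X hμ hX
    obtain ⟨ψ, hψ, ω, hω, hμω⟩ := hn Ω μ
      (fun y => {ω ∈ X (T.eval y) | ∀ a, ω ∈ X (T.eval (y ++ [a]))}) hμ
      fun t ht => hT.line t [] (by simpa using ht)
    obtain ⟨S, hS, hψS⟩ := hψ.exists_template m
    refine ⟨_, (IsCSMap.eval T).comp (IsCSMap.eval S), ω, fun y hy => ?_, hμω⟩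
    rcases hy.lt_or_eq with hlt | heq
    · have hy' : y.length ≤ m := Nat.lt_succ_iff.mp hlt
      exact (hψS y hy' ▸ hω y hy').1
    · obtain rfl | ⟨x, a, rfl⟩ := y.eq_nil_or_concat'
      · simp at heq
      have hx : x.length = m := by simpa using heq
      have hmem := (hω x hx.le).2 a
      rwa [hψS x hx.le, ← S.eval_append_singleton a (hx.trans hS.symm)] at hmem

theorem DensityCS.of_equiv {β : Type} (e : α ≃ β) {m : ℕ} {δ : ℝ} (h : DensityCS α m δ) :
    DensityCS β m δ := by
  obtain ⟨N, hN⟩ := h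
  refine ⟨N, fun Ω _ μ X hμ hX => ?_⟩
  obtain ⟨φ, hφ, ω, hω, hμω⟩ := hN Ω μ (fun y => X (y.map e)) hμ
    fun t ht => hX _ (by rwa [List.length_map])
  obtain ⟨T, -, hφT⟩ := hφ.exists_template m
  refine ⟨_, IsCSMap.eval (T.map e), ω, fun y hy => ?_, hμω⟩
  have hy' : (y.map e.symm).length ≤ m := by rwa [List.length_map]
  have hmem : ω ∈ X ((φ (y.map e.symm)).map e) := hω _ hy'
  rwa [hφT _ hy', ← Template.eval_map, List.map_map, e.self_comp_symm, List.map_id] at hmem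

end Heights

section Increment

variable {α : Type} [Finite α]

theorem DensityCS.exists_increment (hα : ∀ m δ, 0 < δ → DensityCS α m δ) {δ : ℝ} (hδ : 0 < δ)
    (h : ∀ γ, 0 < γ → DensityCS (Option α) 1 (δ + γ)) :
    ∃ η, 0 < η ∧ DensityCS (Option α) 1 (δ - η) := by
  obtain ⟨β, hβ, hβ1, hlines⟩ :=
    (hα 1 (δ / 2 / 2) (by positivity)).exists_template_probable_lines (half_pos hδ)
  have hγ : 0 < δ * β / 8 := by positivity
  obtain ⟨n, hn⟩ := (h _ hγ).exists_of_probable_lines hα hγ hβ (by linarith)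
  obtain ⟨N, hN⟩ := hlines (n + 1)
  refine ⟨δ * β / 8, hγ, N, fun Ω _ μ X hμ hX => ?_⟩
  obtain ⟨T, hsize, hT⟩ := hN Ω μ (fun t => X (t.map some)) hμ fun t ht =>
    (mul_le_mul_of_nonneg_right (by nlinarith) hμ.le).trans (hX _ (by rwa [List.length_map]))
  have hlarge (t : List (Option α)) (ht : t.length ≤ n) :
      (δ - δ * β / 8) * mass μ .univ ≤ mass μ (X ((T.map some).eval (none :: t))) := by
    refine hX _ ((Template.length_eval_le_size _ ?_).trans ((T.size_map _).trans_le hsize))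
    rw [Template.height_map, hT.height_eq]
    exact Nat.succ_le_succ ht
  have hline (t : List (Option α)) (ht : t.length ≤ n) : β * mass μ .univ ≤
      mass μ {ω ∈ X ((T.map some).eval []) |
        linePattern (fun z => X ((T.map some).eval z)) t ω = .univ} := by
    refine (hT.line [] t (by simp; omega)).trans (mass_mono fun ω hω => ?_)
    refine ⟨?_, Set.eq_univ_of_forall fun j => ?_⟩
    · rw [← List.map_nil, Template.eval_map]
      exact hω.1
    · change ω ∈ X ((T.map some).eval ((j :: fillVar t j).map some))
      rw [Template.eval_map]
      exact hω.2 j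
  obtain ⟨φ, hφ, ω, hω, hμω⟩ := hn Ω μ (fun z => X ((T.map some).eval z)) hμ hlarge hline
  exact ⟨_, (IsCSMap.eval _).comp hφ, ω, hω, hμω⟩

theorem DensityCS.option (hα : ∀ m δ, 0 < δ → DensityCS α m δ) {δ : ℝ} (hδ : 0 < δ) :
    DensityCS (Option α) 1 δ := by
  let S : Set ℝ := {δ | 0 < δ ∧ DensityCS (Option α) 1 δ}
  have htwo : 2 ∈ S := by
    refine ⟨two_pos, 0, fun Ω _ μ X hμ hX => ?_⟩
    linarith [hX [] le_rfl, mass_le_univ μ (X [])]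
  have hbdd : BddBelow S := ⟨0, fun x hx => hx.1.le⟩
  have hgt (x : ℝ) (hx : sInf S < x) : DensityCS (Option α) 1 x := by
    obtain ⟨y, hy, hyx⟩ := exists_lt_of_csInf_lt ⟨2, htwo⟩ hx
    exact hy.2.mono hyx.le
  rcases le_or_gt (sInf S) 0 with hle | hpos
  · exact hgt δ (hle.trans_lt hδ)
  · obtain ⟨η, hη, hlow⟩ := DensityCS.exists_increment hα hpos fun γ hγ => hgt _ (by linarith)
    rcases le_or_gt (sInf S - η) 0 with hle | hlow_pos
    · exact hlow.mono (hle.trans hδ.le)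
    · linarith [csInf_le hbdd ⟨hlow_pos, hlow⟩]

end Increment

theorem densityCS (α : Type) [Finite α] : ∀ m δ, 0 < δ → DensityCS α m δ := by
  induction α using Finite.induction_empty_option with
  | of_equiv e h => exact fun m δ hδ => (h m δ hδ).of_equiv e
  | h_empty => exact fun m δ hδ => .of_forall_eq_nil (fun y _ => Subsingleton.elim y []) hδ
  | h_option h => exact fun m δ hδ => .of_height_one (fun _ => .option h) m hδ

section Blocks

variable {α : Type*} {T : ℕ}

theorem exists_ofFn_append_flatMap_ofFn_eq {r q : ℕ} {x : List α} (hx : x.length = r + q * T) :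
    ∃ (y : Fin r → α) (s : Fin q → Fin T → α),
      List.ofFn y ++ (List.ofFn s).flatMap List.ofFn = x := by
  obtain ⟨f, rfl⟩ : ∃ f : Fin (r + q * T) → α, List.ofFn f = x :=
    ⟨fun i => x[i], List.ext_getElem (by simp [hx]) (by simp)⟩
  rw [List.ofFn_add, List.ofFn_mul]
  exact ⟨_, _, congrArg _ (by rw [List.flatMap_def, List.map_ofFn]; rfl)⟩

/-- The variable word obtained from a variable word `u` over the alphabet of blocks of length `T`
by writing out its blocks and replacing its variable by the pattern `P`. -/
def expandBlocks (P : Fin T → Option α) (u : List (Option (Fin T → α))) : List (Option α) :=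
  u.flatMap fun o => List.ofFn (o.elim P fun b i => some (b i))

theorem fillVar_expandBlocks (P : Fin T → Option α) (u : List (Option (Fin T → α))) (a : α) :
    fillVar (expandBlocks P u) a = (fillVar u fun i => (P i).getD a).flatMap List.ofFn := by
  induction u with
  | nil => rfl
  | cons o u ih =>
    cases o <;> simp_all [expandBlocks, fillVar, List.map_ofFn, Function.comp_def]

theorem prefix_ofFn_getElem?_getD {p : List α} (hp : p.length ≤ T) (b : α) :
    p <+: List.ofFn fun i : Fin T => p[(i : ℕ)]?.getD b := by
  rw [List.prefix_iff_eq_take]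
  exact List.ext_getElem (by simpa using hp) fun i hi _ => by simp [hi]

theorem IsCSMap.exists_flatMap_ofFn_eq {φ : List (Fin T → α) → List (Fin T → α)} (h : IsCSMap φ)
    (P : ℕ → Fin T → Option α) :
    ∃ w : ℕ → List (Option α), (∀ n, List.ofFn (P n) <+: w n) ∧ ∀ (a : ℕ → α) (n : ℕ),
      (φ ((List.range n).map fun i j => (P i j).getD (a i))).flatMap List.ofFn =
        (φ []).flatMap List.ofFn ++ ((List.range n).map fun i => fillVar (w i) (a i)).flatten := by
  choose u hu using fun n => h.line n []
  refine ⟨fun n => expandBlocks (P n) (none :: u n), fun n => List.prefix_append _ _, fun a n => ?_⟩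
  induction n with
  | zero => simp
  | succ n ih =>
    have := hu n ((List.range n).map fun i j => (P i j).getD (a i)) (by simp)
      fun j => (P n j).getD (a n)
    rw [fillVar_nil] at this
    simp [List.range_succ, this, ih, fillVar_expandBlocks]

end Blocks

section Counting

variable {Ω α : Type*} [Fintype Ω] [Fintype α]

theorem mass_one (X : Set Ω) : mass 1 X = X.ncard := by
  classical
  simp [mass, weightedSum_apply, Set.indicator_apply, Set.ncard_eq_toFinset_card']

theorem mass_withWord_take (μ : Ω → ℝ≥0) (X : List α → Set Ω) {q n : ℕ} (hq : q ≤ n) :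
    mass (withWord α n μ) {z | z.1 ∈ X ((List.ofFn z.2).take q)} =
      Fintype.card α ^ (n - q) * mass (withWord α q μ) {z | z.1 ∈ X (List.ofFn z.2)} := by
  classical
  obtain ⟨d, rfl⟩ := Nat.exists_eq_add_of_le hq
  have htake (s : Fin q → α) (s' : Fin d → α) :
      (List.ofFn (Fin.appendEquiv q d (s, s'))).take q = List.ofFn s := by
    change (List.ofFn (Fin.append s s')).take q = _
    rw [List.ofFn_fin_append, List.take_left' (List.length_ofFn)]
  simp only [mass, weightedSum_apply, Fintype.sum_prod_type_right]
  rw [← (Fin.appendEquiv q d).sum_comp, Fintype.sum_prod_type]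
  simp [Set.indicator_apply, htake, Finset.mul_sum]

theorem ncard_le_mass_blocks (A : Set (List α)) (r q T : ℕ) :
    ({x ∈ A | x.length = r + q * T}.ncard : ℝ) ≤
      mass (withWord (Fin T → α) q (1 : (Fin r → α) → ℝ≥0))
        {z | List.ofFn z.1 ++ (List.ofFn z.2).flatMap List.ofFn ∈ A} := by
  change _ ≤ mass 1 _
  rw [mass_one, Nat.cast_le]
  refine (Set.ncard_le_ncard ?_ (Set.toFinite _)).trans (Set.ncard_image_le (Set.toFinite _)
    (f := fun z => List.ofFn z.1 ++ (List.ofFn z.2).flatMap List.ofFn))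
  rintro x ⟨hxA, hx⟩
  obtain ⟨y, s, rfl⟩ := exists_ofFn_append_flatMap_ofFn_eq hx
  exact ⟨(y, s), hxA, rfl⟩

theorem mul_mass_univ_le_mass_blocks {A : Set (List α)} {δ : ℝ} {r q n T : ℕ} (hq : q ≤ n)
    (h : δ * Fintype.card α ^ (r + q * T) ≤ {x ∈ A | x.length = r + q * T}.ncard) :
    δ * mass (withWord (Fin T → α) n (1 : (Fin r → α) → ℝ≥0)) .univ ≤
      mass (withWord (Fin T → α) n (1 : (Fin r → α) → ℝ≥0))
        {z | List.ofFn z.1 ++ ((List.ofFn z.2).take q).flatMap List.ofFn ∈ A} := by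
  obtain ⟨d, rfl⟩ := Nat.exists_eq_add_of_le hq
  calc δ * mass (withWord (Fin T → α) (q + d) (1 : (Fin r → α) → ℝ≥0)) .univ
      = Fintype.card (Fin T → α) ^ (q + d - q) * (δ * Fintype.card α ^ (r + q * T)) := by
        rw [mass_comp_fst, mass_one]
        simp only [Set.ncard_univ, Nat.card_eq_fintype_card, Fintype.card_fun, Fintype.card_fin,
          Nat.cast_pow, add_tsub_cancel_left]
        ring
    _ ≤ Fintype.card (Fin T → α) ^ (q + d - q) *
          mass (withWord (Fin T → α) q (1 : (Fin r → α) → ℝ≥0))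
            {z | List.ofFn z.1 ++ (List.ofFn z.2).flatMap List.ofFn ∈ A} := by
        gcongr
        exact h.trans (ncard_le_mass_blocks A r q T)
    _ = mass (withWord (Fin T → α) (q + d) (1 : (Fin r → α) → ℝ≥0))
          {z | List.ofFn z.1 ++ ((List.ofFn z.2).take q).flatMap List.ofFn ∈ A} :=
        (mass_withWord_take 1 (fun t => {x | List.ofFn x ++ t.flatMap List.ofFn ∈ A}) hq).symm

theorem exists_progression_mem {L : Finset ℕ} {T N : ℕ} (hT : 0 < T) (hL : T * N < L.card) :
    ∃ (r n : ℕ) (C : Finset (Fin n)), N ≤ C.card ∧ ∀ q ∈ C, r + q * T ∈ L := by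
  obtain ⟨r, -, hr⟩ := Finset.exists_lt_card_fiber_of_mul_lt_card_of_maps_to
    (fun l (_ : l ∈ L) => Finset.mem_range.mpr (Nat.mod_lt l hT))
    (show (Finset.range T).card * N < L.card by rwa [Finset.card_range])
  let F := (L.filter (· % T = r)).image (· / T)
  have hF (q : ℕ) (hq : q ∈ F) : r + q * T ∈ L := by
    obtain ⟨l, hl, rfl⟩ := Finset.mem_image.mp hq
    obtain ⟨hlL, rfl⟩ := Finset.mem_filter.mp hl
    rwa [Nat.mod_add_div']
  have hcard : F.card = (L.filter (· % T = r)).card := by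
    refine Finset.card_image_of_injOn fun l hl l' hl' h => ?_
    rw [← Nat.mod_add_div' l T, ← Nat.mod_add_div' l' T, (Finset.mem_filter.mp hl).2,
      (Finset.mem_filter.mp hl').2, show l / T = l' / T from h]
  obtain ⟨n, hn⟩ := F.exists_nat_subset_range
  refine ⟨r, n, F.attachFin fun q hq => Finset.mem_range.mp (hn hq), ?_, fun q hq => hF q ?_⟩
  · rw [Finset.card_attachFin]; omega
  · simpa using hq

end Counting

theorem exists_isCSMap_blocks (α : Type) [Fintype α] [Nonempty α] {T : ℕ} (hT : 0 < T) (m : ℕ)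
    {δ : ℝ} (hδ : 0 < δ) :
    ∃ N : ℕ, ∀ L : Finset ℕ, N ≤ L.card → ∀ A : Set (List α),
      (∀ l ∈ L, δ * Fintype.card α ^ l ≤ {x ∈ A | x.length = l}.ncard) →
      ∃ (x : List α) (φ : List (Fin T → α) → List (Fin T → α)), IsCSMap φ ∧
        ∀ y, y.length ≤ m → x ++ (φ y).flatMap List.ofFn ∈ A := by
  obtain ⟨N, hN⟩ :=
    (densityCS (Fin T → α) m (δ / 2) (half_pos hδ)).exists_of_dense_levels (half_pos hδ)
  refine ⟨T * N + 1, fun L hL A hA => ?_⟩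
  obtain ⟨r, n, C, hC, hCL⟩ := exists_progression_mem hT (Nat.lt_of_succ_le hL)
  have hpos : 0 < mass (1 : (Fin r → α) → ℝ≥0) .univ := by
    simpa [mass_one, Set.ncard_univ] using pow_pos (Nat.cast_pos.mpr Fintype.card_pos) r
  obtain ⟨φ, hφ, x, hx, -⟩ := hN (Fin r → α) 1
    (fun t => {x | List.ofFn x ++ t.flatMap List.ofFn ∈ A}) n C hpos hC fun q hq => by
      rw [add_halves]
      exact mul_mass_univ_le_mass_blocks q.2.le (hA _ (hCL q hq))
  exact ⟨List.ofFn x, φ, hφ, hx⟩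

end CarlsonSimpson

/-- The finite density theorem for variable words of prescribed patterns:
here `τ 0, …, τ (m-1)` are the prescribed lengths of the patterns `p 0, …, p (m-1)`,
and `(wₙ)_{n<m}` is of pattern `(pₙ)_{n<m}` means `pₙ <+: wₙ` for every `n < m`. -/
theorem finite_density_carlson_simpson_pattern (k m : ℕ) (hk : 2 ≤ k) (hm : 1 ≤ m)
    (τ : ℕ → ℕ) (hτ : ∀ n < m, 1 ≤ τ n) (δ : ℝ) (hδ0 : 0 < δ) (hδ1 : δ ≤ 1) :
    ∃ N : ℕ, ∀ p : ℕ → VWord k, (∀ n < m, IsVar (p n) ∧ (p n).length = τ n) →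
      ∀ L : Finset ℕ, N ≤ L.card → ∀ A : Set (Word k),
        (∀ ℓ ∈ L, δ ≤ dens k ℓ A) →
        ∃ (c : Word k) (w : ℕ → VWord k),
          (∀ n < m, IsVar (w n) ∧ p n <+: w n) ∧ csSet c m w ⊆ A := by
  let a₀ : Fin k := ⟨0, by omega⟩
  have : Nonempty (Fin k) := ⟨a₀⟩
  set T := ∑ n ∈ Finset.range m, τ n
  have hτT (n : ℕ) (hn : n < m) : τ n ≤ T :=
    Finset.single_le_sum (fun _ _ => Nat.zero_le _) (Finset.mem_range.mpr hn)
  obtain ⟨N, hN⟩ := CarlsonSimpson.exists_isCSMap_blocks (Fin k) ((hτ 0 hm).trans (hτT 0 hm)) m hδ0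
  refine ⟨N, fun p hp L hL A hA => ?_⟩
  have hA' (l : ℕ) (hl : l ∈ L) : δ * Fintype.card (Fin k) ^ l ≤ {x ∈ A | x.length = l}.ncard := by
    rw [Fintype.card_fin, ← le_div_iff₀ (pow_pos (Nat.cast_pos.mpr (by omega)) l)]
    exact hA l hl
  obtain ⟨x, φ, hφ, hx⟩ := hN L hL A hA'
  obtain ⟨w, hPw, hw⟩ :=
    hφ.exists_flatMap_ofFn_eq fun n (i : Fin T) => (p n)[(i : ℕ)]?.getD (some a₀)
  have hpw (n : ℕ) (hn : n < m) : p n <+: w n :=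
    (CarlsonSimpson.prefix_ofFn_getElem?_getD ((hp n hn).2.trans_le (hτT n hn)) _).trans (hPw n)
  refine ⟨x ++ (φ []).flatMap List.ofFn, w,
    fun n hn => ⟨(hpw n hn).subset (hp n hn).1, hpw n hn⟩, ?_⟩
  rintro _ (rfl | ⟨n, hn, a, rfl⟩)
  · exact hx [] (Nat.zero_le m)
  · rw [csWord, List.append_assoc]
    exact hw a (n + 1) ▸ hx _ (by simpa using hn)
end

section
/- Let k, m, q ∈ ℕ with k ≥ 2 and q ≥ 1, and let 0 < ε < k^{−m}. Let N be a finite subset of ℕ with |N| ≥ (q⌊16 ε^{−4}⌋ + 1)m + 1 and let F be a family of subsets of [k]^{max(N)} with |F| = q. Then, setting N′ = N ∖ {max(N)}, there exists a subinterval M of N′ (i.e., M = J ∩ N′ for some interval J of ℕ) with |M| = m such that for every A ∈ F, every subset I of M and every y ∈ [k]^I we have |dens(A_y) − dens(A)| ≤ ε. -/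
/-!
`[k]^{max N}` is identified with the set of functions `Fin (max N) → Fin k`; for a
finset `I` of coordinates, a located word `y ∈ [k]^I` is a function `{i // i ∈ I} → Fin k`.
-/

/-- `dens(A_y)`: the density, in `[k]^{{0,…,n-1} ∖ I}`, of the section of `A` at
`y ∈ [k]^I`, i.e. `|{x ∈ A : x ∣_I = y}| / k^{n-|I|}`. -/
noncomputable def secDens (k n : ℕ) (A : Set (Fin n → Fin k)) (I : Finset (Fin n))
    (y : {i : Fin n // i ∈ I} → Fin k) : ℝ :=
  (Set.ncard {x ∈ A | ∀ i : {i : Fin n // i ∈ I}, x i.1 = y i} : ℝ) /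
    (k : ℝ) ^ (n - I.card)

/-- `dens(A) = |A| / kⁿ` for `A ⊆ [k]ⁿ`. -/
noncomputable def fullDens (k n : ℕ) (A : Set (Fin n → Fin k)) : ℝ :=
  (Set.ncard A : ℝ) / (k : ℝ) ^ n

/-!
Under the uniform measure `P` on `[k]^n`, the density of the section of `A` at `y` is the
conditional probability `P(A | x extends y)`. For located words `y_1, …, y_r` on disjoint sets of
at most `m` coordinates, the events `B_j = {x extends y_j}` are pairwise independent and
`P(B_j) ≥ k^{-m}`. With `d_j = P(A | B_j) - P(A)`, nonnegativity of the variance of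
`1_A - ∑ d_j 1_{B_j}` gives the Bessel-type inequality
`∑ P(B_j) d_j² ≤ P(A) (1 - P(A)) ≤ 1/4`. Hence, among disjoint blocks of `m` coordinates, at most
`k^m / (4 ε²)` carry a section of `A` deviating by more than `ε`, and cutting the coordinates into
more than `|F|` times as many consecutive blocks leaves one that is good for every `A ∈ F`.
-/

open MeasureTheory ProbabilityTheory Finset

section PairwiseIndependent

variable {Ω ι : Type*} {mΩ : MeasurableSpace Ω} {μ : Measure Ω} {T : Finset ι}

lemma sum_two_mul_covariance_sub_variance_le_variance [IsFiniteMeasure μ] {X : Ω → ℝ}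
    {Y : ι → Ω → ℝ} (hX : MemLp X 2 μ) (hY : ∀ i ∈ T, MemLp (Y i) 2 μ)
    (hcov : (T : Set ι).Pairwise fun i j ↦ cov[Y i, Y j; μ] = 0) :
    ∑ i ∈ T, (2 * cov[X, Y i; μ] - Var[Y i; μ]) ≤ Var[X; μ] := by
  have hvar : Var[∑ i ∈ T, Y i; μ] = ∑ i ∈ T, Var[Y i; μ] := by
    rw [variance_sum' hY]
    refine sum_congr rfl fun i hi ↦ ?_
    rw [← covariance_self (hY i hi).aemeasurable]
    exact sum_eq_single_of_mem i hi fun j hj hji ↦ hcov hi hj hji.symm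
  have hnonneg : 0 ≤ Var[X - ∑ i ∈ T, Y i; μ] := variance_nonneg _ _
  rw [variance_sub hX (memLp_finsetSum' _ hY), covariance_sum_right' hY hX, hvar] at hnonneg
  rw [sum_sub_distrib, ← mul_sum]
  linarith

lemma memLp_indicator_one [IsFiniteMeasure μ] {A : Set Ω} (hA : MeasurableSet A) (p : ENNReal) :
    MemLp (A.indicator (1 : Ω → ℝ)) p μ :=
  memLp_indicator_const p hA 1 (.inr (measure_ne_top μ A))

lemma cond_real_mul_eq_inter [IsFiniteMeasure μ] {A : Set Ω} (hA : MeasurableSet A)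
    (B : Set Ω) :
    μ[|A].real B * μ.real A = μ.real (A ∩ B) := by
  simp only [measureReal_def, ← ENNReal.toReal_mul, cond_mul_eq_inter hA]

variable [IsProbabilityMeasure μ] {A : Set Ω}

lemma covariance_indicator_one (hA : MeasurableSet A) {B : Set Ω} (hB : MeasurableSet B) :
    cov[A.indicator 1, B.indicator 1; μ] = μ.real (A ∩ B) - μ.real A * μ.real B := by
  rw [covariance_eq_sub (memLp_indicator_one hA 2) (memLp_indicator_one hB 2),
    ← Set.inter_indicator_one, integral_indicator_one hA, integral_indicator_one hB,
    integral_indicator_one (hA.inter hB)]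

lemma variance_indicator_one (hA : MeasurableSet A) :
    Var[A.indicator 1; μ] = μ.real A * (1 - μ.real A) := by
  rw [← covariance_self (memLp_indicator_one (μ := μ) hA 2).aemeasurable,
    covariance_indicator_one hA hA, Set.inter_self]
  ring

lemma sum_measureReal_mul_sq_cond_sub_le (hA : MeasurableSet A) {B : ι → Set Ω}
    (hB : ∀ i ∈ T, MeasurableSet (B i))
    (hindep : (T : Set ι).Pairwise fun i j ↦ IndepSet (B i) (B j) μ) :
    ∑ i ∈ T, μ.real (B i) * (μ[|B i].real A - μ.real A) ^ 2 ≤ μ.real A * (1 - μ.real A) := by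
  let d (i : ι) : ℝ := μ[|B i].real A - μ.real A
  let Y (i : ι) : Ω → ℝ := d i • (B i).indicator 1
  have hY (i) (hi : i ∈ T) : MemLp (Y i) 2 μ := (memLp_indicator_one (hB i hi) 2).const_smul _
  have hcov : (T : Set ι).Pairwise fun i j ↦ cov[Y i, Y j; μ] = 0 := by
    intro i hi j hj hij
    rw [covariance_smul_left, covariance_smul_right,
      covariance_indicator_one (hB i hi) (hB j hj), measureReal_def,
      (hindep hi hj hij).measure_inter_eq_mul, ENNReal.toReal_mul, ← measureReal_def,
      ← measureReal_def, sub_self, mul_zero, mul_zero]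
  have hcovA (i) (hi : i ∈ T) : cov[A.indicator 1, Y i; μ] = μ.real (B i) * d i ^ 2 := by
    rw [covariance_smul_right, covariance_indicator_one hA (hB i hi), Set.inter_comm,
      ← cond_real_mul_eq_inter (hB i hi)]
    ring
  have hvar (i) (hi : i ∈ T) : Var[Y i; μ] ≤ μ.real (B i) * d i ^ 2 := by
    rw [variance_smul, variance_indicator_one (hB i hi)]
    nlinarith [mul_nonneg (sq_nonneg (d i)) (sq_nonneg (μ.real (B i)))]
  calc ∑ i ∈ T, μ.real (B i) * d i ^ 2
      ≤ ∑ i ∈ T, (2 * cov[A.indicator 1, Y i; μ] - Var[Y i; μ]) :=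
        sum_le_sum fun i hi ↦ by linarith [hcovA i hi, hvar i hi]
    _ ≤ Var[A.indicator 1; μ] :=
        sum_two_mul_covariance_sub_variance_le_variance (memLp_indicator_one hA 2) hY hcov
    _ = μ.real A * (1 - μ.real A) := variance_indicator_one hA

end PairwiseIndependent

section Extensions

lemma indepSet_cylinder_pi {ι : Type*} [Fintype ι] {α : ι → Type*}
    {mα : ∀ i, MeasurableSpace (α i)} (μ : ∀ i, Measure (α i)) [∀ i, IsProbabilityMeasure (μ i)]
    {I J : Finset ι} (hIJ : Disjoint I J) {s : Set (∀ i : I, α i)} (hs : MeasurableSet s)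
    {t : Set (∀ i : J, α i)} (ht : MeasurableSet t) :
    IndepSet (cylinder I s) (cylinder J t) (Measure.pi μ) := by
  have hcoord : iIndepFun (fun i (x : ∀ i, α i) ↦ x i) (Measure.pi μ) :=
    iIndepFun_pi (X := fun _ ↦ id) fun _ ↦ aemeasurable_id
  have hrestrict : IndepFun I.restrict J.restrict (Measure.pi μ) :=
    hcoord.indepFun_finset I J hIJ measurable_pi_apply
  exact (indepFun_iff_indepSet_preimage (by fun_prop) (by fun_prop)).1 hrestrict s t hs ht

variable {Ω : Type*} [MeasurableSpace Ω] [MeasurableSingletonClass Ω]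

instance isProbabilityMeasure_uniformOn_univ [Finite Ω] [Nonempty Ω] :
    IsProbabilityMeasure (uniformOn (Set.univ : Set Ω)) :=
  isProbabilityMeasure_uniformOn Set.finite_univ Set.univ_nonempty

lemma uniformOn_univ_real [Finite Ω] (A : Set Ω) :
    (uniformOn Set.univ).real A = A.ncard / Nat.card Ω := by
  have := Fintype.ofFinite Ω
  rw [measureReal_def, uniformOn_univ, Measure.count_apply A.toFinite.measurableSet,
    ← A.toFinite.cast_ncard_eq, ENat.toENNReal_coe, ENNReal.toReal_div, ENNReal.toReal_natCast,
    ENNReal.toReal_natCast, Nat.card_eq_fintype_card]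

variable {ι α : Type*}

/-- The words `x : ι → α` extending the located word `y : I → α`, that is, those whose
restriction to the coordinates in `I` is `y`. They are encoded as a cylinder, so that
the independence of disjoint sets of coordinates applies to them. -/
def extensions {I : Finset ι} (y : I → α) : Set (ι → α) :=
  cylinder I {y}

variable [MeasurableSpace α] [MeasurableSingletonClass α]

lemma measurableSet_extensions {I : Finset ι} (y : I → α) : MeasurableSet (extensions y) :=
  (measurableSet_singleton y).cylinder I

variable [Finite α]

lemma uniformOn_univ_eq_pi [Fintype ι] :
    (uniformOn Set.univ : Measure (ι → α)) = Measure.pi fun _ ↦ uniformOn Set.univ := by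
  rw [← uniformOn_pi, Set.pi_univ]

variable [Finite ι] [Nonempty α]

lemma indepSet_extensions {I J : Finset ι} (hIJ : Disjoint I J) (y : I → α) (z : J → α) :
    IndepSet (extensions y) (extensions z) (uniformOn Set.univ) := by
  have := Fintype.ofFinite ι
  rw [uniformOn_univ_eq_pi]
  exact indepSet_cylinder_pi _ hIJ (measurableSet_singleton y) (measurableSet_singleton z)

lemma uniformOn_univ_real_extensions {I : Finset ι} (y : I → α) :
    (uniformOn Set.univ).real (extensions y) = ((Nat.card α : ℝ) ^ #I)⁻¹ := by
  have := Fintype.ofFinite ι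
  have hmarginal : uniformOn Set.univ (extensions y) = uniformOn Set.univ {y} := by
    rw [uniformOn_univ_eq_pi, uniformOn_univ_eq_pi, ← Measure.infinitePi_eq_pi,
      extensions, Measure.infinitePi_cylinder _ (measurableSet_singleton y)]
  rw [measureReal_def, hmarginal, ← measureReal_def, uniformOn_univ_real, Set.ncard_singleton,
    Nat.card_fun, Nat.card_eq_fintype_card (α := I), Fintype.card_coe, Nat.cast_pow, Nat.cast_one,
    one_div]

end Extensions

section Sections

variable {k n : ℕ}

lemma fullDens_eq_uniformOn_real (A : Set (Fin n → Fin k)) :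
    fullDens k n A = (uniformOn Set.univ).real A := by
  simp [fullDens, uniformOn_univ_real]

variable [NeZero k]

lemma secDens_eq_cond_real (A : Set (Fin n → Fin k)) {I : Finset (Fin n)} (y : I → Fin k) :
    secDens k n A I y = (uniformOn Set.univ)[|extensions y].real A := by
  have hk : (k : ℝ) ≠ 0 := NeZero.ne _
  have hI : #I ≤ n := by simpa using card_le_univ I
  have hsection : {x ∈ A | ∀ i : {i // i ∈ I}, x i.1 = y i} = extensions y ∩ A := by
    ext x
    simp only [extensions, Set.mem_ofPred_eq, Set.mem_inter_iff, mem_cylinder,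
      Set.mem_singleton_iff, funext_iff, restrict, and_comm]
  have hcond := cond_real_mul_eq_inter (μ := uniformOn Set.univ) (measurableSet_extensions y) A
  rw [uniformOn_univ_real_extensions, uniformOn_univ_real, Nat.card_fun, Nat.card_fin,
    Nat.card_fin, Nat.cast_pow, ← div_eq_mul_inv, div_eq_iff (pow_ne_zero _ hk)] at hcond
  rw [hcond, secDens, hsection, pow_sub₀ (k : ℝ) hk hI]
  field_simp

/-- The sections of `A` along located words with coordinates in `M` have density within `ε` of
that of `A`. Here `M` consists of natural numbers, of which only those below `n` are
coordinates. -/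
def IsSectionUniform (ε : ℝ) (M : Finset ℕ) (A : Set (Fin n → Fin k)) : Prop :=
  ∀ I : Finset (Fin n), (∀ i ∈ I, (i : ℕ) ∈ M) → ∀ y : {i : Fin n // i ∈ I} → Fin k,
    |secDens k n A I y - fullDens k n A| ≤ ε

lemma card_mul_four_mul_sq_le_pow {ι : Type*} {T : Finset ι} {m : ℕ} {ε : ℝ} (hε : 0 ≤ ε)
    (A : Set (Fin n → Fin k)) {I : ι → Finset (Fin n)} (y : ∀ j, I j → Fin k)
    (hdisj : (T : Set ι).PairwiseDisjoint I) (hcard : ∀ j ∈ T, #(I j) ≤ m)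
    (hdev : ∀ j ∈ T, ε ≤ |secDens k n A (I j) (y j) - fullDens k n A|) :
    #T * (4 * ε ^ 2) ≤ (k : ℝ) ^ m := by
  have hk : (1 : ℝ) ≤ k := by exact_mod_cast NeZero.one_le
  set μ : Measure (Fin n → Fin k) := uniformOn Set.univ
  let B (j : ι) : Set (Fin n → Fin k) := extensions (y j)
  have hterm : ∀ j ∈ T, ((k : ℝ) ^ m)⁻¹ * ε ^ 2 ≤
      μ.real (B j) * (μ[|B j].real A - μ.real A) ^ 2 := fun j hj ↦ by
    rw [uniformOn_univ_real_extensions, Nat.card_fin, ← secDens_eq_cond_real,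
      ← fullDens_eq_uniformOn_real, ← sq_abs (secDens k n A (I j) (y j) - _)]
    gcongr
    exacts [hcard j hj, hdev j hj]
  have hsum : #T * (((k : ℝ) ^ m)⁻¹ * ε ^ 2) ≤ 1 / 4 :=
    calc #T * (((k : ℝ) ^ m)⁻¹ * ε ^ 2)
        ≤ ∑ j ∈ T, μ.real (B j) * (μ[|B j].real A - μ.real A) ^ 2 := by
          simpa only [nsmul_eq_mul] using card_nsmul_le_sum _ _ _ hterm
      _ ≤ μ.real A * (1 - μ.real A) :=
          sum_measureReal_mul_sq_cond_sub_le .of_discrete (fun _ _ ↦ .of_discrete)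
            fun i hi j hj hij ↦ indepSet_extensions (hdisj hi hj hij) _ _
      _ ≤ 1 / 4 := by linarith [sq_nonneg (μ.real A - 1 / 2)]
  rw [mul_left_comm, inv_mul_le_iff₀ (by positivity)] at hsum
  linarith

lemma card_le_of_not_isSectionUniform {ι : Type*} {T : Finset ι} {m : ℕ} {ε : ℝ} (hε : 0 < ε)
    {A : Set (Fin n → Fin k)} {M : ι → Finset ℕ} (hdisj : (T : Set ι).PairwiseDisjoint M)
    (hcard : ∀ j ∈ T, #(M j) ≤ m) (hbad : ∀ j ∈ T, ¬ IsSectionUniform ε (M j) A) :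
    #T ≤ ⌊(k : ℝ) ^ m / (4 * ε ^ 2)⌋₊ := by
  simp only [IsSectionUniform, not_forall, not_le] at hbad
  choose! I hIM y hdev using hbad
  have hIdisj : (T : Set ι).PairwiseDisjoint I := fun i hi j hj hij ↦
    disjoint_left.2 fun x hxi hxj ↦
      disjoint_left.1 (hdisj hi hj hij) (hIM i hi x hxi) (hIM j hj x hxj)
  have hIcard (j) (hj : j ∈ T) : #(I j) ≤ m :=
    (card_le_card_of_injOn Fin.val (hIM j hj) Fin.val_injective.injOn).trans (hcard j hj)
  exact Nat.le_floor <| (le_div_iff₀ (by positivity)).2 <|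
    card_mul_four_mul_sq_le_pow hε.le A y hIdisj hIcard fun j hj ↦ (hdev j hj).le

end Sections

section Intervals

lemma exists_count_eq {p : ℕ → Prop} [DecidablePred p] {c b : ℕ} (h : c ≤ Nat.count p b) :
    ∃ a, Nat.count p a = c := by
  rcases h.eq_or_lt with rfl | hlt
  · exact ⟨b, rfl⟩
  · exact ⟨Nat.nth p c, Nat.count_nth fun hp ↦ hlt.trans_le (Nat.count_le_card hp b)⟩

lemma card_Ico_inter_eq_count_sub_count (S : Finset ℕ) (a b : ℕ) :
    #(Ico a b ∩ S) = Nat.count (· ∈ S) b - Nat.count (· ∈ S) a := by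
  rcases le_total a b with hab | hba
  · have hunion : Nat.count (· ∈ S) a + #(Ico a b ∩ S) = Nat.count (· ∈ S) b := by
      rw [Nat.count_eq_card_filter_range, Nat.count_eq_card_filter_range, range_eq_Ico,
        range_eq_Ico, ← filter_mem_eq_inter, ← card_union_of_disjoint
          (disjoint_filter_filter (Ico_disjoint_Ico_consecutive 0 a b)), ← filter_union,
        Ico_union_Ico_eq_Ico a.zero_le hab]
    omega
  · rw [Ico_eq_empty_of_le hba, empty_inter, card_empty,
      Nat.sub_eq_zero_of_le (Nat.count_monotone _ hba)]

lemma exists_pairwise_disjoint_Ico_inter (S : Finset ℕ) {L m : ℕ} (h : L * m ≤ #S) :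
    ∃ M : Fin L → Finset ℕ, Pairwise (Function.onFun Disjoint M) ∧
      ∀ j, (∃ a b, M j = Ico a b ∩ S) ∧ #(M j) = m := by
  have htop : Nat.count (· ∈ S) (S.sup id + 1) = #S := by
    rw [Nat.count_eq_card_filter_range, filter_mem_eq_inter, inter_eq_right.2]
    exact fun x hx ↦ mem_range_succ_iff.2 (le_sup (f := id) hx)
  have hcut (j : ℕ) (hj : j ≤ L) : ∃ t, Nat.count (· ∈ S) t = j * m :=
    exists_count_eq (((Nat.mul_le_mul_right m hj).trans h).trans_eq htop.symm)
  choose! t ht using hcut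
  have hrank (j : Fin L) {x : ℕ} (hx : x ∈ Ico (t j) (t (j + 1)) ∩ S) :
      Nat.count (· ∈ S) x / m = j := by
    obtain ⟨hxI, hxS⟩ := mem_inter.1 hx
    obtain ⟨hlo, hhi⟩ := mem_Ico.1 hxI
    refine Nat.div_eq_of_lt_le ?_ ?_
    · exact (ht j j.2.le).symm.trans_le (Nat.count_monotone _ hlo)
    · exact (Nat.count_strict_mono hxS hhi).trans_eq (ht (j + 1) j.2)
  refine ⟨fun j ↦ Ico (t j) (t (j + 1)) ∩ S, fun i j hij ↦ ?_, fun j ↦ ⟨⟨_, _, rfl⟩, ?_⟩⟩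
  · exact disjoint_left.2 fun x hxi hxj ↦ hij (Fin.ext ((hrank i hxi).symm.trans (hrank j hxj)))
  · rw [card_Ico_inter_eq_count_sub_count, ht j j.2.le, ht (j + 1) j.2, ← Nat.sub_mul,
      Nat.add_sub_cancel_left, one_mul]

end Intervals

lemma div_four_mul_sq_le_sixteen_div_pow {c ε : ℝ} (hc : 1 ≤ c) (hε0 : 0 < ε) (hε : ε < c⁻¹) :
    c / (4 * ε ^ 2) ≤ 16 / ε ^ 4 := by
  have hεc : c * ε ≤ 1 := by
    rw [← le_inv_mul_iff₀ (by positivity), mul_one]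
    exact hε.le
  have hε1 : ε ≤ 1 := hε.le.trans (inv_le_one_of_one_le₀ hc)
  rw [div_le_div_iff₀ (by positivity) (by positivity)]
  calc c * ε ^ 4 = c * ε * ε * ε ^ 2 := by ring
    _ ≤ 1 * 1 * ε ^ 2 := by gcongr
    _ ≤ 16 * (4 * ε ^ 2) := by linarith [sq_nonneg ε]

theorem energy_increment_interval_general {k m n : ℕ} [NeZero k] {ε : ℝ} (hε : 0 < ε)
    {S : Finset ℕ} {F : Finset (Set (Fin n → Fin k))}
    (hS : (#F * ⌊(k : ℝ) ^ m / (4 * ε ^ 2)⌋₊ + 1) * m ≤ #S) :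
    ∃ M ⊆ S, (∃ a b : ℕ, M = Ico a b ∩ S) ∧ #M = m ∧ ∀ A ∈ F, IsSectionUniform ε M A := by
  classical
  obtain ⟨M, hdisj, hM⟩ := exists_pairwise_disjoint_Ico_inter S hS
  let bad (A : Set (Fin n → Fin k)) := univ.filter fun j ↦ ¬ IsSectionUniform ε (M j) A
  have hbad : ∀ A ∈ F, #(bad A) ≤ ⌊(k : ℝ) ^ m / (4 * ε ^ 2)⌋₊ := fun A _ ↦
    card_le_of_not_isSectionUniform hε (hdisj.set_pairwise _) (fun j _ ↦ (hM j).2.le)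
      fun j hj ↦ (mem_filter.1 hj).2
  have hlt : #(F.biUnion bad) < #(univ : Finset (Fin (#F * ⌊(k : ℝ) ^ m / (4 * ε ^ 2)⌋₊ + 1))) :=
    (card_biUnion_le_card_mul _ _ _ hbad).trans_lt (by simp)
  obtain ⟨j, -, hj⟩ := exists_mem_notMem_of_card_lt_card hlt
  obtain ⟨⟨a, b, hab⟩, hcard⟩ := hM j
  refine ⟨M j, hab ▸ inter_subset_right, ⟨a, b, hab⟩, hcard, fun A hA ↦ ?_⟩
  by_contra hnot
  exact hj (mem_biUnion.2 ⟨A, hA, mem_filter.2 ⟨mem_univ j, hnot⟩⟩)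

/-- Sublemma 3.7: on a long enough finite set `N` one finds a subinterval `M` of
`N' = N ∖ {max N}` of size `m` such that all sections of the members of `F` along
located words with coordinates in `M` have nearly the full density. -/
theorem energy_increment_interval (k m q : ℕ) (hk : 2 ≤ k) (hq : 1 ≤ q) (ε : ℝ)
    (hε0 : 0 < ε) (hε : ε < ((k : ℝ) ^ m)⁻¹) (N : Finset ℕ) (hN : N.Nonempty)
    (hNcard : (q * ⌊16 / ε ^ 4⌋₊ + 1) * m + 1 ≤ N.card)
    (F : Finset (Set (Fin (N.max' hN) → Fin k))) (hF : F.card = q) :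
    ∃ M : Finset ℕ, M ⊆ N.erase (N.max' hN) ∧
      (∃ a b : ℕ, M = Finset.Ico a b ∩ N.erase (N.max' hN)) ∧ M.card = m ∧
      ∀ A ∈ F, ∀ I : Finset (Fin (N.max' hN)), (∀ i ∈ I, (i : ℕ) ∈ M) →
        ∀ y : {i : Fin (N.max' hN) // i ∈ I} → Fin k,
          |secDens k (N.max' hN) A I y - fullDens k (N.max' hN) A| ≤ ε := by
  have : NeZero k := ⟨by omega⟩
  have hfloor : ⌊(k : ℝ) ^ m / (4 * ε ^ 2)⌋₊ ≤ ⌊16 / ε ^ 4⌋₊ := Nat.floor_mono <|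
    div_four_mul_sq_le_sixteen_div_pow (one_le_pow₀ (mod_cast NeZero.one_le)) hε0 hε
  refine energy_increment_interval_general hε0 ?_
  rw [card_erase_of_mem (N.max'_mem hN), hF]
  calc (q * ⌊(k : ℝ) ^ m / (4 * ε ^ 2)⌋₊ + 1) * m
      ≤ (q * ⌊16 / ε ^ 4⌋₊ + 1) * m := by gcongr (q * ?_ + 1) * m
    _ ≤ #N - 1 := Nat.le_sub_one_of_lt hNcard
end

section
/- For every integer k ≥ 2, every pair of integers d ≥ m ≥ 1 and every integer r ≥ 1 there exists an integer N with the following property: if n ≥ N and W is an n-dimensional Carlson–Simpson tree of [k]^{<ℕ}, then for every r-coloring of the set Subtr_m(W) there exists U ∈ Subtr_d(W) such that the set Subtr_m(U) is monochromatic. -/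
/-- `w` is a left variable word: its leftmost letter is the variable `v`. -/
def IsLeftVar {k : ℕ} (w : VWord k) : Prop := w.head? = some none

/-- `W` is an `m`-dimensional Carlson–Simpson tree of `[k]^{<ℕ}`. -/
def IsCSTree (k m : ℕ) (W : Set (Word k)) : Prop :=
  1 ≤ m ∧ ∃ (c : Word k) (ws : ℕ → VWord k),
    (∀ i < m, IsLeftVar (ws i)) ∧ W = csSet c m ws

/-! Let `p` be an idempotent ultrafilter on left variable words with `p * σ_a(p) = p` for every
substitution `σ_a` (Carlson's theorem provides it). If `w₀, w₁, …` are drawn successively from `p`,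
then every concatenation `w₀ ⌢ w₁(b₁) ⌢ ⋯ ⌢ wᵢ(bᵢ)`, with each `bⱼ` a letter or the variable, is
again distributed according to `p`. A Carlson–Simpson subtree of the tree generated by the `wᵢ` is
generated by such concatenations of consecutive blocks, so `p`-almost surely its colour is the
generic colour of a tree drawn from `p`. A tree of finite dimension has only finitely many subtrees,
hence some choice of the `wᵢ` works for all of them; a compactness argument over the colourings then
yields the finite bound. -/

open Filter

section CompactSemigroup

variable {M : Type*} [Semigroup M] [TopologicalSpace M]

/-- Closed left ideals of a semigroup with a topology, nonempty so that their minimal members are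
the minimal left ideals. -/
def IsClosedLeftIdeal (I : Set M) : Prop :=
  IsClosed I ∧ I.Nonempty ∧ ∀ x, ∀ y ∈ I, x * y ∈ I

theorem exists_minimal_isClosedLeftIdeal [CompactSpace M] [Nonempty M] :
    ∃ I : Set M, Minimal IsClosedLeftIdeal I := by
  have hchains : ∀ c ⊆ {I : Set M | IsClosedLeftIdeal I}, IsChain (· ⊆ ·) c → c.Nonempty →
      ∃ J ∈ {I : Set M | IsClosedLeftIdeal I}, ∀ I ∈ c, J ⊆ I := by
    intro c hc hchain hne
    have : Nonempty c := hne.to_subtype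
    have hclosed : ∀ I ∈ c, IsClosed I := fun I hI => (hc hI).1
    have hdirected : DirectedOn (· ⊇ ·) c :=
      (show IsChain (· ⊇ ·) c from hchain.symm).directedOn
    have hnonempty : (⋂₀ c).Nonempty :=
      IsCompact.nonempty_sInter_of_directed_nonempty_isCompact_isClosed hdirected
        (fun I hI => (hc hI).2.1) (fun I hI => (hclosed I hI).isCompact) hclosed
    exact ⟨⋂₀ c, ⟨isClosed_sInter hclosed, hnonempty,
      fun x y hy I hI => (hc hI).2.2 x y (hy I hI)⟩, fun I hI => Set.sInter_subset_of_mem hI⟩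
  obtain ⟨I, -, hI⟩ := zorn_superset_nonempty _ hchains Set.univ
    ⟨isClosed_univ, Set.univ_nonempty, fun _ _ _ => Set.mem_univ _⟩
  exact ⟨I, hI⟩

theorem exists_idempotent_forall_mul_eq [CompactSpace M] [T2Space M] [Nonempty M]
    (hcont : ∀ r : M, Continuous (· * r)) :
    ∃ q : M, q * q = q ∧ ∀ x, (x * q) * (x * q) = x * q → q * (x * q) = q := by
  obtain ⟨I, hI⟩ := exists_minimal_isClosedLeftIdeal (M := M)
  obtain ⟨hIclosed, hIne, hImul⟩ := hI.prop
  obtain ⟨q, hqI, hqq⟩ := exists_idempotent_in_compact_subsemigroup hcont I hIne hIclosed.isCompact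
    fun x _ y hy => hImul x y hy
  refine ⟨q, hqq, fun x hidem => ?_⟩
  have hxq : x * q ∈ I := hImul x q hqI
  have hideal : IsClosedLeftIdeal (Set.range (· * (x * q))) := by
    refine ⟨(isCompact_range (hcont _)).isClosed, Set.range_nonempty _, ?_⟩
    rintro y _ ⟨z, rfl⟩
    exact ⟨y * z, mul_assoc _ _ _⟩
  have hsub : Set.range (· * (x * q)) ⊆ I := by
    rintro _ ⟨y, rfl⟩
    exact hImul y _ hxq
  obtain ⟨g, hg : g * (x * q) = q⟩ := hI.le_of_le hideal hsub hqI
  calc q * (x * q) = g * ((x * q) * (x * q)) := by rw [← mul_assoc g, hg]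
    _ = q := by rw [hidem, hg]

end CompactSemigroup

section UltrafilterSemigroup

attribute [local instance] Ultrafilter.semigroup

variable {M S : Type*} [Semigroup M] [Semigroup S]

theorem ultrafilter_map_mul (f : M →ₙ* S) (U V : Ultrafilter M) :
    (U * V).map f = U.map f * V.map f := by
  refine Ultrafilter.coe_injective (Filter.ext' fun P => ?_)
  change (∀ᶠ x in U, ∀ᶠ y in V, P (f (x * y))) ↔ ∀ᶠ x in U, ∀ᶠ y in V, P (f x * f y)
  simp only [map_mul]

theorem mem_ultrafilter_mul_of_forall_mul_mem {L : Set M} (hL : ∀ x ∈ L, ∀ y, x * y ∈ L)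
    {U : Ultrafilter M} (hU : L ∈ U) (V : Ultrafilter M) : L ∈ U * V := by
  change ∀ᶠ x in U, ∀ᶠ y in V, x * y ∈ L
  filter_upwards [hU] with x hx using Eventually.of_forall (hL x hx)

theorem exists_idempotent_ultrafilter_mul_map_eq [Nonempty S] {ι : Type*} (i : S →ₙ* M)
    (σ : ι → M →ₙ* S) (hσ : ∀ j s, σ j (i s) = s) {L : Set M} (hne : L.Nonempty)
    (hL : ∀ x ∈ L, ∀ y, x * y ∈ L) :
    ∃ p : Ultrafilter M, L ∈ p ∧ p * p = p ∧ ∀ j, p * (p.map (σ j)).map i = p := by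
  obtain ⟨q, hqq, hqmin⟩ :=
    exists_idempotent_forall_mul_eq (M := Ultrafilter S) Ultrafilter.continuous_mul_left
  set q' : Ultrafilter M := q.map i
  have hq' : q' * q' = q' := by rw [← ultrafilter_map_mul, hqq]
  have hσq (j : ι) : q'.map (σ j) = q := by
    rw [Ultrafilter.map_map, show σ j ∘ i = id from funext (hσ j), Ultrafilter.map_id]
  set T : Set (Ultrafilter M) := (· * q') '' {U | L ∈ U}
  have hTne : T.Nonempty := Set.Nonempty.image _ (hne.imp' pure fun _ h => h)
  have hTcompact : IsCompact T :=
    (ultrafilter_isClosed_basic L).isCompact.image (Ultrafilter.continuous_mul_left q')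
  have hTmul : ∀ᵉ (y ∈ T) (z ∈ T), y * z ∈ T := by
    rintro _ ⟨y, hy, rfl⟩ _ ⟨z, -, rfl⟩
    refine ⟨y * q' * z, ?_, mul_assoc _ _ _⟩
    exact mem_ultrafilter_mul_of_forall_mul_mem hL
      (mem_ultrafilter_mul_of_forall_mul_mem hL hy q') z
  obtain ⟨p, ⟨x, hxL, hxp : x * q' = p⟩, hpp⟩ := exists_idempotent_in_compact_subsemigroup
    Ultrafilter.continuous_mul_left T hTne hTcompact hTmul
  have hpq : p * q' = p := by rw [← hxp, mul_assoc, hq']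
  refine ⟨p, hxp ▸ mem_ultrafilter_mul_of_forall_mul_mem hL hxL q', hpp, fun j => ?_⟩
  have hqp : q * p.map (σ j) = q := by
    have hpσ : p.map (σ j) = x.map (σ j) * q := by rw [← hxp, ultrafilter_map_mul, hσq]
    rw [hpσ]
    exact hqmin _ (by rw [← hpσ, ← ultrafilter_map_mul, hpp])
  calc p * (p.map (σ j)).map i = p * (q' * (p.map (σ j)).map i) := by rw [← mul_assoc, hpq]
    _ = p * (q * p.map (σ j)).map i := by rw [ultrafilter_map_mul]
    _ = p := by rw [hqp, hpq]

end UltrafilterSemigroup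

section FiniteColoring

variable {ι α κ : Type*} [Finite κ]

theorem exists_eventually_eq_of_finite (l : Ultrafilter ι) (f : ι → κ) :
    ∃ c, ∀ᶠ i in l, f i = c := by
  obtain ⟨c, hc⟩ := (l.map f).eq_pure_of_finite
  exact ⟨c, show {c} ∈ l.map f by rw [hc]; exact Set.mem_singleton c⟩

theorem exists_forall_eventually_eqOn_of_finite (l : Ultrafilter ι) (χ : ι → α → κ) :
    ∃ χ' : α → κ, ∀ F : Set α, F.Finite → ∀ᶠ i in l, Set.EqOn (χ i) χ' F := by
  choose χ' hχ' using fun a => exists_eventually_eq_of_finite l fun i => χ i a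
  exact ⟨χ', fun F hF => (eventually_all_finite hF).2 fun a _ => hχ' a⟩

end FiniteColoring

section ListPow

variable {α : Type*}

/-- The `n`-fold Fubini power of the ultrafilter `p`, on lists of length `n`: the law of
`w₀, …, wₙ₋₁` drawn successively from `p`, the head of the list being drawn first. -/
def listPow (p : Ultrafilter α) : ℕ → Ultrafilter (List α)
  | 0 => pure []
  | n + 1 => p.bind fun w => (listPow p n).map (w :: ·)

theorem eventually_listPow_succ {p : Ultrafilter α} {n : ℕ} {P : List α → Prop} :
    (∀ᶠ l in listPow p (n + 1), P l) ↔ ∀ᶠ w in p, ∀ᶠ l in listPow p n, P (w :: l) :=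
  Iff.rfl

theorem eventually_listPow_forall_mem {p : Ultrafilter α} {P : α → Prop} (hP : ∀ᶠ w in p, P w)
    (n : ℕ) : ∀ᶠ l : List α in listPow p n, l.length = n ∧ ∀ w ∈ l, P w := by
  induction n with
  | zero =>
    change ([] : List α).length = 0 ∧ ∀ w ∈ [], P w
    simp
  | succ n ih =>
    rw [eventually_listPow_succ]
    filter_upwards [hP] with w hw
    filter_upwards [ih] with l hl
    simpa [hw] using hl

end ListPow

section Substitution

variable {k : ℕ}

/-- Substitution of a letter or of the variable itself (`none`) for the variable. -/
def vsubst (w : VWord k) (b : Option (Fin k)) : VWord k := w.map (·.or b)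

/-- The word `w₀(x₀) ⌢ w₁(x₁) ⌢ ⋯`, truncated at the shorter of the two lists. -/
def csEval (ws : List (VWord k)) (x : Word k) : Word k := (List.zipWith subst ws x).flatten

/-- The analogue of `csEval` for a variable word `u`. -/
def csEvalVar (ws : List (VWord k)) (u : VWord k) : VWord k := (List.zipWith vsubst ws u).flatten

/-- The parametrization `x ↦ c ⌢ w₀(x₀) ⌢ w₁(x₁) ⌢ ⋯` of the Carlson–Simpson tree generated by
`c, w₀, w₁, …` by the words of length at most the dimension. -/
def csMap (c : Word k) (ws : List (VWord k)) (x : Word k) : Word k := c ++ csEval ws x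

/-- The Carlson–Simpson tree generated by `c` and a list of variable words, which unlike in `csSet`
has exactly as many entries as the dimension. -/
def csTree (c : Word k) (ws : List (VWord k)) : Set (Word k) :=
  csMap c ws '' {x | x.length ≤ ws.length}

/-- The composition of two sequences of variable words: the entries of `us`, read as instructions,
are applied to consecutive blocks of `ws`. -/
def csReduce : List (VWord k) → List (VWord k) → List (VWord k)
  | _, [] => []
  | ws, u :: us => csEvalVar ws u :: csReduce (ws.drop u.length) us

@[simp] theorem csEval_nil_left (x : Word k) : csEval [] x = [] := rfl

@[simp] theorem csEval_nil_right (ws : List (VWord k)) : csEval ws [] = [] := by simp [csEval]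

@[simp] theorem csEval_cons (w : VWord k) (ws : List (VWord k)) (a : Fin k) (x : Word k) :
    csEval (w :: ws) (a :: x) = subst w a ++ csEval ws x := rfl

@[simp] theorem csEvalVar_nil_right (ws : List (VWord k)) : csEvalVar ws [] = [] := by
  simp [csEvalVar]

@[simp] theorem csEvalVar_cons (w : VWord k) (ws : List (VWord k)) (b : Option (Fin k))
    (u : VWord k) : csEvalVar (w :: ws) (b :: u) = vsubst w b ++ csEvalVar ws u := rfl

@[simp] theorem length_subst (w : VWord k) (a : Fin k) : (subst w a).length = w.length :=
  List.length_map _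

@[simp] theorem subst_cons (b : Option (Fin k)) (u : VWord k) (a : Fin k) :
    subst (b :: u) a = b.getD a :: subst u a := rfl

@[simp] theorem subst_append (u w : VWord k) (a : Fin k) :
    subst (u ++ w) a = subst u a ++ subst w a := List.map_append

@[simp] theorem subst_map_some (x : Word k) (a : Fin k) : subst (x.map some) a = x := by
  simp [subst, Function.comp_def]

@[simp] theorem vsubst_none (w : VWord k) : vsubst w none = w := by simp [vsubst]

theorem vsubst_some (w : VWord k) (a : Fin k) : vsubst w (some a) = (subst w a).map some := by
  simp only [vsubst, subst, List.map_map]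
  exact List.map_congr_left fun o _ => by cases o <;> rfl

@[simp] theorem subst_vsubst (w : VWord k) (b : Option (Fin k)) (a : Fin k) :
    subst (vsubst w b) a = subst w (b.getD a) := by
  cases b with
  | none => simp
  | some b => simp [vsubst_some]

theorem subst_csEvalVar (ws : List (VWord k)) (u : VWord k) (a : Fin k) :
    subst (csEvalVar ws u) a = csEval ws (subst u a) := by
  induction ws generalizing u with
  | nil => rfl
  | cons w ws ih =>
    cases u with
    | nil => rfl
    | cons b u => simp [ih]

theorem csEval_append (ws : List (VWord k)) (x y : Word k) :
    csEval ws (x ++ y) = csEval ws x ++ csEval (ws.drop x.length) y := by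
  induction ws generalizing x with
  | nil => simp
  | cons w ws ih =>
    cases x with
    | nil => simp
    | cons a x => simp [ih]

@[simp] theorem length_csReduce (ws us : List (VWord k)) :
    (csReduce ws us).length = us.length := by
  induction us generalizing ws with
  | nil => rfl
  | cons u us ih => simp [csReduce, ih]

theorem csEval_csReduce (ws us : List (VWord k)) (x : Word k) :
    csEval (csReduce ws us) x = csEval ws (csEval us x) := by
  induction us generalizing ws x with
  | nil => simp [csReduce]
  | cons u us ih =>
    cases x with
    | nil => simp
    | cons a x => simp [csReduce, csEval_append, ih, subst_csEvalVar]

theorem csMap_csMap (c c' : Word k) (ws us : List (VWord k)) (x : Word k) :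
    csMap c ws (csMap c' us x) = csMap (csMap c ws c') (csReduce (ws.drop c'.length) us) x := by
  simp [csMap, csEval_append, csEval_csReduce]

theorem image_csMap_csTree (c c' : Word k) (ws us : List (VWord k)) :
    csMap c ws '' csTree c' us = csTree (csMap c ws c') (csReduce (ws.drop c'.length) us) := by
  simp only [csTree, Set.image_image, csMap_csMap, length_csReduce]

theorem length_csEval_le (us : List (VWord k)) (x : Word k) :
    (csEval us x).length ≤ us.flatten.length := by
  induction us generalizing x with
  | nil => simp
  | cons u us ih =>
    cases x with
    | nil => simp
    | cons a x => simpa using ih x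

theorem length_csEval_replicate (us : List (VWord k)) (a : Fin k) :
    (csEval us (List.replicate us.length a)).length = us.flatten.length := by
  induction us with
  | nil => rfl
  | cons u us ih => simpa [List.replicate_succ] using ih

theorem csTree_subset_length_le_iff [NeZero k] {c : Word k} {us : List (VWord k)} {n : ℕ} :
    csTree c us ⊆ {x | x.length ≤ n} ↔ c.length + us.flatten.length ≤ n := by
  refine ⟨fun h => ?_, ?_⟩
  · have hmax := h (Set.mem_image_of_mem _ (List.length_replicate (n := us.length) (a := 0)).le)
    rwa [Set.mem_ofPred_eq, csMap, List.length_append, length_csEval_replicate] at hmax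
  · rintro h _ ⟨x, -, rfl⟩
    have := length_csEval_le us x
    simp only [csMap, Set.mem_ofPred_eq, List.length_append]
    omega

end Substitution

section Trees

variable {k : ℕ}

theorem isLeftVar_iff {w : VWord k} : IsLeftVar w ↔ ∃ w', w = none :: w' :=
  List.head?_eq_some_iff

theorem forall_isLeftVar_drop {ws : List (VWord k)} (hws : ∀ w ∈ ws, IsLeftVar w) (n : ℕ) :
    ∀ w ∈ ws.drop n, IsLeftVar w :=
  fun w hw => hws w (List.mem_of_mem_drop hw)

theorem forall_isLeftVar_csReduce {ws us : List (VWord k)} (hws : ∀ w ∈ ws, IsLeftVar w)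
    (hus : ∀ u ∈ us, IsLeftVar u) (hlen : us.flatten.length ≤ ws.length) :
    ∀ v ∈ csReduce ws us, IsLeftVar v := by
  induction us generalizing ws with
  | nil => simp [csReduce]
  | cons u us ih =>
    obtain ⟨hu, hus_tail⟩ := List.forall_mem_cons.1 hus
    obtain ⟨u, rfl⟩ := isLeftVar_iff.1 hu
    simp only [List.flatten_cons, List.length_append, List.length_cons] at hlen
    obtain ⟨w, ws, rfl⟩ := List.exists_cons_of_length_pos (l := ws) (by omega)
    obtain ⟨w, rfl⟩ := isLeftVar_iff.1 (hws w List.mem_cons_self)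
    refine List.forall_mem_cons.2
      ⟨by simp [IsLeftVar], ih (forall_isLeftVar_drop hws _) hus_tail ?_⟩
    simp only [List.length_drop, List.length_cons] at hlen ⊢
    omega

theorem csWord_eq_csMap (c : Word k) (ws : ℕ → VWord k) {n m : ℕ} (hn : n < m) (a : ℕ → Fin k) :
    csWord c ws n a = csMap c ((List.range m).map ws) ((List.range (n + 1)).map a) := by
  have hzip : List.zipWith subst ((List.range m).map ws) ((List.range (n + 1)).map a) =
      (List.range (n + 1)).map fun i => subst (ws i) (a i) :=
    List.ext_getElem
      (by simp only [List.length_zipWith, List.length_map, List.length_range]; omega)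
      fun i _ _ => by simp
  rw [csMap, csEval, hzip, csWord]

theorem csSet_eq_csTree [NeZero k] (c : Word k) (m : ℕ) (ws : ℕ → VWord k) :
    csSet c m ws = csTree c ((List.range m).map ws) := by
  ext y
  constructor
  · rintro (rfl | ⟨n, hn, a, rfl⟩)
    · exact ⟨[], by simp, by simp [csMap]⟩
    · exact ⟨(List.range (n + 1)).map a, by simpa using hn, (csWord_eq_csMap c ws hn a).symm⟩
  · rintro ⟨x, hx, rfl⟩
    rcases x.eq_nil_or_concat with rfl | ⟨x', b, hx'⟩
    · exact Or.inl (by simp [csMap])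
    · have hlen : x.length = x'.length + 1 := by simp [hx']
      have hx_eq : x = (List.range (x'.length + 1)).map (x.getD · 0) :=
        List.ext_getElem (by simp [hlen]) fun i hi _ => by simp [hi]
      have hlt : x'.length < m := by simpa [hlen] using hx
      exact Or.inr ⟨x'.length, hlt, (x.getD · 0), by rw [csWord_eq_csMap c ws hlt, ← hx_eq]⟩

theorem isCSTree_iff_exists_csTree [NeZero k] {m : ℕ} {S : Set (Word k)} :
    IsCSTree k m S ↔ 1 ≤ m ∧ ∃ (c : Word k) (us : List (VWord k)),
      us.length = m ∧ (∀ u ∈ us, IsLeftVar u) ∧ S = csTree c us := by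
  refine and_congr_right fun _ => ⟨?_, ?_⟩
  · rintro ⟨c, ws, hws, rfl⟩
    exact ⟨c, (List.range m).map ws, by simp, by simpa using hws, csSet_eq_csTree c m ws⟩
  · rintro ⟨c, us, rfl, hus, rfl⟩
    refine ⟨c, fun i => us.getD i [], fun i hi => by simpa [hi] using hus us[i] (by simp), ?_⟩
    rw [csSet_eq_csTree]
    congr 1
    exact List.ext_getElem (by simp) fun i hi _ => by simp [hi]

theorem IsCSTree.image_csMap [NeZero k] {m : ℕ} {S : Set (Word k)} (hS : IsCSTree k m S)
    (c : Word k) {ws : List (VWord k)} (hws : ∀ w ∈ ws, IsLeftVar w)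
    (hlen : S ⊆ {x | x.length ≤ ws.length}) : IsCSTree k m (csMap c ws '' S) := by
  obtain ⟨hm, c', us, rfl, hus, rfl⟩ := isCSTree_iff_exists_csTree.1 hS
  have hle := csTree_subset_length_le_iff.1 hlen
  refine isCSTree_iff_exists_csTree.2 ⟨hm, _, _, length_csReduce _ us, ?_, image_csMap_csTree ..⟩
  exact forall_isLeftVar_csReduce (forall_isLeftVar_drop hws _) hus
    (by rw [List.length_drop]; omega)

end Trees

section Subtrees

variable {k : ℕ}

theorem mem_range_csEval_drop {ws : List (VWord k)} (hws : ∀ w ∈ ws, IsLeftVar w) {c t : Word k}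
    (hc : c.length ≤ ws.length) (h : csEval ws c ++ t ∈ Set.range (csEval ws)) :
    t ∈ Set.range (csEval (ws.drop c.length)) := by
  induction ws generalizing c with
  | nil => simpa [List.length_eq_zero_iff.1 (Nat.le_zero.1 hc)] using h
  | cons w ws ih =>
    obtain ⟨hw, hws_tail⟩ := List.forall_mem_cons.1 hws
    obtain ⟨w, rfl⟩ := isLeftVar_iff.1 hw
    cases c with
    | nil => simpa using h
    | cons a c =>
      obtain ⟨y, hy⟩ := h
      cases y with
      | nil => simp [subst] at hy
      | cons b y =>
        obtain ⟨rfl, -⟩ : b = a ∧ _ := by simpa using hy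
        rw [csEval_cons, csEval_cons, List.append_assoc] at hy
        exact ih hws_tail (by simpa using hc) ⟨y, List.append_cancel_left hy⟩

theorem exists_csEval_subst_eq [NeZero k] {ws : List (VWord k)} (hws : ∀ w ∈ ws, IsLeftVar w)
    {u : VWord k} (hu : ∀ a, subst u a ∈ Set.range (csEval ws)) :
    ∃ u' : VWord k, u'.length ≤ ws.length ∧ u'.head? = u.head? ∧
      ∀ a, csEval ws (subst u' a) = subst u a := by
  induction ws generalizing u with
  | nil =>
    obtain ⟨y, hy⟩ := hu 0
    obtain rfl : u = [] := by simpa [subst] using hy.symm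
    exact ⟨[], by simp [subst]⟩
  | cons w ws ih =>
    obtain ⟨hw, hws_tail⟩ := List.forall_mem_cons.1 hws
    obtain ⟨w, rfl⟩ := isLeftVar_iff.1 hw
    -- `w(b)` starts with `b`, so the first letter of `u` is what replaces the variable of `w`.
    rcases u with _ | ⟨o, u⟩
    · exact ⟨[], by simp [subst]⟩
    have hsplit (a : Fin k) :
        ∃ y, subst (none :: w) (o.getD a) ++ csEval ws y = subst (o :: u) a := by
      obtain ⟨_ | ⟨b, y⟩, hy⟩ := hu a
      · simp [subst] at hy
      · obtain ⟨rfl, -⟩ : b = o.getD a ∧ _ := by simpa using hy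
        exact ⟨y, hy⟩
    obtain ⟨u', hlen, -, hu'⟩ := ih hws_tail (u := u.drop w.length) fun a => by
      obtain ⟨y, hy⟩ := hsplit a
      refine ⟨y, ?_⟩
      simpa [subst] using congrArg (List.drop (w.length + 1)) hy
    refine ⟨o :: u', by simpa using hlen, rfl, fun a => ?_⟩
    obtain ⟨y, hy⟩ := hsplit a
    have hrest : csEval ws (subst u' a) = csEval ws y := by
      rw [hu']
      simpa [subst] using (congrArg (List.drop (w.length + 1)) hy).symm
    rw [← hy, ← hrest]
    rfl

theorem exists_csEval_csEval_eq [NeZero k] {ws us : List (VWord k)}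
    (hws : ∀ w ∈ ws, IsLeftVar w) (hus : ∀ u ∈ us, IsLeftVar u)
    (h : ∀ x : Word k, x.length ≤ us.length → csEval us x ∈ Set.range (csEval ws)) :
    ∃ us' : List (VWord k), us'.length = us.length ∧ (∀ u ∈ us', IsLeftVar u) ∧
      us'.flatten.length ≤ ws.length ∧ ∀ x, csEval ws (csEval us' x) = csEval us x := by
  induction us generalizing ws with
  | nil => exact ⟨[], by simp⟩
  | cons u us ih =>
    obtain ⟨hu, hus_tail⟩ := List.forall_mem_cons.1 hus
    obtain ⟨u', hu'len, hhead, hu'⟩ := exists_csEval_subst_eq hws (u := u)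
      fun a => by simpa using h [a] (by simp)
    obtain ⟨us', hlen, hleft, hflat, hus'⟩ := ih (forall_isLeftVar_drop hws u'.length) hus_tail
      fun x hx => by
        have hmem := h (0 :: x) (by simpa using hx)
        rw [csEval_cons, ← hu'] at hmem
        simpa using mem_range_csEval_drop hws (by simpa using hu'len) hmem
    refine ⟨u' :: us', by simp [hlen], List.forall_mem_cons.2 ⟨hhead.trans hu, hleft⟩, ?_, ?_⟩
    · rw [List.length_drop] at hflat
      rw [List.flatten_cons, List.length_append]
      omega
    · rintro (_ | ⟨a, x⟩)
      · simp
      · simp [csEval_append, hu', hus']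

theorem IsCSTree.exists_image_csMap_eq [NeZero k] {m : ℕ} {S : Set (Word k)}
    (hS : IsCSTree k m S) {c : Word k} {ws : List (VWord k)} (hws : ∀ w ∈ ws, IsLeftVar w)
    (hsub : S ⊆ csTree c ws) :
    ∃ S', IsCSTree k m S' ∧ S' ⊆ {x | x.length ≤ ws.length} ∧ csMap c ws '' S' = S := by
  obtain ⟨hm, c', us, rfl, hus, rfl⟩ := isCSTree_iff_exists_csTree.1 hS
  have hroot : c' ∈ csTree c' us := ⟨[], by simp, by simp [csMap]⟩
  obtain ⟨c₁, hc₁ : c₁.length ≤ ws.length, rfl⟩ := hsub hroot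
  obtain ⟨us', hlen, hleft, hflat, hus'⟩ :=
    exists_csEval_csEval_eq (forall_isLeftVar_drop hws c₁.length) hus fun x hx => by
      obtain ⟨y, -, hy⟩ := hsub (Set.mem_image_of_mem _ hx)
      rw [csMap, csMap, csMap, List.append_assoc] at hy
      exact mem_range_csEval_drop hws hc₁ ⟨y, List.append_cancel_left hy⟩
  refine ⟨csTree c₁ us', isCSTree_iff_exists_csTree.2 ⟨hm, c₁, us', hlen, hleft, rfl⟩, ?_, ?_⟩
  · rw [List.length_drop] at hflat
    exact csTree_subset_length_le_iff.2 (by omega)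
  · rw [image_csMap_csTree]
    simp only [csTree, length_csReduce, hlen]
    exact Set.image_congr fun x _ => by rw [csMap, csEval_csReduce, hus', csMap, csMap]

theorem IsCSTree.exists_subset_image_csMap_eq [NeZero k] {m : ℕ} {S : Set (Word k)}
    (hS : IsCSTree k m S) {c c' : Word k} {ws us : List (VWord k)}
    (hws : ∀ w ∈ ws, IsLeftVar w) (hus : ∀ u ∈ us, IsLeftVar u)
    (hlen : csTree c' us ⊆ {x | x.length ≤ ws.length}) (hsub : S ⊆ csMap c ws '' csTree c' us) :
    ∃ S' ⊆ csTree c' us, IsCSTree k m S' ∧ csMap c ws '' S' = S := by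
  have hle := csTree_subset_length_le_iff.1 hlen
  rw [image_csMap_csTree] at hsub
  obtain ⟨S', hS', hS'len, rfl⟩ := hS.exists_image_csMap_eq
    (forall_isLeftVar_csReduce (forall_isLeftVar_drop hws _) hus
      (by rw [List.length_drop]; omega)) hsub
  rw [length_csReduce] at hS'len
  refine ⟨csMap c' us '' S', Set.image_mono hS'len, hS'.image_csMap c' hus hS'len, ?_⟩
  simp only [Set.image_image, csMap_csMap]

theorem finite_setOf_subset_length_le (α : Type*) [Finite α] (n : ℕ) :
    {S : Set (List α) | S ⊆ {x | x.length ≤ n}}.Finite :=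
  (List.finite_length_le α n).powerset

end Subtrees

section Absorbing

variable {k : ℕ} {p : Ultrafilter (VWord k)}

/-- The ultrafilter identities `p * σ_b(p) = p` for the substitutions `σ_b` of each letter and of
the variable, the latter saying that `p` is idempotent. -/
def IsSubstAbsorbing (p : Ultrafilter (VWord k)) : Prop :=
  ∀ (b : Option (Fin k)) (P : VWord k → Prop),
    (∀ᶠ u in p, ∀ᶠ w in p, P (u ++ vsubst w b)) ↔ ∀ᶠ w in p, P w

attribute [local instance] Ultrafilter.semigroup in
theorem exists_isSubstAbsorbing (k : ℕ) :
    ∃ p : Ultrafilter (VWord k), IsSubstAbsorbing p ∧ ∀ᶠ w : VWord k in p, IsLeftVar w := by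
  let inclusion : FreeMonoid (Fin k) →* FreeMonoid (Option (Fin k)) := FreeMonoid.map some
  let substHom (a : Fin k) : FreeMonoid (Option (Fin k)) →* FreeMonoid (Fin k) :=
    FreeMonoid.map (·.getD a)
  have hretract (a : Fin k) (x : FreeMonoid (Fin k)) : substHom a (inclusion x) = x :=
    subst_map_some x.toList a
  have hright : ∀ u : FreeMonoid (Option (Fin k)), IsLeftVar u.toList →
      ∀ w, IsLeftVar (u * w).toList := by
    intro u hu w
    obtain ⟨u', hu'⟩ := isLeftVar_iff.1 hu
    exact isLeftVar_iff.2 ⟨u' ++ w.toList, by simp [hu']⟩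
  obtain ⟨p, hleft, hidem, habsorb⟩ := exists_idempotent_ultrafilter_mul_map_eq
    inclusion.toMulHom (fun a => (substHom a).toMulHom) hretract
    (L := {u | IsLeftVar u.toList}) ⟨FreeMonoid.of none, rfl⟩ hright
  have heventually {q : Ultrafilter (FreeMonoid (Option (Fin k)))} (hq : q = p)
      (P : VWord k → Prop) :
      (∀ᶠ w in q, P (FreeMonoid.toList w)) ↔ ∀ᶠ w in p, P (FreeMonoid.toList w) := by rw [hq]
  refine ⟨p.map FreeMonoid.toList, fun b P => ?_, hleft⟩
  cases b with
  | none =>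
    simp only [vsubst_none]
    exact heventually hidem P
  | some a =>
    simp only [vsubst_some]
    exact heventually (habsorb a) P

theorem IsSubstAbsorbing.eventually_append_csEvalVar (hp : IsSubstAbsorbing p) {u : VWord k}
    {n : ℕ} (hu : u.length ≤ n) (P : VWord k → List (VWord k) → Prop) :
    (∀ᶠ w in p, ∀ᶠ ws in listPow p n, P (w ++ csEvalVar ws u) (ws.drop u.length)) ↔
      ∀ᶠ w in p, ∀ᶠ ws in listPow p (n - u.length), P w ws := by
  induction u generalizing n with
  | nil => simp
  | cons b u ih =>
    obtain ⟨n, rfl⟩ := Nat.exists_eq_add_one_of_ne_zero (Nat.ne_zero_of_lt hu)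
    simp only [eventually_listPow_succ, csEvalVar_cons, List.length_cons, List.drop_succ_cons,
      Nat.add_sub_add_right, ← List.append_assoc]
    rw [hp b fun w => ∀ᶠ ws in listPow p n, P (w ++ csEvalVar ws u) (ws.drop u.length)]
    exact ih (by simpa using hu)

theorem IsSubstAbsorbing.eventually_csReduce (hp : IsSubstAbsorbing p) {us : List (VWord k)}
    (hus : ∀ u ∈ us, IsLeftVar u) {n : ℕ} (hn : us.flatten.length ≤ n)
    (P : List (VWord k) → Prop) :
    (∀ᶠ ws in listPow p n, P (csReduce ws us)) ↔ ∀ᶠ vs in listPow p us.length, P vs := by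
  induction us generalizing n P with
  | nil => exact eventually_const (f := (listPow p n : Filter (List (VWord k)))) (p := P [])
  | cons u us ih =>
    obtain ⟨hu, hus_tail⟩ := List.forall_mem_cons.1 hus
    obtain ⟨u, rfl⟩ := isLeftVar_iff.1 hu
    simp only [List.flatten_cons, List.length_append, List.length_cons] at hn
    obtain ⟨n, rfl⟩ := Nat.exists_eq_add_one_of_ne_zero (n := n) (by omega)
    simp only [eventually_listPow_succ, csReduce, csEvalVar_cons, vsubst_none, List.length_cons,
      List.drop_succ_cons]
    rw [hp.eventually_append_csEvalVar (by omega) fun w ws => P (w :: csReduce ws us)]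
    exact eventually_congr (.of_forall fun w => ih hus_tail (by omega) fun vs => P (w :: vs))

/-- The random word `w(0)`, with `w` drawn from `p`, is the root: it absorbs the initial segment of
a subtree in the same way as the variable words absorb each other. -/
theorem IsSubstAbsorbing.eventually_image_csMap [NeZero k] (hp : IsSubstAbsorbing p) {m d : ℕ}
    {S : Set (Word k)} (hS : IsCSTree k m S) (hlen : S ⊆ {x | x.length ≤ d})
    (P : Set (Word k) → Prop) :
    (∀ᶠ w in p, ∀ᶠ ws in listPow p d, P (csMap (subst w 0) ws '' S)) ↔
      ∀ᶠ w in p, ∀ᶠ vs in listPow p m, P (csTree (subst w 0) vs) := by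
  obtain ⟨-, c, us, rfl, hus, rfl⟩ := isCSTree_iff_exists_csTree.1 hS
  have hle := csTree_subset_length_le_iff.1 hlen
  have hroot (w : VWord k) (ws : List (VWord k)) :
      csMap (subst w 0) ws c = subst (w ++ csEvalVar ws (c.map some)) 0 := by
    simp [csMap, subst_csEvalVar]
  have habsorb := hp.eventually_append_csEvalVar (u := c.map some) (n := d)
    (by rw [List.length_map]; omega)
    fun w ws => P (csTree (subst w 0) (csReduce ws us))
  simp only [List.length_map] at habsorb
  simp only [image_csMap_csTree, hroot, habsorb]
  exact eventually_congr (.of_forall fun w =>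
    hp.eventually_csReduce hus (by omega) fun vs => P (csTree (subst w 0) vs))

end Absorbing

section Partition

variable {k : ℕ} [NeZero k] {κ : Type*} [Finite κ]

theorem exists_csTree_forall_eq (m d : ℕ) (χ : Set (Word k) → κ) :
    ∃ (c : Word k) (ws : List (VWord k)) (color : κ), ws.length = d ∧ (∀ w ∈ ws, IsLeftVar w) ∧
      ∀ S, IsCSTree k m S → S ⊆ csTree c ws → χ S = color := by
  obtain ⟨p, hp, hleft⟩ := exists_isSubstAbsorbing k
  obtain ⟨color, hcolor⟩ := exists_eventually_eq_of_finite (listPow p (m + 1))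
    fun vs => χ (csTree (subst vs.headI 0) vs.tail)
  have hgeneric : ∀ S ∈ {S | IsCSTree k m S ∧ S ⊆ {x | x.length ≤ d}},
      ∀ᶠ w in p, ∀ᶠ ws in listPow p d, χ (csMap (subst w 0) ws '' S) = color :=
    fun S hS => (hp.eventually_image_csMap hS.1 hS.2 (χ · = color)).2 hcolor
  have hfin : {S : Set (Word k) | IsCSTree k m S ∧ S ⊆ {x | x.length ≤ d}}.Finite :=
    (finite_setOf_subset_length_le _ d).subset fun S hS => hS.2
  obtain ⟨w, hw⟩ := ((eventually_all_finite hfin).2 hgeneric).exists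
  obtain ⟨ws, hws, hlen, hwsleft⟩ :=
    (((eventually_all_finite hfin).2 hw).and (eventually_listPow_forall_mem hleft d)).exists
  refine ⟨subst w 0, ws, color, hlen, hwsleft, fun S hS hsub => ?_⟩
  obtain ⟨S', hS', hS'len, rfl⟩ := hS.exists_image_csMap_eq hwsleft hsub
  exact hws S' ⟨hS', hlen ▸ hS'len⟩

theorem exists_bound_csTree_forall_eq (m d : ℕ) :
    ∃ N : ℕ, ∀ χ : Set (Word k) → κ, ∃ (c : Word k) (ws : List (VWord k)) (color : κ),
      ws.length = d ∧ (∀ w ∈ ws, IsLeftVar w) ∧ csTree c ws ⊆ {x | x.length ≤ N} ∧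
      ∀ S, IsCSTree k m S → S ⊆ csTree c ws → χ S = color := by
  by_contra! hbad
  choose χ hχ using hbad
  obtain ⟨χ', hχ'⟩ := exists_forall_eventually_eqOn_of_finite (hyperfilter ℕ) χ
  obtain ⟨c, ws, color, hlen, hleft, hmono⟩ := exists_csTree_forall_eq m d χ'
  have hfin : {S | S ⊆ csTree c ws}.Finite :=
    (finite_setOf_subset_length_le _ (c.length + ws.flatten.length)).subset fun S hS =>
      hS.trans (csTree_subset_length_le_iff.2 le_rfl)
  have hlarge : ∀ᶠ N in hyperfilter ℕ, c.length + ws.flatten.length ≤ N :=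
    Nat.hyperfilter_le_atTop (eventually_ge_atTop _)
  obtain ⟨N, hagree, hN⟩ := ((hχ' _ hfin).and hlarge).exists
  obtain ⟨S, hS, hsub, hne⟩ :=
    hχ N c ws color hlen hleft (csTree_subset_length_le_iff.2 hN)
  exact hne ((hagree hsub).trans (hmono S hS hsub))

end Partition

/-- For `k = 1` this is Ramsey's theorem: an `m`-dimensional tree is then a set of `m + 1` word
lengths. -/
theorem cs_tree_partition_general {k d : ℕ} [NeZero k] (hd : 1 ≤ d) (m : ℕ) (κ : Type*)
    [Finite κ] :
    ∃ N : ℕ, ∀ n, N ≤ n → ∀ W : Set (Word k), IsCSTree k n W →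
      ∀ χ : Set (Word k) → κ, ∃ U : Set (Word k), IsCSTree k d U ∧ U ⊆ W ∧
        ∃ color, ∀ S : Set (Word k), IsCSTree k m S → S ⊆ U → χ S = color := by
  obtain ⟨N, hN⟩ := exists_bound_csTree_forall_eq (k := k) (κ := κ) m d
  refine ⟨N, fun n hn W hW χ => ?_⟩
  obtain ⟨-, c, ws, rfl, hws, rfl⟩ := isCSTree_iff_exists_csTree.1 hW
  obtain ⟨c', us, color, rfl, hus, hheight, hmono⟩ := hN fun S => χ (csMap c ws '' S)
  have hheight' : csTree c' us ⊆ {x | x.length ≤ ws.length} :=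
    hheight.trans fun x hx => le_trans hx hn
  have hU : IsCSTree k us.length (csMap c ws '' csTree c' us) :=
    (isCSTree_iff_exists_csTree.2 ⟨hd, c', us, rfl, hus, rfl⟩).image_csMap c hws hheight'
  refine ⟨_, hU, Set.image_mono hheight', color, fun S hS hSU => ?_⟩
  obtain ⟨S', hS'U, hS', rfl⟩ := hS.exists_subset_image_csMap_eq hws hus hheight' hSU
  exact hmono S' hS' hS'U

/-- The partition theorem for Carlson–Simpson trees (a variant of the
Graham–Rothschild theorem for left variable words): an `r`-coloring of a set `X` is a
function `X → Fin r`, and monochromaticity of `Subtr_m(U)` means the coloring takes the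
same value at any two `m`-dimensional Carlson–Simpson trees contained in `U`. -/
theorem cs_tree_partition (k d m r : ℕ) (hk : 2 ≤ k) (hm : 1 ≤ m) (hmd : m ≤ d)
    (hr : 1 ≤ r) :
    ∃ N : ℕ, ∀ n, N ≤ n → ∀ W : Set (Word k), IsCSTree k n W →
      ∀ χ : Set (Word k) → Fin r, ∃ U : Set (Word k), IsCSTree k d U ∧ U ⊆ W ∧
        ∀ S T : Set (Word k), IsCSTree k m S → S ⊆ U → IsCSTree k m T → T ⊆ U →
          χ S = χ T := by
  have : NeZero k := ⟨by omega⟩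
  obtain ⟨N, hN⟩ := cs_tree_partition_general (k := k) (hm.trans hmd) m (Fin r)
  refine ⟨N, fun n hn W hW χ => ?_⟩
  obtain ⟨U, hU, hUW, color, hcolor⟩ := hN n hn W hW χ
  exact ⟨U, hU, hUW, fun S T hS hSU hT hTU => (hcolor S hS hSU).trans (hcolor T hT hTU).symm⟩
end
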